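/- arXiv:1706.01004 — 14 statements merged into one kernel-verified Lean document; each statement's English description precedes it below -/
import Mathlib

section
/- Let M > 0 and let (r, u) : I → ℝ² be a solution of the characteristic system r'(t) = (1 − 2M/r(t))·u(t), u'(t) = (M/r(t)²)·(u(t)² − 1) on an interval I, with r(t) > 2M and u(t) ∈ (−1, 1) for all t ∈ I. Then the function t ↦ (1 − u(t)²)/(1 − 2M/r(t)) is constant on I; equivalently, the quantity (u(t)² − 2M/r(t))/(1 − 2M/r(t)) does not depend on t ∈ I. -/
/-!
Write `f = 1 - 2M/r`, which is positive because `r > 2M > 0`. Along a solution,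
`f' = (2M/r²) r' = (2M/r²) f u` and `(1 - u²)' = -2 u u' = (2M/r²) u (1 - u²)`, so numerator and
denominator of `(1 - u²)/f` have the same logarithmic growth rate `(2M/r²) u`. The quotient thus
has zero derivative on the convex set `I`, and the mean value inequality makes it constant.
The second quantity is `1 - (1 - u²)/f`.
-/

/-- For `M > 0` and a solution `(r, u)` of the characteristic system
`r' = (1 - 2M/r) u`, `u' = (M/r²)(u² - 1)` on an interval `I`, with `r > 2M` and
`u ∈ (-1, 1)` on `I`, the quantity `(1 - u²)/(1 - 2M/r)` is constant on `I`;
equivalently `(u² - 2M/r)/(1 - 2M/r)` does not depend on `t ∈ I`. -/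
theorem burgersSchwarzschild_conserved_quantity
    (M : ℝ) (hM : 0 < M) (I : Set ℝ) (hI : I.OrdConnected)
    (r u : ℝ → ℝ)
    (hr : ∀ t ∈ I, HasDerivAt r ((1 - 2 * M / r t) * u t) t)
    (hu : ∀ t ∈ I, HasDerivAt u (M / (r t) ^ 2 * ((u t) ^ 2 - 1)) t)
    (hrdom : ∀ t ∈ I, 2 * M < r t)
    (hudom : ∀ t ∈ I, u t ∈ Set.Ioo (-1 : ℝ) 1) :
    ∀ s ∈ I, ∀ t ∈ I,
      ((1 - (u t) ^ 2) / (1 - 2 * M / r t) = (1 - (u s) ^ 2) / (1 - 2 * M / r s)) ∧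
      (((u t) ^ 2 - 2 * M / r t) / (1 - 2 * M / r t)
        = ((u s) ^ 2 - 2 * M / r s) / (1 - 2 * M / r s)) := by
  have hpos : ∀ t ∈ I, 0 < r t := fun t ht => by linarith [hrdom t ht]
  have hf : ∀ t ∈ I, 1 - 2 * M / r t ≠ 0 := fun t ht =>
    (sub_pos.2 ((div_lt_one (hpos t ht)).2 (hrdom t ht))).ne'
  have hderiv : ∀ t ∈ I,
      HasDerivAt (fun t => (1 - (u t) ^ 2) / (1 - 2 * M / r t)) 0 t := fun t ht => by
    have hr0 : r t ≠ 0 := (hpos t ht).ne'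
    have hnum := ((hu t ht).fun_pow 2).const_sub 1
    have hden := ((hasDerivAt_const t (2 * M)).fun_div (hr t ht) hr0).const_sub 1
    refine (hnum.fun_div hden (hf t ht)).congr_deriv ?_
    refine div_eq_zero_iff.2 (Or.inl ?_)
    field_simp
    ring
  intro s hs t ht
  have key : (1 - (u t) ^ 2) / (1 - 2 * M / r t) = (1 - (u s) ^ 2) / (1 - 2 * M / r s) := by
    have h := hI.convex.norm_image_sub_le_of_norm_hasDerivWithin_le (C := 0)
      (fun x hx => (hderiv x hx).hasDerivWithinAt) (fun x _ => by simp) hs ht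
    rw [zero_mul] at h
    exact sub_eq_zero.1 (norm_le_zero_iff.1 h)
  refine ⟨key, ?_⟩
  -- The second quantity is one minus the first.
  have hcompl : ∀ x ∈ I, ((u x) ^ 2 - 2 * M / r x) / (1 - 2 * M / r x)
      = 1 - (1 - (u x) ^ 2) / (1 - 2 * M / r x) := fun x hx => by
    rw [eq_sub_iff_add_eq, ← add_div, div_eq_one_iff_eq (hf x hx)]
    ring
  rw [hcompl t ht, hcompl s hs, key]
end

section
/- Let M > 0, t0 ∈ ℝ, r0 > 2M and u0 ∈ (−1, 0). Then the maximal solution (r, u) of the characteristic system with r(t0) = r0 and u(t0) = u0 is defined on all of [t0, ∞), satisfies r(t) > 2M and u(t) ∈ (−1, 0) for all t ≥ t0, the function r is strictly decreasing on [t0, ∞), and lim_{t→∞} r(t) = 2M and lim_{t→∞} u(t) = −1. -/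
open Filter Set

/-!
The quantity `c = (1 - u²) / (1 - 2M/r)` is conserved by the characteristic system, so a solution
with `u < 0` satisfies `u = -√(1 - c (1 - 2M/r))`, and the system reduces to a scalar autonomous
equation for `r`. In the coordinate `x = -log (r - 2M)`, which sends the horizon `r = 2M` to
`x = +∞`, this equation reads `x' = √(1 - c (1 - 2M/r)) / r`. Its right-hand side is at most
`1 / (2M)`, and replacing the radicand by its maximum with `u0² / 2` makes it positive for all `x`
without changing it where `r ≤ r0`.

A scalar equation `x' = g x` with `g` continuous, positive and bounded is solved on all of `ℝ` by
inverting `x ↦ t0 + ∫ 1 / g`, and its solutions increase to `+∞`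
(`exists_global_solution_scalar`). Hence `r = 2M + exp (-x)` decreases strictly to `2M`, so
`1 - c (1 - 2M/r) ≥ u0²` for `t ≥ t0` (the modification of the radicand is inactive there), and
`u → -1`.
-/

/-- Separation of variables: `x` is the inverse of `G y = t0 + ∫ s in x0..y, 1 / g s`, which is
onto `ℝ` because `G' ≥ 1 / B`. -/
lemma exists_global_solution_scalar (g : ℝ → ℝ) (hg : Continuous g) (hpos : ∀ x, 0 < g x)
    (B : ℝ) (hB : ∀ x, g x ≤ B) (t0 x0 : ℝ) :
    ∃ x : ℝ → ℝ, x t0 = x0 ∧ (∀ t, HasDerivAt x (g (x t)) t) ∧ StrictMono x ∧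
      Tendsto x atTop atTop := by
  have hBpos : 0 < B := (hpos 0).trans_le (hB 0)
  have hgi : Continuous fun s => (g s)⁻¹ := hg.inv₀ fun s => (hpos s).ne'
  set G : ℝ → ℝ := fun y => t0 + ∫ s in x0..y, (g s)⁻¹ with hG
  have hGd : ∀ y, HasDerivAt G (g y)⁻¹ y := fun y =>
    ((hgi.integral_hasStrictDerivAt x0 y).hasDerivAt).const_add t0
  have hGm : StrictMono G := strictMono_of_deriv_pos fun y => by
    rw [(hGd y).deriv]; exact inv_pos.2 (hpos y)
  have hGc : Continuous G := continuous_iff_continuousAt.2 fun y => (hGd y).continuousAt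
  have hDd : ∀ y, HasDerivAt (fun y => G y - y * B⁻¹) ((g y)⁻¹ - 1 * B⁻¹) y := fun y =>
    (hGd y).sub ((hasDerivAt_id y).mul_const B⁻¹)
  have hDm : Monotone fun y => G y - y * B⁻¹ :=
    monotone_of_deriv_nonneg (fun y => (hDd y).differentiableAt) fun y => by
      rw [(hDd y).deriv, one_mul]
      exact sub_nonneg.2 (inv_anti₀ (hpos y) (hB y))
  have hBi : 0 < B⁻¹ := inv_pos.2 hBpos
  have htop : Tendsto G atTop atTop := by
    refine tendsto_atTop_mono' atTop ?_
      (tendsto_atTop_add_const_right atTop (G 0) (tendsto_id.atTop_mul_const hBi))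
    filter_upwards [eventually_ge_atTop 0] with y hy
    have := hDm hy
    simp only [zero_mul, sub_zero, id] at this ⊢
    linarith
  have hbot : Tendsto G atBot atBot := by
    refine tendsto_atBot_mono' atBot ?_
      (tendsto_atBot_add_const_right atBot (G 0) (tendsto_id.atBot_mul_const hBi))
    filter_upwards [eventually_le_atBot 0] with y hy
    have := hDm hy
    simp only [zero_mul, sub_zero, id] at this ⊢
    linarith
  let e : ℝ ≃o ℝ := hGm.orderIsoOfSurjective G (hGc.surjective htop hbot)
  have he : ∀ y, G (e.symm y) = y := fun y => e.apply_symm_apply y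
  refine ⟨e.symm, ?_, fun t => ?_, e.symm.strictMono, e.symm.tendsto_atTop⟩
  · apply hGm.injective
    rw [he]
    simp [hG]
  · have := HasDerivAt.of_local_left_inverse (g := e.symm) (a := t)
      e.symm.continuous.continuousAt (hGd (e.symm t)) (inv_pos.2 (hpos _)).ne'
      (Eventually.of_forall he)
    simpa using this

/-- For `M > 0`, `r0 > 2M` and `u0 ∈ (-1, 0)`, the maximal solution of the
characteristic system `r' = (1 - 2M/r) u`, `u' = (M/r²)(u² - 1)` with data `(r0, u0)` at `t0`
is defined on all of `[t0, ∞)`, satisfies `r > 2M` and `u ∈ (-1, 0)` there, `r` is strictly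
decreasing on `[t0, ∞)`, and `r(t) → 2M`, `u(t) → -1` as `t → ∞`. -/
theorem burgersSchwarzschild_negative_initial_velocity
    (M : ℝ) (hM : 0 < M) (t0 r0 u0 : ℝ)
    (hr0 : 2 * M < r0) (hu0 : u0 ∈ Set.Ioo (-1 : ℝ) 0) :
    ∃ r u : ℝ → ℝ,
      r t0 = r0 ∧ u t0 = u0 ∧
      (∀ t ∈ Set.Ici t0, HasDerivAt r ((1 - 2 * M / r t) * u t) t) ∧
      (∀ t ∈ Set.Ici t0, HasDerivAt u (M / (r t) ^ 2 * ((u t) ^ 2 - 1)) t) ∧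
      (∀ t ∈ Set.Ici t0, 2 * M < r t) ∧
      (∀ t ∈ Set.Ici t0, u t ∈ Set.Ioo (-1 : ℝ) 0) ∧
      StrictAntiOn r (Set.Ici t0) ∧
      Tendsto r atTop (nhds (2 * M)) ∧
      Tendsto u atTop (nhds (-1)) := by
  obtain ⟨hu1, hu2⟩ := hu0
  have hr0p : 0 < r0 := by linarith
  have hk0 : 0 < 1 - 2 * M / r0 := by
    rw [sub_pos, div_lt_one hr0p]; exact hr0
  have husq : 0 < u0 ^ 2 := by nlinarith
  have husq1 : u0 ^ 2 < 1 := by nlinarith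
  -- `c` is the conserved quantity and `h r` the value of `u²` at radius `r`.
  obtain ⟨c, hc⟩ : ∃ c, c = (1 - u0 ^ 2) / (1 - 2 * M / r0) := ⟨_, rfl⟩
  have hcpos : 0 < c := by rw [hc]; exact div_pos (by linarith) hk0
  have hc0 : c * (1 - 2 * M / r0) = 1 - u0 ^ 2 := by
    rw [hc, div_mul_cancel₀ _ hk0.ne']
  let h : ℝ → ℝ := fun r => 1 - c * (1 - 2 * M / r)
  let s : ℝ → ℝ := fun r => Real.sqrt (max (h r) (u0 ^ 2 / 2))
  let R : ℝ → ℝ := fun x => 2 * M + Real.exp (-x)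
  have hR : ∀ x, 2 * M < R x := fun x => by
    have := Real.exp_pos (-x); simp only [R]; linarith
  have hRp : ∀ x, 0 < R x := fun x => by have := hR x; linarith
  have hRc : Continuous R := by fun_prop
  have hh1 : ∀ r, 2 * M < r → h r < 1 := fun r hr => by
    have : 0 < 1 - 2 * M / r := by
      rw [sub_pos, div_lt_one (by linarith)]; exact hr
    have := mul_pos hcpos this
    simp only [h]; linarith
  have hspos : ∀ r, 0 < s r := fun r =>
    Real.sqrt_pos.2 (lt_max_of_lt_right (by linarith))
  have hs1 : ∀ r, 2 * M < r → s r < 1 := fun r hr => by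
    simp only [s]
    rw [Real.sqrt_lt' one_pos, one_pow]
    exact max_lt (hh1 r hr) (by linarith)
  have hsc : ∀ r, r ≠ 0 → ContinuousAt s r := fun r hr => by
    simp only [s, h]
    fun_prop (disch := exact hr)
  have hgc : Continuous fun x => s (R x) / R x := by
    refine continuous_iff_continuousAt.2 fun x => ?_
    exact ((hsc _ (hRp x).ne').comp hRc.continuousAt).div hRc.continuousAt (hRp x).ne'
  obtain ⟨x, hx0, hxd, hxm, hxt⟩ := exists_global_solution_scalar (fun x => s (R x) / R x) hgc
    (fun x => div_pos (hspos _) (hRp x)) (1 / (2 * M))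
    (fun x => div_le_div₀ zero_le_one (hs1 _ (hR x)).le (by linarith) (hR x).le)
    t0 (-Real.log (r0 - 2 * M))
  have hRx0 : R (x t0) = r0 := by
    simp only [R, hx0, neg_neg]
    rw [Real.exp_log (by linarith)]; ring
  have hanti : StrictAnti fun t => R (x t) := fun a b hab => by
    have := Real.exp_lt_exp.2 (neg_lt_neg (hxm hab))
    simp only [R]; linarith
  have hRd : ∀ t, HasDerivAt (fun t => R (x t)) ((1 - 2 * M / R (x t)) * -s (R (x t))) t := by
    intro t
    have h1 := ((hxd t).neg.exp).const_add (2 * M)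
    have h2 : Real.exp (-x t) = R (x t) - 2 * M := by simp only [R]; ring
    refine h1.congr_deriv ?_
    simp only [Pi.neg_apply]
    rw [h2]
    have := (hRp (x t)).ne'
    field_simp
  have hh0 : ∀ t, t0 ≤ t → u0 ^ 2 ≤ h (R (x t)) := fun t ht => by
    have h1 : R (x t) ≤ r0 := hRx0 ▸ hanti.antitone ht
    have h2 : 2 * M / r0 ≤ 2 * M / R (x t) :=
      div_le_div_of_nonneg_left (by linarith) (hRp _) h1
    have h3 := mul_le_mul_of_nonneg_left h2 hcpos.le
    simp only [h]; nlinarith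
  have hRt : Tendsto (fun t => R (x t)) atTop (nhds (2 * M)) := by
    have h1 : Tendsto (fun t => Real.exp (-x t)) atTop (nhds 0) :=
      Real.tendsto_exp_neg_atTop_nhds_zero.comp hxt
    simpa [R] using h1.const_add (2 * M)
  refine ⟨fun t => R (x t), fun t => -s (R (x t)), hRx0, ?_, fun t _ => hRd t, ?_,
    fun t _ => hR _, fun t _ => ⟨by linarith [hs1 _ (hR (x t))], by linarith [hspos (R (x t))]⟩,
    hanti.strictAntiOn _, hRt, ?_⟩
  · have h1 : h r0 = u0 ^ 2 := by simp only [h]; linarith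
    simp only [hRx0, s]
    rw [h1, max_eq_left (by linarith), Real.sqrt_sq_eq_abs, abs_of_neg hu2, neg_neg]
  · intro t ht
    have hht : u0 ^ 2 / 2 < h (R (x t)) := by linarith [hh0 t ht]
    have hrp := (hRp (x t)).ne'
    have hhd : HasDerivAt (fun t => h (R (x t)))
        (c * (2 * M / R (x t) ^ 2) * ((1 - 2 * M / R (x t)) * s (R (x t)))) t := by
      have h1 := (((hRd t).inv hrp).const_mul (2 * M)).const_sub 1
      refine ((h1.const_mul c).const_sub 1).congr_deriv ?_
      field_simp
    -- The modification of the radicand is inactive in a two-sided neighbourhood of `t`.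
    have hev : (fun t => -s (R (x t))) =ᶠ[nhds t] fun t => -Real.sqrt (h (R (x t))) := by
      filter_upwards [hhd.continuousAt.eventually (lt_mem_nhds hht)] with y hy
      simp only [s]
      rw [max_eq_left hy.le]
    have hst : s (R (x t)) = Real.sqrt (h (R (x t))) := by
      simp only [s]; rw [max_eq_left hht.le]
    have hhp : 0 < h (R (x t)) := by linarith
    have hsp := Real.sqrt_pos.2 hhp
    refine HasDerivAt.congr_of_eventuallyEq ?_ hev
    refine (hhd.sqrt hhp.ne').neg.congr_deriv ?_
    simp only [neg_sq]
    rw [hst, Real.sq_sqrt hhp.le]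
    have h2 : h (R (x t)) - 1 = -(c * (1 - 2 * M / R (x t))) := by simp only [h]; ring
    rw [h2]
    field_simp
  · have h1 : s (2 * M) = 1 := by
      have : 2 * M ≠ 0 := by positivity
      simp only [s, h]
      rw [div_self this, sub_self, mul_zero, sub_zero, max_eq_left (by linarith), Real.sqrt_one]
    have h2 := ((hsc (2 * M) (by positivity)).tendsto.comp hRt).neg
    rw [h1] at h2
    exact h2
end

section
/- Let M > 0, t0 ∈ ℝ, r0 > 2M and u0 ∈ [√(2M/r0), 1) (initial velocity at or above the escape velocity). Then the maximal solution (r, u) of the characteristic system with r(t0) = r0 and u(t0) = u0 is defined on all of [t0, ∞), the function r is strictly increasing on [t0, ∞) with lim_{t→∞} r(t) = +∞, and lim_{t→∞} u(t) = √((u0² − 2M/r0)/(1 − 2M/r0)) ∈ [0, 1). -/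
open Filter Set

/-!
The quantity `(1 - u²) / (1 - 2M/r)` is conserved along characteristics. Writing its value as
`1 - L`, so that `L = (u0² - 2M/r0) / (1 - 2M/r0)`, this says `u² = L + (1 - L) * (2M/r)`. The
hypothesis that `u0` is at least the escape velocity means `0 ≤ L < 1`, so the right-hand side stays
positive, `u` never vanishes, and the system reduces to the autonomous scalar equation
`r' = g(r)` with `g(r) = (1 - 2M/r) * √(L + (1 - L) * (2M/r))` and `0 < g ≤ 1` on `r > 2M`.

The scalar equation is solved by separation of variables (`exists_global_solution`): the time
function `T(r) = ∫ ds / g(s)` has slope at least `1`, hence is an increasing bijection of `ℝ`, and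
its inverse is the solution. To have `g` on the whole line it is frozen to the left of `r0`, which
the solution never visits after `t0`. Finally `r → ∞` gives `u → √L`.
-/

/-- A scalar autonomous equation with continuous right-hand side in `(0, 1]` has a global strictly
increasing unbounded solution: the inverse of the time function `x ↦ t0 + ∫ s in x0..x, 1 / g s`. -/
lemma exists_global_solution (g : ℝ → ℝ) (hg : Continuous g) (hpos : ∀ s, 0 < g s)
    (hle : ∀ s, g s ≤ 1) (t0 x0 : ℝ) :
    ∃ x : ℝ → ℝ, x t0 = x0 ∧ (∀ t, HasDerivAt x (g (x t)) t) ∧ StrictMono x ∧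
      Tendsto x atTop atTop := by
  have hinv : Continuous fun s => (g s)⁻¹ := hg.inv₀ fun s => (hpos s).ne'
  set T : ℝ → ℝ := fun y => t0 + ∫ s in x0..y, (g s)⁻¹ with hT
  have hTd : ∀ y, HasDerivAt T (g y)⁻¹ y := fun y =>
    (intervalIntegral.integral_hasDerivAt_right (hinv.intervalIntegrable _ _)
      hinv.aestronglyMeasurable.stronglyMeasurableAtFilter hinv.continuousAt).const_add t0
  have hTx : T x0 = t0 := by simp [hT]
  have hTc : Continuous T := continuous_iff_continuousAt.2 fun y => (hTd y).continuousAt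
  have hTmono : StrictMono T := strictMono_of_deriv_pos fun y => by
    rw [(hTd y).deriv]; exact inv_pos.2 (hpos y)
  -- The slope of `T` is at least `1`, so `T` dominates a translation on each side of `x0`.
  have hsub : Monotone fun y => T y - y := by
    have hd : ∀ y, HasDerivAt (fun y => T y - y) ((g y)⁻¹ - 1) y := fun y =>
      (hTd y).sub (hasDerivAt_id y)
    refine monotone_of_deriv_nonneg (fun y => (hd y).differentiableAt) fun y => ?_
    rw [(hd y).deriv]
    exact sub_nonneg.2 ((one_le_inv₀ (hpos y)).2 (hle y))
  have htop : Tendsto T atTop atTop := by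
    refine tendsto_atTop_mono' atTop ?_ (tendsto_atTop_add_const_right atTop (t0 - x0) tendsto_id)
    filter_upwards [eventually_ge_atTop x0] with y hy
    have := hsub hy
    simp only [hTx, id] at this ⊢
    linarith
  have hbot : Tendsto T atBot atBot := by
    refine tendsto_atBot_mono' atBot ?_ (tendsto_atBot_add_const_right atBot (t0 - x0) tendsto_id)
    filter_upwards [eventually_le_atBot x0] with y hy
    have := hsub hy
    simp only [hTx, id] at this ⊢
    linarith
  let e : ℝ ≃o ℝ := hTmono.orderIsoOfSurjective T (hTc.surjective htop hbot)
  have he : ∀ y, e y = T y := fun y => rfl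
  refine ⟨e.symm, ?_, fun t => ?_, e.symm.strictMono, e.symm.tendsto_atTop⟩
  · rw [OrderIso.symm_apply_eq, he, hTx]
  · have h := HasDerivAt.of_local_left_inverse (f := T) (g := e.symm)
      e.symm.continuous.continuousAt (hTd (e.symm t)) (inv_ne_zero (hpos _).ne')
      (Eventually.of_forall fun s => e.apply_symm_apply s)
    simpa using h

/-- For `M > 0`, `r0 > 2M` and `u0 ∈ [√(2M/r0), 1)` (initial velocity at or
above the escape velocity), the maximal solution of the characteristic system with data
`(r0, u0)` at time `t0` is defined on all of `[t0, ∞)`, `r` is strictly increasing with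
`r(t) → +∞`, and `u(t) → √((u0² - 2M/r0)/(1 - 2M/r0)) ∈ [0, 1)` as `t → ∞`. -/
theorem burgersSchwarzschild_superescape_initial_velocity
    (M : ℝ) (hM : 0 < M) (t0 r0 u0 : ℝ)
    (hr0 : 2 * M < r0) (hu0 : u0 ∈ Set.Ico (Real.sqrt (2 * M / r0)) 1) :
    Real.sqrt ((u0 ^ 2 - 2 * M / r0) / (1 - 2 * M / r0)) ∈ Set.Ico (0 : ℝ) 1 ∧
    ∃ r u : ℝ → ℝ,
      r t0 = r0 ∧ u t0 = u0 ∧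
      (∀ t ∈ Set.Ici t0, HasDerivAt r ((1 - 2 * M / r t) * u t) t) ∧
      (∀ t ∈ Set.Ici t0, HasDerivAt u (M / (r t) ^ 2 * ((u t) ^ 2 - 1)) t) ∧
      (∀ t ∈ Set.Ici t0, 2 * M < r t) ∧
      (∀ t ∈ Set.Ici t0, u t ∈ Set.Ioo (-1 : ℝ) 1) ∧
      StrictMonoOn r (Set.Ici t0) ∧
      Tendsto r atTop atTop ∧
      Tendsto u atTop (nhds (Real.sqrt ((u0 ^ 2 - 2 * M / r0) / (1 - 2 * M / r0)))) := by
  obtain ⟨hu0l, hu01⟩ := hu0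
  have hr0pos : 0 < r0 := by linarith
  have hq1 : 2 * M / r0 < 1 := (div_lt_one hr0pos).2 hr0
  have hq0 : 0 < 2 * M / r0 := by positivity
  have hu0pos : 0 < u0 := (Real.sqrt_pos.2 hq0).trans_le hu0l
  have hu0sq : 2 * M / r0 ≤ u0 ^ 2 := (Real.sqrt_le_left hu0pos.le).1 hu0l
  set L : ℝ := (u0 ^ 2 - 2 * M / r0) / (1 - 2 * M / r0) with hL
  have hL0 : 0 ≤ L := div_nonneg (by linarith) (by linarith)
  have hL1 : L < 1 := (div_lt_one (by linarith)).2 (by nlinarith)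
  have hLu : L + (1 - L) * (2 * M / r0) = u0 ^ 2 := by
    have : L * (1 - 2 * M / r0) = u0 ^ 2 - 2 * M / r0 := div_mul_cancel₀ _ (by linarith)
    linarith
  refine ⟨⟨Real.sqrt_nonneg _, by rw [Real.sqrt_lt' one_pos]; simpa using hL1⟩, ?_⟩
  -- The squared velocity at radius `s`, as dictated by the conserved quantity.
  set w : ℝ → ℝ := fun s => L + (1 - L) * (2 * M / s) with hw
  have hq : ∀ s, r0 ≤ s → 0 < 2 * M / s ∧ 2 * M / s < 1 := fun s hs =>
    have hs0 : 0 < s := hr0pos.trans_le hs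
    ⟨by positivity, (div_lt_one hs0).2 (hr0.trans_le hs)⟩
  have hwpos : ∀ s, r0 ≤ s → 0 < w s := fun s hs => by
    have := mul_pos (sub_pos.2 hL1) (hq s hs).1
    simp only [hw]; linarith
  have hwlt : ∀ s, r0 ≤ s → w s < 1 := fun s hs => by
    have := mul_pos (sub_pos.2 hL1) (sub_pos.2 (hq s hs).2)
    simp only [hw]; linarith
  have hmax : ∀ s, r0 ≤ max s r0 := fun s => le_max_right _ _
  have hqc : Continuous fun s : ℝ => 2 * M / max s r0 :=
    continuous_const.div (continuous_id.max continuous_const) fun s =>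
      (hr0pos.trans_le (hmax s)).ne'
  obtain ⟨r, hrt0, hrd, hrm, hrtop⟩ := exists_global_solution
    (fun s => (1 - 2 * M / max s r0) * Real.sqrt (w (max s r0)))
    ((continuous_const.sub hqc).mul
      (continuous_const.add (continuous_const.mul hqc)).sqrt)
    (fun s => mul_pos (sub_pos.2 (hq _ (hmax s)).2) (Real.sqrt_pos.2 (hwpos _ (hmax s))))
    (fun s => mul_le_one₀ (by linarith [(hq _ (hmax s)).1]) (Real.sqrt_nonneg _)
      (Real.sqrt_le_one.2 (hwlt _ (hmax s)).le))
    t0 r0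
  have hrge : ∀ t ∈ Set.Ici t0, r0 ≤ r t := fun t ht => hrt0 ▸ hrm.monotone ht
  have hrd' : ∀ t ∈ Set.Ici t0, HasDerivAt r ((1 - 2 * M / r t) * Real.sqrt (w (r t))) t :=
    fun t ht => by simpa only [max_eq_left (hrge t ht)] using hrd t
  refine ⟨r, fun t => Real.sqrt (w (r t)), hrt0, ?_, hrd', fun t ht => ?_,
    fun t ht => hr0.trans_le (hrge t ht), fun t ht => ?_, hrm.strictMonoOn _, hrtop, ?_⟩
  · simp only [hrt0, hw, hLu]
    exact Real.sqrt_sq hu0pos.le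
  · have hrpos : 0 < r t := hr0pos.trans_le (hrge t ht)
    have hwp := hwpos _ (hrge t ht)
    have hsp := Real.sqrt_pos.2 hwp
    have hwd : HasDerivAt (fun t => w (r t)) _ t :=
      ((((hasDerivAt_const t (2 * M)).div (hrd' t ht) hrpos.ne').const_mul (1 - L)).const_add L)
    convert hwd.sqrt hwp.ne' using 1
    rw [Real.sq_sqrt hwp.le]
    field_simp
    simp only [hw]
    field_simp
    ring
  · have hs := Real.sqrt_pos.2 (hwpos _ (hrge t ht))
    refine ⟨by linarith, ?_⟩
    rw [Real.sqrt_lt' one_pos]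
    simpa using hwlt _ (hrge t ht)
  · have h0 : Tendsto (fun t => 2 * M / r t) atTop (nhds 0) := hrtop.const_div_atTop _
    have h1 : Tendsto (fun t => w (r t)) atTop (nhds L) := by
      simpa using (h0.const_mul (1 - L)).const_add L
    exact h1.sqrt
end

section
/- Let M > 0 and let (r, u) be a solution of the characteristic system defined on [t0, ∞), with r(t) > 2M and u(t) ∈ (−1, 1) for all t ≥ t0, such that lim_{t→∞} r(t) = 2M. Then the convergence of r(t) to the horizon radius 2M is exponential at rate 1/(2M): there exists a constant K > 0 such that lim_{t→∞} (r(t) − 2M)·e^{t/(2M)} = K. -/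
open Filter Set

/-!
Write `x = r - 2M`. The quantity `(1 - u²) / (1 - 2M/r)` is conserved along characteristics, so
`(1 - u²) r = c x` with a constant `c > 0`. Since `u` is decreasing, it stays below `u t0 < 1`, and
`x → 0` therefore forces `u → -1`; in particular `u ≤ -1/2` eventually.

The function `G = log x + t / (2M)` has derivative
`G' = u / r + 1 / (2M) = (2M (1 + u) + x) / (2M r)`, which is nonnegative, and the conservation law
bounds `1 + u` by a multiple of `x`, so that `G' ≤ -C x'` with `C = (c + 1) / M` once `u ≤ -1/2`.
Thus `G` is eventually increasing while `G + C x` is eventually decreasing; hence `G` is bounded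
above and converges to some `L`, and the limit sought is `K = exp L`.
-/

/-- A function which is monotone and bounded above on some half-line `[T, ∞)` converges. -/
lemma exists_tendsto_of_monotoneOn_Ici {G : ℝ → ℝ} {T B : ℝ} (hG : MonotoneOn G (Ici T))
    (hB : ∀ t ∈ Ici T, G t ≤ B) : ∃ L, Tendsto G atTop (nhds L) := by
  have hmono : Monotone (fun t => G (max t T)) := fun a b hab =>
    hG (le_max_right a T) (le_max_right b T) (max_le_max_right T hab)
  have hbdd : BddAbove (range fun t => G (max t T)) := by
    refine ⟨B, ?_⟩
    rintro _ ⟨t, rfl⟩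
    exact hB _ (le_max_right t T)
  refine ⟨_, (tendsto_atTop_ciSup hmono hbdd).congr' ?_⟩
  filter_upwards [eventually_ge_atTop T] with t ht
  rw [max_eq_left ht]

/-- The first integral `(1 - u²) / (1 - 2M/r) = c` of the characteristic system, with the
denominators cleared. -/
lemma exists_conserved_quantity
    (M : ℝ) (hM : 0 < M) (t0 : ℝ) (r u : ℝ → ℝ)
    (hr : ∀ t ∈ Ici t0, HasDerivAt r ((1 - 2 * M / r t) * u t) t)
    (hu : ∀ t ∈ Ici t0, HasDerivAt u (M / (r t) ^ 2 * ((u t) ^ 2 - 1)) t)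
    (hrdom : ∀ t ∈ Ici t0, 2 * M < r t)
    (hudom : ∀ t ∈ Ici t0, u t ∈ Ioo (-1 : ℝ) 1) :
    ∃ c > 0, ∀ t ∈ Ici t0, (1 - u t ^ 2) * r t = c * (r t - 2 * M) := by
  let I : ℝ → ℝ := fun t => (1 - u t ^ 2) * r t / (r t - 2 * M)
  have hI : ∀ t ∈ Ici t0, HasDerivAt I 0 t := by
    intro t ht
    have h1 := hrdom t ht
    have hx : r t - 2 * M ≠ 0 := by linarith
    have hr0 : r t ≠ 0 := by linarith
    have h := ((((hu t ht).pow 2).const_sub 1).mul (hr t ht)).div ((hr t ht).sub_const (2 * M)) hx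
    refine h.congr_deriv ?_
    simp only [Pi.mul_apply, Pi.pow_apply]
    field_simp
    push_cast
    ring
  refine ⟨I t0, ?_, ?_⟩
  · have h1 := hrdom t0 self_mem_Ici
    obtain ⟨h2, h3⟩ := hudom t0 self_mem_Ici
    have h4 : 0 < 1 - u t0 ^ 2 := by nlinarith
    exact div_pos (mul_pos h4 (by linarith)) (by linarith)
  · intro t ht
    have hc : I t = I t0 :=
      constant_of_has_deriv_right_zero
        (fun s hs => (hI s hs.1).continuousAt.continuousWithinAt)
        (fun s hs => (hI s hs.1).hasDerivWithinAt) t ⟨ht, le_rfl⟩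
    have hx : r t - 2 * M ≠ 0 := by linarith [hrdom t ht]
    rw [← hc]
    simp only [I]
    field_simp

/-- Let `M > 0` and let `(r, u)` solve the characteristic system on
`[t0, ∞)` with `r > 2M`, `u ∈ (-1, 1)`, and `r(t) → 2M` as `t → ∞`. Then the convergence of
`r` to the horizon radius `2M` is exponential with rate `1/(2M)`: there is `K > 0` with
`(r(t) - 2M) e^{t/(2M)} → K`. -/
theorem burgersSchwarzschild_exponential_approach_to_horizon
    (M : ℝ) (hM : 0 < M) (t0 : ℝ) (r u : ℝ → ℝ)
    (hr : ∀ t ∈ Set.Ici t0, HasDerivAt r ((1 - 2 * M / r t) * u t) t)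
    (hu : ∀ t ∈ Set.Ici t0, HasDerivAt u (M / (r t) ^ 2 * ((u t) ^ 2 - 1)) t)
    (hrdom : ∀ t ∈ Set.Ici t0, 2 * M < r t)
    (hudom : ∀ t ∈ Set.Ici t0, u t ∈ Set.Ioo (-1 : ℝ) 1)
    (hlim : Tendsto r atTop (nhds (2 * M))) :
    ∃ K > 0, Tendsto (fun t => (r t - 2 * M) * Real.exp (t / (2 * M))) atTop (nhds K) := by
  obtain ⟨c, hc, hcons⟩ := exists_conserved_quantity M hM t0 r u hr hu hrdom hudom
  have hu_anti : AntitoneOn u (Ici t0) := by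
    refine antitoneOn_of_hasDerivWithinAt_nonpos (convex_Ici t0)
      (fun t ht => (hu t ht).continuousAt.continuousWithinAt)
      (fun t ht => (hu t (interior_subset ht)).hasDerivWithinAt) ?_
    intro t ht
    obtain ⟨h2, h3⟩ := hudom t (interior_subset ht)
    exact mul_nonpos_of_nonneg_of_nonpos (by positivity) (by nlinarith)
  have hu0 : u t0 < 1 := (hudom t0 self_mem_Ici).2
  -- Closeness of `r` to `2M` forces `1 - u² < (1 - u t0) / 2`, and `1 - u ≥ 1 - u t0`.
  have hev : ∀ᶠ t in atTop, c * (r t - 2 * M) < M * (1 - u t0) := by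
    have h : Tendsto (fun t => c * (r t - 2 * M)) atTop (nhds (c * (2 * M - 2 * M))) :=
      (hlim.sub_const _).const_mul c
    refine h.eventually_lt_const ?_
    rw [sub_self, mul_zero]
    exact mul_pos hM (by linarith)
  obtain ⟨T', hT'⟩ := eventually_atTop.1 hev
  set T := max T' t0
  have hTt : ∀ t ∈ Ici T, t ∈ Ici t0 := fun t ht => (le_max_right T' t0).trans ht
  have hu_half : ∀ t ∈ Ici T, u t ≤ -1 / 2 := by
    intro t ht
    have h1 := hT' t ((le_max_left T' t0).trans ht)
    have h2 := hcons t (hTt t ht)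
    have h3 := hrdom t (hTt t ht)
    obtain ⟨h4, h5⟩ := hudom t (hTt t ht)
    have h6 : u t ≤ u t0 := hu_anti self_mem_Ici (hTt t ht) (hTt t ht)
    by_contra! hcon
    have h7 : (1 - u t0) / 2 < 1 - u t ^ 2 := by nlinarith
    nlinarith
  have hG : ∀ t ∈ Ici T, HasDerivAt (fun t => Real.log (r t - 2 * M) + t / (2 * M))
      (u t / r t + 1 / (2 * M)) t := by
    intro t ht
    have h3 := hrdom t (hTt t ht)
    have hx : r t - 2 * M ≠ 0 := by linarith
    have hr0 : r t ≠ 0 := by linarith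
    refine ((((hr t (hTt t ht)).sub_const (2 * M)).log hx).add
      ((hasDerivAt_id t).div_const (2 * M))).congr_deriv ?_
    field_simp
  have hG_mono : MonotoneOn (fun t => Real.log (r t - 2 * M) + t / (2 * M)) (Ici T) := by
    refine monotoneOn_of_hasDerivWithinAt_nonneg (convex_Ici T)
      (fun t ht => (hG t ht).continuousAt.continuousWithinAt)
      (fun t ht => (hG t (interior_subset ht)).hasDerivWithinAt) ?_
    intro t ht
    replace ht := interior_subset ht
    have h3 := hrdom t (hTt t ht)
    obtain ⟨h4, h5⟩ := hudom t (hTt t ht)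
    have hr0 : 0 < r t := by linarith
    have : u t / r t + 1 / (2 * M) = (2 * M * (1 + u t) + (r t - 2 * M)) / (2 * M * r t) := by
      field_simp
      ring
    rw [this]
    exact div_nonneg (by nlinarith) (by positivity)
  set C := (c + 1) / M with hC
  have hC0 : 0 < C := by positivity
  have hH : ∀ t ∈ Ici T, HasDerivAt
      (fun t => Real.log (r t - 2 * M) + t / (2 * M) + C * (r t - 2 * M))
      (u t / r t + 1 / (2 * M) + C * ((1 - 2 * M / r t) * u t)) t := fun t ht =>
    (hG t ht).add (((hr t (hTt t ht)).sub_const (2 * M)).const_mul C)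
  have hH_anti : AntitoneOn
      (fun t => Real.log (r t - 2 * M) + t / (2 * M) + C * (r t - 2 * M)) (Ici T) := by
    refine antitoneOn_of_hasDerivWithinAt_nonpos (convex_Ici T)
      (fun t ht => (hH t ht).continuousAt.continuousWithinAt)
      (fun t ht => (hH t (interior_subset ht)).hasDerivWithinAt) ?_
    intro t ht
    replace ht := interior_subset ht
    have h3 := hrdom t (hTt t ht)
    obtain ⟨h4, h5⟩ := hudom t (hTt t ht)
    have h6 := hu_half t ht
    have h2 := hcons t (hTt t ht)
    have hr0 : 0 < r t := by linarith
    have hx : 0 < r t - 2 * M := by linarith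
    have : u t / r t + 1 / (2 * M) + C * ((1 - 2 * M / r t) * u t)
        = (2 * M * (1 + u t) + (r t - 2 * M) + 2 * (c + 1) * (r t - 2 * M) * u t)
          / (2 * M * r t) := by
      rw [hC]
      field_simp
      ring
    rw [this]
    refine div_nonpos_of_nonpos_of_nonneg ?_ (by positivity)
    -- `2M (1 + u) ≤ r (1 + u) (1 - u) = c x`
    have h7 : 2 * M * (1 + u t) ≤ c * (r t - 2 * M) := by
      rw [← h2]
      have h8 : 1 + u t ≤ 1 - u t ^ 2 := by nlinarith
      nlinarith
    have h9 : 0 ≤ (c + 1) * (r t - 2 * M) := by positivity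
    nlinarith
  obtain ⟨L, hL⟩ := exists_tendsto_of_monotoneOn_Ici hG_mono
    (B := Real.log (r T - 2 * M) + T / (2 * M) + C * (r T - 2 * M)) (by
      intro t ht
      have h := hH_anti self_mem_Ici ht ht
      have h3 := hrdom t (hTt t ht)
      have h9 : 0 ≤ C * (r t - 2 * M) := mul_nonneg hC0.le (by linarith)
      dsimp only at h ⊢
      linarith)
  refine ⟨Real.exp L, Real.exp_pos L, ((Real.continuous_exp.tendsto L).comp hL).congr' ?_⟩
  filter_upwards [eventually_ge_atTop T] with t ht
  have h3 := hrdom t (hTt t ht)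
  rw [Function.comp_apply, Real.exp_add, Real.exp_log (by linarith)]
end

section
/- Let M > 0, r_* > 2M, and let (r, u) be a solution of the characteristic system on an interval I with r(t) ≥ r_* and u(t) ∈ (−1, 1) for all t ∈ I, and let C = (u(t)² − 2M/r(t))/(1 − 2M/r(t)) be its conserved quantity. Then C ∈ [−2M/(r_* − 2M), 1]. Moreover, if C < 0 then the characteristic is bounded: r(t) ≤ 2M·(1 − 1/C) for all t ∈ I. -/
/-!
Clearing denominators in the definition of `C` gives `C (r - 2M) = u² r - 2M`, where
`r - 2M > 0`. Since `0 ≤ u² < 1`, the right-hand side lies between `-2M` and `r - 2M`. The upper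
estimate is `C ≤ 1`; for `C < 0` the lower one bounds `r - 2M` by `-2M / C`, which is the bound
on `r` and, with `r ≥ r_*`, also the lower bound on `C`.
-/

open Set

/-- Let `M > 0`, `r_* > 2M`, and let `(r, u)` solve the characteristic
system on an interval `I` with `r ≥ r_*` and `u ∈ (-1, 1)`, with conserved quantity
`C = (u² - 2M/r)/(1 - 2M/r)`. Then `C ∈ [-2M/(r_* - 2M), 1]`; moreover if `C < 0` the
characteristic is bounded: `r(t) ≤ 2M (1 - 1/C)` on `I`. -/
theorem burgersSchwarzschild_conserved_quantity_range
    (M rstar : ℝ) (hM : 0 < M) (hrstar : 2 * M < rstar)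
    (I : Set ℝ) (hI : I.OrdConnected) (hne : I.Nonempty)
    (r u : ℝ → ℝ)
    (hr : ∀ t ∈ I, HasDerivAt r ((1 - 2 * M / r t) * u t) t)
    (hu : ∀ t ∈ I, HasDerivAt u (M / (r t) ^ 2 * ((u t) ^ 2 - 1)) t)
    (hrdom : ∀ t ∈ I, rstar ≤ r t)
    (hudom : ∀ t ∈ I, u t ∈ Set.Ioo (-1 : ℝ) 1)
    (C : ℝ)
    (hC : ∀ t ∈ I, ((u t) ^ 2 - 2 * M / r t) / (1 - 2 * M / r t) = C) :
    C ∈ Set.Icc (-(2 * M) / (rstar - 2 * M)) 1 ∧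
    (C < 0 → ∀ t ∈ I, r t ≤ 2 * M * (1 - 1 / C)) := by
  -- The definition of `C` with denominators cleared; it drives all three bounds.
  have key : ∀ t ∈ I, C * (r t - 2 * M) = (u t) ^ 2 * r t - 2 * M := by
    intro t ht
    have hrt := hrdom t ht
    have hr0 : r t ≠ 0 := by linarith
    have hd : 1 - 2 * M / r t ≠ 0 := by
      have : 2 * M / r t < 1 := by
        rw [div_lt_one (by linarith)]
        linarith
      linarith
    have h := (div_eq_iff hd).1 (hC t ht)
    field_simp at h
    linarith
  -- Dropping the term `u² r ≥ 0`.
  have low : ∀ t ∈ I, -(2 * M) ≤ C * (r t - 2 * M) := by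
    intro t ht
    have hrt := hrdom t ht
    have : 0 ≤ (u t) ^ 2 * r t := mul_nonneg (sq_nonneg _) (by linarith)
    linarith [key t ht]
  obtain ⟨t₀, ht₀⟩ := hne
  have hr₀ := hrdom t₀ ht₀
  obtain ⟨hu1, hu2⟩ := hudom t₀ ht₀
  refine ⟨⟨?_, ?_⟩, ?_⟩
  · rw [div_le_iff₀ (by linarith)]
    rcases le_or_gt 0 C with h | h
    · have : 0 ≤ C * (rstar - 2 * M) := mul_nonneg h (by linarith)
      linarith
    · have : C * (r t₀ - 2 * M) ≤ C * (rstar - 2 * M) :=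
        mul_le_mul_of_nonpos_left (by linarith) h.le
      linarith [low t₀ ht₀]
  · have hsq : (u t₀) ^ 2 ≤ 1 := by nlinarith
    have h1 : (u t₀) ^ 2 * r t₀ ≤ 1 * r t₀ :=
      mul_le_mul_of_nonneg_right hsq (by linarith)
    refine le_of_mul_le_mul_right ?_ (show 0 < r t₀ - 2 * M by linarith)
    linarith [key t₀ ht₀]
  · intro hneg t ht
    have h : r t - 2 * M ≤ -(2 * M) / C := by
      rw [le_div_iff_of_neg hneg]
      linarith [low t ht]
    calc r t ≤ 2 * M + -(2 * M) / C := by linarith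
      _ = 2 * M * (1 - 1 / C) := by ring
end

section
/- Let M > 0 and r_* > 2M. Let (r, u) be a solution of the characteristic system on an interval [t0, t1], with r(t) > 2M and u(t) ∈ (−1, 1) for all t, and suppose r(t0) = r0 with r0 ≥ r_*, u(t0) = u0 with 0 < u0 < √(2M/r0), and r(t1) = r0 (the path returns to its initial location at time t1 > t0). Then the return time satisfies t1 − t0 ≥ 4M·u0·(1 − u0²)/(2M/r0 − u0²). -/
open Set

/-!
The quantity `(1 - 2M/r)/(1 - u²)` is conserved along characteristics; call its value `k`.
Here `k > 0`, and the sub-escape condition says `k < 1`. As `u` is strictly decreasing, returning to `r0`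
forces `u t1 = -u0`. With `w = u²` and `2M/r = 1 - k + k w`, the product `u r` satisfies
`(u r)' = (1 - w)(k w - (1 - k))/2 ≥ -(1 - k)/2`, so that
`-2 u0 r0 ≥ -(1 - k)/2 · (t1 - t0)`. Since `1 - k = (2M/r0 - u0²)/(1 - u0²)`, this gives
`t1 - t0 ≥ 4 r0 u0 (1 - u0²)/(2M/r0 - u0²)`, and `r0 > M` concludes.
-/

/-- (Time of return to a given location.) Let `M > 0`, `r_* > 2M`, and let
`(r, u)` solve the characteristic system on `[t0, t1]` with `r > 2M`, `u ∈ (-1, 1)`,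
starting at `r(t0) = r0 ≥ r_*` with sub-escape positive velocity `0 < u0 < √(2M/r0)` and
returning to the same location `r(t1) = r0` at time `t1 > t0`. Then
`t1 - t0 ≥ 4M u0 (1 - u0²)/(2M/r0 - u0²)`. -/
theorem burgersSchwarzschild_return_time_lower_bound
    (M rstar : ℝ) (hM : 0 < M) (hrstar : 2 * M < rstar)
    (t0 t1 r0 u0 : ℝ) (ht : t0 < t1)
    (r u : ℝ → ℝ)
    (hr : ∀ t ∈ Set.Icc t0 t1, HasDerivAt r ((1 - 2 * M / r t) * u t) t)
    (hu : ∀ t ∈ Set.Icc t0 t1, HasDerivAt u (M / (r t) ^ 2 * ((u t) ^ 2 - 1)) t)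
    (hrdom : ∀ t ∈ Set.Icc t0 t1, 2 * M < r t)
    (hudom : ∀ t ∈ Set.Icc t0 t1, u t ∈ Set.Ioo (-1 : ℝ) 1)
    (hinit_r : r t0 = r0) (hr0 : rstar ≤ r0)
    (hinit_u : u t0 = u0) (hu0pos : 0 < u0) (hu0sub : u0 < Real.sqrt (2 * M / r0))
    (hreturn : r t1 = r0) :
    4 * M * u0 * (1 - u0 ^ 2) / (2 * M / r0 - u0 ^ 2) ≤ t1 - t0 := by
  have hrpos : ∀ t ∈ Icc t0 t1, 0 < r t := fun t h => by linarith [hrdom t h]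
  have hu1 : ∀ t ∈ Icc t0 t1, 0 < 1 - u t ^ 2 := fun t h => by
    obtain ⟨h1, h2⟩ := hudom t h
    nlinarith
  have h0 : t0 ∈ Icc t0 t1 := left_mem_Icc.2 ht.le
  have h1 : t1 ∈ Icc t0 t1 := right_mem_Icc.2 ht.le
  have hr0M : 2 * M < r0 := by linarith
  have hr0pos : 0 < r0 := by linarith
  have hu01 : 0 < 1 - u0 ^ 2 := hinit_u ▸ hu1 t0 h0
  have hsub : 0 < 2 * M / r0 - u0 ^ 2 := by
    have := (Real.lt_sqrt hu0pos.le).1 hu0sub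
    linarith
  have hx1 : 2 * M / r0 < 1 := (div_lt_one hr0pos).2 hr0M
  have hcons : ∀ t ∈ Icc t0 t1,
      (1 - 2 * M / r t) / (1 - u t ^ 2) = (1 - 2 * M / r t0) / (1 - u t0 ^ 2) := by
    have hd : ∀ t ∈ Icc t0 t1,
        HasDerivAt (fun s => (1 - 2 * M / r s) / (1 - u s ^ 2)) 0 t := by
      intro t h
      have hrne := (hrpos t h).ne'
      have hune := (hu1 t h).ne'
      have hA := ((hasDerivAt_const t (2 * M)).fun_div (hr t h) hrne).const_sub 1
      have hB := ((hu t h).fun_pow 2).const_sub 1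
      refine (hA.fun_div hB hune).congr_deriv ?_
      field_simp
      ring
    exact constant_of_has_deriv_right_zero
      (fun t h => (hd t h).continuousAt.continuousWithinAt)
      (fun t h => (hd t (Ico_subset_Icc_self h)).hasDerivWithinAt)
  obtain ⟨k, hk⟩ : ∃ k, k = (1 - 2 * M / r0) / (1 - u0 ^ 2) := ⟨_, rfl⟩
  have hkpos : 0 < k := hk ▸ div_pos (by linarith) hu01
  have hk1 : k < 1 := by
    rw [hk, div_lt_one hu01]
    linarith
  have hk' : k * (1 - u0 ^ 2) = 1 - 2 * M / r0 := by
    rw [hk, div_mul_cancel₀ _ hu01.ne']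
  have hcons' : ∀ t ∈ Icc t0 t1, 1 - 2 * M / r t = k * (1 - u t ^ 2) := by
    intro t h
    have h2 := hcons t h
    rw [hinit_r, hinit_u, ← hk] at h2
    exact (div_eq_iff (hu1 t h).ne').1 h2
  have hlt : u t1 < u t0 := by
    have hanti : StrictAntiOn u (Icc t0 t1) := by
      refine strictAntiOn_of_deriv_neg (convex_Icc _ _)
        (fun t h => (hu t h).continuousAt.continuousWithinAt) ?_
      intro t h
      have h' := interior_subset h
      rw [(hu t h').deriv]
      have := hrpos t h'
      exact mul_neg_of_pos_of_neg (by positivity) (by linarith [hu1 t h'])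
    exact hanti h0 h1 ht
  have hend : u t1 = -u0 := by
    have h2 := hcons' t1 h1
    rw [hreturn, ← hk'] at h2
    have h3 := mul_left_cancel₀ hkpos.ne' h2
    rcases sq_eq_sq_iff_eq_or_eq_neg.1 (show u t1 ^ 2 = u0 ^ 2 by linarith) with h4 | h4
    · linarith
    · exact h4
  have hmono : MonotoneOn (fun t => u t * r t + (1 - k) / 2 * t) (Icc t0 t1) := by
    have hd : ∀ t ∈ Icc t0 t1, HasDerivAt (fun t => u t * r t + (1 - k) / 2 * t)
        ((k * (1 - u t ^ 2) + (1 - k)) * u t ^ 2 / 2) t := by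
      intro t h
      have hrne := (hrpos t h).ne'
      refine (((hu t h).fun_mul (hr t h)).fun_add
        ((hasDerivAt_id' t).const_mul ((1 - k) / 2))).congr_deriv ?_
      have h2 := hcons' t h
      have h3 : M / r t ^ 2 * (u t ^ 2 - 1) * r t = (2 * M / r t) / 2 * (u t ^ 2 - 1) := by
        field_simp
      have h4 : 2 * M / r t = 1 - k * (1 - u t ^ 2) := by linarith
      rw [h3, h4]
      ring
    refine monotoneOn_of_deriv_nonneg (convex_Icc _ _)
      (fun t h => (hd t h).continuousAt.continuousWithinAt)
      (fun t h => (hd t (interior_subset h)).differentiableAt.differentiableWithinAt) ?_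
    intro t h
    have h' := interior_subset h
    rw [(hd t h').deriv]
    have h2 := mul_pos hkpos (hu1 t h')
    have h3 : 0 < k * (1 - u t ^ 2) + (1 - k) := by linarith
    positivity
  have hfin : 4 * u0 * r0 ≤ (1 - k) * (t1 - t0) := by
    have h2 : u t0 * r t0 + (1 - k) / 2 * t0 ≤ u t1 * r t1 + (1 - k) / 2 * t1 :=
      hmono h0 h1 ht.le
    rw [hend, hinit_u, hinit_r, hreturn] at h2
    linarith
  rw [div_le_iff₀ hsub]
  have hk2 : 2 * M / r0 - u0 ^ 2 = (1 - k) * (1 - u0 ^ 2) := by linarith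
  rw [hk2]
  have h2 : 4 * M * u0 ≤ 4 * u0 * r0 := by nlinarith
  calc 4 * M * u0 * (1 - u0 ^ 2) ≤ (1 - k) * (t1 - t0) * (1 - u0 ^ 2) :=
        mul_le_mul_of_nonneg_right (h2.trans hfin) hu01.le
    _ = (t1 - t0) * ((1 - k) * (1 - u0 ^ 2)) := by ring
end

section
/- Let M > 0 and let (r, u) be a solution of the characteristic system on an interval [t0, t1], with r(t) > 2M and u(t) ∈ (−1, 1) for all t, and suppose r(t0) = r0 and u(t0) = u0 with 0 < u0 < √(2M/r0). If t2 ∈ (t0, t1) is a time at which u(t2) = 0 (the turning point of the path), then the turning radius equals r(t2) = 2M·(1 − u0²)/(2M/r0 − u0²). -/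
/-!
The quantity `(1 - u²) / (1 - 2M/r)` is conserved along solutions of the characteristic system:
in the numerator of its derivative, the contributions of `u'` and `r'` cancel.
Comparing its values at `t0` and at the turning time, where `u = 0`, gives
`(1 - 2M/r0) = (1 - u0²) (1 - 2M/r(t2))`, which is solved for `r(t2)`. The condition
`u0 < √(2M/r0)` makes the denominator `2M/r0 - u0²` positive.
-/

open Set

/-- (Turning radius.) Let `M > 0` and let `(r, u)` solve the characteristic
system on `[t0, t1]` with `r > 2M`, `u ∈ (-1, 1)`, `r(t0) = r0`, `u(t0) = u0` with
`0 < u0 < √(2M/r0)`. If `u(t2) = 0` at some `t2 ∈ (t0, t1)`, then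
`r(t2) = 2M (1 - u0²)/(2M/r0 - u0²)`. -/
theorem burgersSchwarzschild_turning_radius
    (M : ℝ) (hM : 0 < M)
    (t0 t1 r0 u0 : ℝ) (ht : t0 < t1)
    (r u : ℝ → ℝ)
    (hr : ∀ t ∈ Set.Icc t0 t1, HasDerivAt r ((1 - 2 * M / r t) * u t) t)
    (hu : ∀ t ∈ Set.Icc t0 t1, HasDerivAt u (M / (r t) ^ 2 * ((u t) ^ 2 - 1)) t)
    (hrdom : ∀ t ∈ Set.Icc t0 t1, 2 * M < r t)
    (hudom : ∀ t ∈ Set.Icc t0 t1, u t ∈ Set.Ioo (-1 : ℝ) 1)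
    (hinit_r : r t0 = r0) (hinit_u : u t0 = u0)
    (hu0pos : 0 < u0) (hu0sub : u0 < Real.sqrt (2 * M / r0))
    (t2 : ℝ) (ht2 : t2 ∈ Set.Ioo t0 t1) (hturn : u t2 = 0) :
    r t2 = 2 * M * (1 - u0 ^ 2) / (2 * M / r0 - u0 ^ 2) := by
  have hpos : ∀ t ∈ Set.Icc t0 t1, 0 < r t := fun t h => by linarith [hrdom t h]
  have hfac : ∀ t ∈ Set.Icc t0 t1, 0 < 1 - 2 * M / r t := fun t h => by
    rw [sub_pos, div_lt_one (hpos t h)]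
    exact hrdom t h
  have hderiv : ∀ t ∈ Set.Icc t0 t1,
      HasDerivAt (fun s => (1 - u s ^ 2) / (1 - 2 * M / r s)) 0 t := fun t h => by
    have hne := (hpos t h).ne'
    have hnum := ((hu t h).pow 2).const_sub 1
    have hden := ((hasDerivAt_const t (2 * M)).div (hr t h) hne).const_sub 1
    refine (hnum.div hden (hfac t h).ne').congr_deriv ?_
    rw [div_eq_zero_iff]
    left
    simp only [Pi.div_apply, Pi.pow_apply]
    field_simp
    ring
  have hmem0 : t0 ∈ Set.Icc t0 t1 := ⟨le_rfl, ht.le⟩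
  have hmem2 : t2 ∈ Set.Icc t0 t1 := Set.Ioo_subset_Icc_self ht2
  have hconst := constant_of_has_deriv_right_zero
    (fun t h => (hderiv t h).continuousAt.continuousWithinAt)
    (fun t h => (hderiv t (Set.Ico_subset_Icc_self h)).hasDerivWithinAt) t2 hmem2
  simp only [hturn, hinit_r, hinit_u] at hconst
  have hf0 := hfac t0 hmem0
  have hf2 := hfac t2 hmem2
  have hr0 := hpos t0 hmem0
  have hr2 := hpos t2 hmem2
  rw [hinit_r] at hf0 hr0
  rw [div_eq_div_iff hf2.ne' hf0.ne'] at hconst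
  have hden : 0 < 2 * M / r0 - u0 ^ 2 := by
    linarith [(Real.lt_sqrt hu0pos.le).mp hu0sub]
  rw [eq_div_iff hden.ne']
  have hcancel : r t2 * (2 * M / r t2) = 2 * M := mul_div_cancel₀ _ hr2.ne'
  linear_combination (-r t2) * hconst + (1 - u0 ^ 2) * hcancel
end

section
/- Let M > 0 and let (r, u) be a solution of the characteristic system on an interval I, with r(t) > 2M and u(t) ∈ (−1, 1) for all t ∈ I. Fix t1 ∈ I and set r1 = r(t1), u1 = u(t1). Then for every t ∈ I: (1/2)·[(1 − 2M/r(t))^{−1}·(u(t)² + 1) − 1] = (1/2)·[(u1² − 1)/(1 − 2M/r1) + 1] + 2M/(r(t) − 2M). In particular, along a characteristic the flux integrand decomposes into a constant term plus the potential term 2M/(r(t) − 2M). -/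
/-!
The quantity `E = (u² - 1) / (1 - 2M/r)` is a first integral of the characteristic system: with
`A = 1 - 2M/r` one has `A' = (2M/r²) A u` and `(u² - 1)' = (2M/r²) u (u² - 1)`, so numerator and
denominator have the same logarithmic derivative `(2M/r²) u` and `E' = 0`. Hence `E` is constant on
the interval. Since `(u² + 1)/A = E + 2/A` and `1/A = 1 + 2M/(r - 2M)`, the decomposition is then an
algebraic identity.
-/

open Set

lemma hasDerivAt_characteristic_energy {M t : ℝ} {r u : ℝ → ℝ} (hM : 0 < M)
    (hr : HasDerivAt r ((1 - 2 * M / r t) * u t) t)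
    (hu : HasDerivAt u (M / (r t) ^ 2 * ((u t) ^ 2 - 1)) t) (hrt : 2 * M < r t) :
    HasDerivAt (fun s => ((u s) ^ 2 - 1) / (1 - 2 * M / r s)) 0 t := by
  have hr0 : r t ≠ 0 := by linarith
  have hA : 1 - 2 * M / r t ≠ 0 := by
    have : 2 * M / r t < 1 := (div_lt_one (by linarith)).2 hrt
    linarith
  have hnum : HasDerivAt (fun s => (u s) ^ 2 - 1)
      (2 * u t * (M / (r t) ^ 2 * ((u t) ^ 2 - 1))) t := by
    simpa using (hu.fun_pow 2).sub_const 1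
  have hden : HasDerivAt (fun s => 1 - 2 * M / r s)
      (2 * M * ((1 - 2 * M / r t) * u t) / (r t) ^ 2) t := by
    refine (((hasDerivAt_const t (2 * M)).fun_div hr hr0).const_sub 1).congr_deriv ?_
    ring
  refine (hnum.fun_div hden hA).congr_deriv ?_
  rw [div_eq_zero_iff]
  left
  ring

/-- (Flux decomposition along a characteristic.) Let `M > 0` and let
`(r, u)` solve the characteristic system on an interval `I` with `r > 2M`, `u ∈ (-1, 1)`.
Fix `t1 ∈ I` and set `r1 = r(t1)`, `u1 = u(t1)`. Then for every `t ∈ I` the flux integrand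
decomposes as
`(1/2)[(1 - 2M/r)⁻¹ (u² + 1) - 1] = (1/2)[(u1² - 1)/(1 - 2M/r1) + 1] + 2M/(r - 2M)`. -/
theorem burgersSchwarzschild_flux_decomposition
    (M : ℝ) (hM : 0 < M) (I : Set ℝ) (hI : I.OrdConnected)
    (r u : ℝ → ℝ)
    (hr : ∀ t ∈ I, HasDerivAt r ((1 - 2 * M / r t) * u t) t)
    (hu : ∀ t ∈ I, HasDerivAt u (M / (r t) ^ 2 * ((u t) ^ 2 - 1)) t)
    (hrdom : ∀ t ∈ I, 2 * M < r t)
    (hudom : ∀ t ∈ I, u t ∈ Set.Ioo (-1 : ℝ) 1)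
    (t1 : ℝ) (ht1 : t1 ∈ I) :
    ∀ t ∈ I,
      (1 / 2) * ((1 - 2 * M / r t)⁻¹ * ((u t) ^ 2 + 1) - 1)
        = (1 / 2) * (((u t1) ^ 2 - 1) / (1 - 2 * M / r t1) + 1) + 2 * M / (r t - 2 * M) := by
  intro t ht
  have hE : ((u t) ^ 2 - 1) / (1 - 2 * M / r t) = ((u t1) ^ 2 - 1) / (1 - 2 * M / r t1) := by
    have h := hI.convex.norm_image_sub_le_of_norm_hasDerivWithin_le (C := 0)
      (fun s hs => (hasDerivAt_characteristic_energy hM (hr s hs) (hu s hs)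
        (hrdom s hs)).hasDerivWithinAt) (fun _ _ => by simp) ht1 ht
    rw [zero_mul, norm_le_zero_iff] at h
    exact sub_eq_zero.1 h
  have hrt := hrdom t ht
  have hr0 : r t ≠ 0 := by linarith
  have hd : r t - 2 * M ≠ 0 := by linarith
  have hA : 1 - 2 * M / r t = (r t - 2 * M) / r t := by
    field_simp
  rw [← hE, hA]
  field_simp
  ring
end

section
/- Let g : ℝ → [0, ∞) be locally integrable and suppose ∫_{−∞}^{t} g(r) dr = +∞ for some (equivalently, every) t ∈ ℝ. Then for every t ∈ ℝ and every x > 0, the function F(s) = x²/(2(t − s)) + (1/2)∫_s^t g(r) dr, defined for s ∈ (−∞, t), attains its infimum, and the set of its minimizers is a nonempty compact subset of (−∞, t). -/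
open Set Filter MeasureTheory

/-!
The function `F(s) = x²/(2(t - s)) + (1/2)∫_s^t g` is continuous on `(-∞, t)`. It is also coercive
there: the first term blows up as `s → t`, the second as `s → -∞`, and both are nonnegative. Hence
outside some interval `[a, b]` with `a ≤ t - 1 ≤ b < t` the values of `F` exceed `F (t - 1)`. The
minimum of `F` over `[a, b]` is therefore a global minimum, and the minimizers form a closed
subset of `[a, b]`. The topological half is `exists_min_and_isCompact_of_coercive`.
-/

/-- A function on `(-∞, t)` that is continuous on a compact interval `[a, b]` and larger outside
`[a, b]` than at some point `c` of it has a nonempty compact set of minimizers. -/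
lemma exists_min_and_isCompact_of_coercive {F : ℝ → ℝ} {t a b c : ℝ} (hbt : b < t)
    (hc : c ∈ Icc a b) (hF : ContinuousOn F (Icc a b))
    (hout : ∀ s ∈ Iio t, s ∉ Icc a b → F c < F s) :
    (∃ s ∈ Iio t, ∀ s' ∈ Iio t, F s ≤ F s') ∧
      IsCompact {s | s ∈ Iio t ∧ ∀ s' ∈ Iio t, F s ≤ F s'} := by
  have hsub : ∀ s ∈ Icc a b, s ∈ Iio t := fun s hs => lt_of_le_of_lt hs.2 hbt
  obtain ⟨m, hm, hmin⟩ := isCompact_Icc.exists_isMinOn ⟨c, hc⟩ hF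
  have hglob : ∀ s ∈ Iio t, F m ≤ F s := by
    intro s hs
    by_cases h : s ∈ Icc a b
    · exact hmin h
    · exact (hmin hc).trans (hout s hs h).le
  refine ⟨⟨m, hsub m hm, hglob⟩, ?_⟩
  have heq : {s | s ∈ Iio t ∧ ∀ s' ∈ Iio t, F s ≤ F s'} = Icc a b ∩ F ⁻¹' Iic (F m) := by
    ext s
    constructor
    · rintro ⟨hs, h⟩
      refine ⟨?_, h m (hsub m hm)⟩
      by_contra hn
      exact absurd (h c (hsub c hc)) (not_le.mpr (hout s hs hn))
    · rintro ⟨hs, h⟩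
      exact ⟨hsub s hs, fun s' hs' => le_trans h (hglob s' hs')⟩
  rw [heq]
  exact isCompact_Icc.of_isClosed_subset
    (hF.preimage_isClosed_of_isClosed isClosed_Icc isClosed_Iic) inter_subset_left

/-- Let `g : ℝ → [0, ∞)` be locally integrable with
`∫_{-∞}^t g = +∞` for every `t`. Then for every `t ∈ ℝ` and `x > 0`, the function
`F(s) = x²/(2(t - s)) + (1/2)∫_s^t g` on `(-∞, t)` attains its infimum, and the set of its
minimizers is a nonempty compact subset of `(-∞, t)`. -/
theorem burgers_boundary_variational_problem_minimizers
    (g : ℝ → ℝ) (hg : ∀ r, 0 ≤ g r) (hloc : LocallyIntegrable g)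
    (hdiv : ∀ t : ℝ, Tendsto (fun s => ∫ r in s..t, g r) atBot atTop)
    (t x : ℝ) (hx : 0 < x) :
    (∃ s ∈ Set.Iio t, ∀ s' ∈ Set.Iio t,
        x ^ 2 / (2 * (t - s)) + (1 / 2) * ∫ r in s..t, g r
          ≤ x ^ 2 / (2 * (t - s')) + (1 / 2) * ∫ r in s'..t, g r) ∧
    IsCompact {s | s ∈ Set.Iio t ∧ ∀ s' ∈ Set.Iio t,
        x ^ 2 / (2 * (t - s)) + (1 / 2) * ∫ r in s..t, g r
          ≤ x ^ 2 / (2 * (t - s')) + (1 / 2) * ∫ r in s'..t, g r} := by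
  have hint : ∀ a b : ℝ, IntervalIntegrable g volume a b := fun a b =>
    (hloc.integrableOn_isCompact isCompact_uIcc).intervalIntegrable
  have hI0 : ∀ s, s ≤ t → 0 ≤ ∫ r in s..t, g r := fun s hs =>
    intervalIntegral.integral_nonneg hs fun r _ => hg r
  have hIcont : Continuous fun s => ∫ r in s..t, g r := by
    have h := (intervalIntegral.continuous_primitive hint t).neg
    refine h.congr fun s => ?_
    exact (intervalIntegral.integral_symm t s).symm
  set F : ℝ → ℝ := fun s => x ^ 2 / (2 * (t - s)) + (1 / 2) * ∫ r in s..t, g r with hFdef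
  have hfrac : ∀ s, s < t → 0 < x ^ 2 / (2 * (t - s)) := fun s hs => by
    have : 0 < t - s := sub_pos.mpr hs
    positivity
  set C : ℝ := F (t - 1) with hC
  have hC0 : 0 ≤ C := by
    have h1 := hfrac (t - 1) (by linarith)
    have h2 := hI0 (t - 1) (by linarith)
    simp only [hC, hFdef]
    linarith
  obtain ⟨a₀, ha₀⟩ := eventually_atBot.mp ((hdiv t).eventually_ge_atTop (2 * C))
  -- For `t - s < δ` the first term of `F s` alone exceeds `C`; the `+ 1` keeps the
  -- denominator nonzero.
  set δ : ℝ := min 1 (x ^ 2 / (2 * (C + 1))) with hδ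
  have hδ0 : 0 < δ := lt_min one_pos (by positivity)
  have hδx : δ * (2 * (C + 1)) ≤ x ^ 2 :=
    (le_div_iff₀ (by positivity)).mp (min_le_right _ _)
  have hδ1 : δ ≤ 1 := min_le_left _ _
  refine exists_min_and_isCompact_of_coercive (F := F) (a := min a₀ (t - 1)) (b := t - δ)
    (c := t - 1) (by linarith) ⟨min_le_right _ _, by linarith⟩ ?_ ?_
  · refine ContinuousOn.add (ContinuousOn.div (by fun_prop) (by fun_prop) ?_)
      (hIcont.const_mul _).continuousOn
    intro s hs
    have : 0 < t - s := by linarith [hs.2]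
    positivity
  · intro s hs hn
    have hst : s < t := hs
    have h1 := hfrac s hst
    have h2 := hI0 s hst.le
    change C < x ^ 2 / (2 * (t - s)) + (1 / 2) * ∫ r in s..t, g r
    rcases lt_or_ge s (min a₀ (t - 1)) with h | h
    · have := ha₀ s (h.le.trans (min_le_left _ _))
      linarith
    · have hb : t - s < δ := by
        by_contra hcon
        exact hn ⟨h, by linarith⟩
      have : C < x ^ 2 / (2 * (t - s)) := by
        rw [lt_div_iff₀ (by linarith)]
        nlinarith
      linarith
end

section
/- Fix M > 0 and r_* > 2M. For t < 0 define P*(t) as the supremum, over all solutions (r, u) of the characteristic system defined on [t, 0] with r(s) > r_* and u(s) ∈ (−1, 1) for all s ∈ [t, 0], of the integral ∫_t^0 2M/(r(s) − 2M) ds (with P*(t) = 0 if no such solution exists). Then P*(t) is finite for every t < 0, and lim_{t→−∞} P*(t)/|t| = 0. -/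
/-!
Along a characteristic, `G = -u/r` is bounded by `1/r_*` in absolute value and is monotone:
`G' = (1 - 2M/r) u²/r² + M (1 - u²)/r³ ≥ c/r³` with `c = min ((1 - 2M/r_*) r_*) M > 0`.
Hence `∫ r⁻³` is bounded uniformly over all characteristics and all `t`. The potential satisfies
`2M/(r - 2M) ≤ L/r` with `L = 2M/(1 - 2M/r_*)`, and `L/r ≤ ε + (L³/ε²)/r³` for every `ε > 0`, so
the action on `[t, 0]` is at most `ε |t| + C_ε` (`exists_potentialAction_le`). This gives both
finiteness and sublinearity of the supremum.
-/

open Set Filter MeasureTheory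

/-- The set of potential-action values `∫_t^0 2M/(r(s) - 2M) ds` over solutions `(r, u)` of
the characteristic system on `[t, 0]` staying strictly above the boundary radius `r_*`. -/
def potentialActionValues (M rstar t : ℝ) : Set ℝ :=
  {y : ℝ | ∃ r u : ℝ → ℝ,
    (∀ s ∈ Set.Icc t 0, HasDerivAt r ((1 - 2 * M / r s) * u s) s) ∧
    (∀ s ∈ Set.Icc t 0, HasDerivAt u (M / (r s) ^ 2 * ((u s) ^ 2 - 1)) s) ∧
    (∀ s ∈ Set.Icc t 0, rstar < r s) ∧
    (∀ s ∈ Set.Icc t 0, u s ∈ Set.Ioo (-1 : ℝ) 1) ∧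
    y = ∫ s in t..0, 2 * M / (r s - 2 * M)}

/-- `P*(t)`: the supremum of the potential action over characteristics on `[t, 0]` that do
not touch the boundary `r_*` (equal to `0` if there is no such characteristic, by the
convention `sSup ∅ = 0` for real numbers). -/
noncomputable def Pstar (M rstar t : ℝ) : ℝ :=
  sSup (potentialActionValues M rstar t)

/-- Coercivity of the derivative of `-u/r` along characteristics. -/
lemma exists_lyapunov_coercive (M rstar : ℝ) (hM : 0 < M) (hrstar : 2 * M < rstar) :
    ∃ c > 0, ∀ r u : ℝ, rstar < r → u ∈ Set.Ioo (-1 : ℝ) 1 →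
      c / r ^ 3 ≤ -((M / r ^ 2 * (u ^ 2 - 1) * r - u * ((1 - 2 * M / r) * u)) / r ^ 2) := by
  refine ⟨min (rstar - 2 * M) M, lt_min (by linarith) hM, fun r u hr hu => ?_⟩
  have hr0 : 0 < r := by linarith
  have hu2 : 0 ≤ 1 - u ^ 2 := by nlinarith [hu.1, hu.2]
  have e : -((M / r ^ 2 * (u ^ 2 - 1) * r - u * ((1 - 2 * M / r) * u)) / r ^ 2)
      = ((r - 2 * M) * u ^ 2 + M * (1 - u ^ 2)) / r ^ 3 := by
    field_simp
    ring
  rw [e]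
  gcongr
  have h1 : min (rstar - 2 * M) M ≤ r - 2 * M := (min_le_left _ _).trans (by linarith)
  have h2 : min (rstar - 2 * M) M ≤ M := min_le_right _ _
  nlinarith [mul_le_mul_of_nonneg_right h1 (sq_nonneg u), mul_le_mul_of_nonneg_right h2 hu2]

/-- The potential is dominated by an arbitrarily small constant plus a multiple of `r⁻³`. -/
lemma exists_potential_le (M rstar : ℝ) (hM : 0 < M) (hrstar : 2 * M < rstar) (ε : ℝ)
    (hε : 0 < ε) :
    ∃ K > 0, ∀ r : ℝ, rstar < r → 2 * M / (r - 2 * M) ≤ ε + K / r ^ 3 := by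
  have hs0 : 0 < rstar := by linarith
  have hd : 0 < rstar - 2 * M := by linarith
  obtain ⟨L, hL⟩ : ∃ L, L = 2 * M * rstar / (rstar - 2 * M) := ⟨_, rfl⟩
  have hL0 : 0 < L := by rw [hL]; positivity
  refine ⟨L ^ 3 / ε ^ 2, by positivity, fun r hr => ?_⟩
  have hr0 : 0 < r := by linarith
  have h1 : 2 * M / (r - 2 * M) ≤ L / r := by
    rw [hL, div_div, div_le_div_iff₀ (by linarith) (by positivity)]
    nlinarith [mul_pos (mul_pos hM hM) (sub_pos.2 hr)]
  have e : L ^ 3 / ε ^ 2 / r ^ 3 = (L / r) ^ 3 / ε ^ 2 := by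
    field_simp
  rw [e]
  refine h1.trans ?_
  have hx : 0 < L / r := by positivity
  generalize L / r = x at hx
  rcases le_total x ε with h | h
  · have : 0 ≤ x ^ 3 / ε ^ 2 := by positivity
    linarith
  · have : x ≤ x ^ 3 / ε ^ 2 := by
      rw [le_div_iff₀ (by positivity), pow_succ' x 2]
      gcongr
    linarith

lemma exists_potentialAction_le (M rstar : ℝ) (hM : 0 < M) (hrstar : 2 * M < rstar) (ε : ℝ)
    (hε : 0 < ε) :
    ∃ C > 0, ∀ t < 0, ∀ y ∈ potentialActionValues M rstar t, y ≤ ε * |t| + C := by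
  obtain ⟨c, hc, hG⟩ := exists_lyapunov_coercive M rstar hM hrstar
  obtain ⟨K, hK, hV⟩ := exists_potential_le M rstar hM hrstar ε hε
  have hs0 : 0 < rstar := by linarith
  refine ⟨K / c * (2 / rstar), by positivity, ?_⟩
  rintro t ht y ⟨r, u, hr, hu, hrs, hu1, rfl⟩
  have hr0 : ∀ s ∈ Set.Icc t 0, r s ≠ 0 := fun s hs => by linarith [hrs s hs]
  have hcr : ContinuousOn r (Set.Icc t 0) := fun s hs => (hr s hs).continuousAt.continuousWithinAt
  have hH : ∀ s ∈ Set.Icc t 0, HasDerivAt (fun s => ε * s + K / c * (-(u s / r s)))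
      (ε * 1 + K / c * (-((M / r s ^ 2 * (u s ^ 2 - 1) * r s
        - u s * ((1 - 2 * M / r s) * u s)) / r s ^ 2))) s := fun s hs =>
    ((hasDerivAt_id s).const_mul ε).add
      ((((hu s hs).div (hr s hs) (hr0 s hs)).neg).const_mul (K / c))
  have hint : ContinuousOn (fun s => 2 * M / (r s - 2 * M)) (Set.Icc t 0) :=
    continuousOn_const.div (hcr.sub continuousOn_const) fun s hs => by linarith [hrs s hs]
  have key := intervalIntegral.integral_le_sub_of_hasDeriv_right_of_le ht.le
    (fun s hs => (hH s hs).continuousAt.continuousWithinAt)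
    (fun s hs => (hH s (Set.Ioo_subset_Icc_self hs)).hasDerivWithinAt)
    hint.integrableOn_Icc (fun s hs => ?_)
  · have hb : ∀ s ∈ Set.Icc t 0, |u s / r s| ≤ 1 / rstar := fun s hs => by
      have h1 := hrs s hs
      rw [abs_div, abs_of_pos (by linarith : 0 < r s)]
      have h2 : |u s| ≤ 1 := abs_le.2 ⟨(hu1 s hs).1.le, (hu1 s hs).2.le⟩
      gcongr
    have h0 := (abs_le.1 (hb 0 ⟨ht.le, le_rfl⟩)).1
    have h1 := (abs_le.1 (hb t ⟨le_rfl, ht.le⟩)).2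
    have h2 : u t / r t - u 0 / r 0 ≤ 2 / rstar := by
      rw [show 2 / rstar = 1 / rstar + 1 / rstar by ring]
      linarith
    have h3 := mul_le_mul_of_nonneg_left h2 (by positivity : 0 ≤ K / c)
    rw [abs_of_neg ht]
    linarith
  · have hs' := Set.Ioo_subset_Icc_self hs
    have h1 := hG (r s) (u s) (hrs s hs') (hu1 s hs')
    have h2 := mul_le_mul_of_nonneg_left h1 (by positivity : 0 ≤ K / c)
    have h3 : K / c * (c / r s ^ 3) = K / r s ^ 3 := by field_simp
    linarith [hV (r s) (hrs s hs')]

lemma potentialAction_nonneg (M rstar t : ℝ) (hM : 0 < M) (hrstar : 2 * M < rstar) (ht : t < 0)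
    (y : ℝ) (hy : y ∈ potentialActionValues M rstar t) : 0 ≤ y := by
  obtain ⟨r, u, -, -, hrs, -, rfl⟩ := hy
  refine intervalIntegral.integral_nonneg ht.le fun s hs => ?_
  have := hrs s hs
  exact div_nonneg (by linarith) (by linarith)

/-- For `M > 0` and `r_* > 2M`, the quantity `P*(t)` is finite for every
`t < 0` and is sublinear: `P*(t)/|t| → 0` as `t → -∞`. -/
theorem burgersSchwarzschild_potential_action_sublinear
    (M rstar : ℝ) (hM : 0 < M) (hrstar : 2 * M < rstar) :
    (∀ t < 0, BddAbove (potentialActionValues M rstar t)) ∧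
    Tendsto (fun t => Pstar M rstar t / |t|) atBot (nhds 0) := by
  refine ⟨fun t ht => ?_, ?_⟩
  · obtain ⟨C, -, hC⟩ := exists_potentialAction_le M rstar hM hrstar 1 one_pos
    exact ⟨_, fun y hy => hC t ht y hy⟩
  · rw [Metric.tendsto_nhds]
    intro ε hε
    obtain ⟨C, hC0, hC⟩ := exists_potentialAction_le M rstar hM hrstar (ε / 2) (half_pos hε)
    -- Below `-2C/ε` the constant `C` contributes less than `ε/2` to the average.
    filter_upwards [eventually_lt_atBot (-(2 * C / ε))] with t htC
    have hCε : 0 < 2 * C / ε := by positivity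
    have ht : t < 0 := by linarith
    have hP0 : 0 ≤ Pstar M rstar t :=
      Real.sSup_nonneg fun y hy => potentialAction_nonneg M rstar t hM hrstar ht y hy
    have hP : Pstar M rstar t ≤ ε / 2 * |t| + C :=
      Real.sSup_le (fun y hy => hC t ht y hy) (by positivity)
    have habs : 0 < |t| := abs_pos.2 ht.ne
    rw [Real.dist_eq, sub_zero, abs_of_nonneg (by positivity), div_lt_iff₀ habs]
    have h1 : 2 * C / ε < |t| := by rw [abs_of_neg ht]; linarith
    rw [div_lt_iff₀ hε] at h1
    linarith
end

section
/- Fix M > 0, r_* > 2M and r̄ > r_*. For t < 0 define K_*(t, r̄) as the infimum, over all solutions (r, u) of the characteristic system defined on [t, 0] with r(s) > r_* and u(s) ∈ (−1, 1) for all s ∈ [t, 0] and with r(0) = r̄, of the integral (1/2)∫_t^0 (u(s)² − 2M/r(s))/(1 − 2M/r(s)) ds. Then lim_{t→−∞} K_*(t, r̄)/|t| = 0. -/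
/-! The quantity `E = (1 - u²)/(1 - 2M/r)` is conserved along characteristics, because `1 - u²` and
`1 - 2M/r` have the same logarithmic derivative `2uM/r²`. The integrand of the kinetic action equals
`1 - E`, so the action of a characteristic on `[t, 0]` is `(1 - E)|t|/2`
(`exists_energy`), and the claim becomes: the supremum of admissible `E` tends to `1`.

* The value `E = 1` is always attained: the parabolic orbit falling in from infinity,
  `u = -√(2M/r)`, has `r ≥ rbar` for all `s ≤ 0` (`zero_mem_kineticActionValues`). Hence `K_* ≤ 0`.
* If `E ≥ 1 + ε`, the orbit is bound: `E(1 - 2M/r) = 1 - u² ≤ 1` forces `r ≤ R = 2M(1+ε)/ε`. Then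
  `u' = -(M/r²) E (1 - 2M/r) ≤ -c` with `c = (M/R²)(1 - 2M/r_*) > 0`, and since `u` stays in
  `(-1, 1)` this is possible only for `c|t| ≤ 2` (`time_bound`). Hence `K_* ≥ -(ε/2)|t|` as soon as
  `|t| > 2/c`. -/

open Set Filter MeasureTheory

/-- The set of kinetic-action values
`(1/2)∫_t^0 (u(s)² - 2M/r(s))/(1 - 2M/r(s)) ds` over solutions `(r, u)` of the
characteristic system on `[t, 0]` staying strictly above the boundary radius `r_*` and
terminating at radius `rbar` at time `0`. -/
def kineticActionValues (M rstar rbar t : ℝ) : Set ℝ :=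
  {y : ℝ | ∃ r u : ℝ → ℝ,
    (∀ s ∈ Set.Icc t 0, HasDerivAt r ((1 - 2 * M / r s) * u s) s) ∧
    (∀ s ∈ Set.Icc t 0, HasDerivAt u (M / (r s) ^ 2 * ((u s) ^ 2 - 1)) s) ∧
    (∀ s ∈ Set.Icc t 0, rstar < r s) ∧
    (∀ s ∈ Set.Icc t 0, u s ∈ Set.Ioo (-1 : ℝ) 1) ∧
    r 0 = rbar ∧
    y = (1 / 2) * ∫ s in t..0, ((u s) ^ 2 - 2 * M / r s) / (1 - 2 * M / r s)}

/-- `K_*(t, rbar)`: the infimum of the kinetic action over characteristics on `[t, 0]` that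
do not touch the boundary `r_*` and arrive at `rbar` at time `0`. -/
noncomputable def Kstar (M rstar rbar t : ℝ) : ℝ :=
  sInf (kineticActionValues M rstar rbar t)


/-- Every admissible characteristic has a conserved energy `E`, which determines the action. -/
lemma exists_energy {M rstar t : ℝ} {r u : ℝ → ℝ} (hM : 0 < M) (hrstar : 2 * M < rstar)
    (ht : t ≤ 0)
    (hr : ∀ s ∈ Set.Icc t 0, HasDerivAt r ((1 - 2 * M / r s) * u s) s)
    (hu : ∀ s ∈ Set.Icc t 0, HasDerivAt u (M / (r s) ^ 2 * ((u s) ^ 2 - 1)) s)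
    (hlow : ∀ s ∈ Set.Icc t 0, rstar < r s) :
    ∃ E : ℝ, (∀ s ∈ Set.Icc t 0, 1 - (u s) ^ 2 = E * (1 - 2 * M / r s)) ∧
      (1 / 2) * ∫ s in t..0, ((u s) ^ 2 - 2 * M / r s) / (1 - 2 * M / r s)
        = (1 - E) / 2 * |t| := by
  have hrpos : ∀ s ∈ Set.Icc t 0, 0 < r s := fun s hs => by linarith [hlow s hs]
  have hfac : ∀ s ∈ Set.Icc t 0, 0 < 1 - 2 * M / r s := fun s hs => by
    have := hrpos s hs
    rw [sub_pos, div_lt_one this]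
    linarith [hlow s hs]
  have hder : ∀ s ∈ Set.Icc t 0,
      HasDerivAt (fun s => (1 - (u s) ^ 2) / (1 - 2 * M / r s)) 0 s := by
    intro s hs
    have h1 := ((hu s hs).pow 2).const_sub 1
    have h2 := ((hasDerivAt_const s (2 * M)).div (hr s hs) (hrpos s hs).ne').const_sub 1
    have h3 := h1.div h2 (hfac s hs).ne'
    refine h3.congr_deriv ?_
    have := (hrpos s hs).ne'
    have hf := (hfac s hs).ne'
    rw [div_eq_zero_iff]
    left
    simp only [Pi.pow_apply, Pi.div_apply]
    field_simp
    ring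
  have hconst := constant_of_has_deriv_right_zero
    (fun s hs => (hder s hs).continuousAt.continuousWithinAt)
    (fun s hs => (hder s (Ico_subset_Icc_self hs)).hasDerivWithinAt)
  set E := (1 - (u t) ^ 2) / (1 - 2 * M / r t) with hE
  have key : ∀ s ∈ Set.Icc t 0, 1 - (u s) ^ 2 = E * (1 - 2 * M / r s) := fun s hs => by
    rw [← hconst s hs, div_mul_cancel₀ _ (hfac s hs).ne']
  refine ⟨E, key, ?_⟩
  have hint : ∫ s in t..0, ((u s) ^ 2 - 2 * M / r s) / (1 - 2 * M / r s)
      = ∫ _ in t..0, (1 - E) := by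
    refine intervalIntegral.integral_congr fun s hs => ?_
    rw [uIcc_of_le ht] at hs
    rw [div_eq_iff (hfac s hs).ne']
    linarith [key s hs]
  rw [hint, intervalIntegral.integral_const, abs_of_nonpos ht, smul_eq_mul]
  ring

/-- A characteristic of energy at least `1 + ε` avoids the boundary only for a bounded time. -/
lemma time_bound {M rstar t E ε : ℝ} {r u : ℝ → ℝ} (hM : 0 < M) (hrstar : 2 * M < rstar)
    (ht : t ≤ 0) (hε : 0 < ε) (hEε : 1 + ε ≤ E)
    (hu : ∀ s ∈ Set.Icc t 0, HasDerivAt u (M / (r s) ^ 2 * ((u s) ^ 2 - 1)) s)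
    (hlow : ∀ s ∈ Set.Icc t 0, rstar < r s)
    (hu1 : ∀ s ∈ Set.Icc t 0, u s ∈ Set.Ioo (-1 : ℝ) 1)
    (key : ∀ s ∈ Set.Icc t 0, 1 - (u s) ^ 2 = E * (1 - 2 * M / r s)) :
    M / (2 * M * (1 + ε) / ε) ^ 2 * (1 - 2 * M / rstar) * (-t) ≤ 2 := by
  set R := 2 * M * (1 + ε) / ε with hR
  set c := M / R ^ 2 * (1 - 2 * M / rstar) with hc
  have hrs : 0 < rstar := by linarith
  have hfs : 0 < 1 - 2 * M / rstar := by
    rw [sub_pos, div_lt_one hrs]; exact hrstar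
  have hRpos : 0 < R := by positivity
  have hder : ∀ s ∈ Set.Icc t 0, M / (r s) ^ 2 * ((u s) ^ 2 - 1) ≤ -c := by
    intro s hs
    have hrp : 0 < r s := by linarith [hlow s hs]
    have hf : 1 - 2 * M / rstar ≤ 1 - 2 * M / r s := by
      have := (hlow s hs).le
      gcongr
    have hk := key s hs
    have hle : (1 + ε) * (1 - 2 * M / r s) ≤ 1 := by
      have h1 := mul_le_mul_of_nonneg_right hEε (hfs.le.trans hf)
      nlinarith [sq_nonneg (u s)]
    have hrR : r s ≤ R := by
      rw [hR, le_div_iff₀ hε]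
      have h2 := mul_le_mul_of_nonneg_right hle hrp.le
      have h3 : 2 * M / r s * r s = 2 * M := div_mul_cancel₀ _ hrp.ne'
      have h4 : (1 + ε) * (1 - 2 * M / r s) * r s = (1 + ε) * (r s - 2 * M) := by
        linear_combination -(1 + ε) * h3
      rw [h4] at h2
      nlinarith
    have h5 : M / R ^ 2 ≤ M / (r s) ^ 2 := by gcongr
    have h6 : 1 - 2 * M / rstar ≤ 1 - (u s) ^ 2 := by
      rw [hk]
      nlinarith [hfs.le.trans hf]
    have h7 : c ≤ M / (r s) ^ 2 * (1 - (u s) ^ 2) :=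
      mul_le_mul h5 h6 hfs.le (by positivity)
    linarith
  have hanti : AntitoneOn (fun s => u s + c * s) (Set.Icc t 0) := by
    have hd : ∀ s ∈ Set.Icc t 0, HasDerivAt (fun s => u s + c * s)
        (M / (r s) ^ 2 * ((u s) ^ 2 - 1) + c * 1) s := fun s hs =>
      (hu s hs).add ((hasDerivAt_id s).const_mul c)
    refine antitoneOn_of_deriv_nonpos (convex_Icc t 0)
      (fun s hs => (hd s hs).continuousAt.continuousWithinAt)
      (fun s hs => (hd s (interior_subset hs)).differentiableAt.differentiableWithinAt)
      (fun s hs => ?_)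
    rw [(hd s (interior_subset hs)).deriv]
    linarith [hder s (interior_subset hs)]
  have h0 := hanti (left_mem_Icc.2 ht) (right_mem_Icc.2 ht) ht
  have h1 := (hu1 t (left_mem_Icc.2 ht)).2
  have h2 := (hu1 0 (right_mem_Icc.2 ht)).1
  simp only [mul_zero, add_zero] at h0
  linarith

/-- The autonomous equation `x' = 1 / g x`, with `g` continuous and bounded below by a positive
constant, has a global monotone solution: the inverse of `∫ g`. -/
lemma exists_global_solution_s13 {g : ℝ → ℝ} (hg : Continuous g) {c : ℝ} (hc : 0 < c)
    (hgc : ∀ x, c ≤ g x) (x₀ : ℝ) :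
    ∃ x : ℝ → ℝ, x 0 = x₀ ∧ Monotone x ∧ ∀ s, HasDerivAt x (g (x s))⁻¹ s := by
  let G : ℝ → ℝ := fun x => ∫ y in x₀..x, g y
  have hG : ∀ x, HasDerivAt G (g x) x := fun x =>
    intervalIntegral.integral_hasDerivAt_right (hg.intervalIntegrable _ _)
      (hg.stronglyMeasurableAtFilter _ _) hg.continuousAt
  have hGpos : ∀ x, 0 < deriv G x := fun x => by
    rw [(hG x).deriv]; exact hc.trans_le (hgc x)
  have hmono : StrictMono G := strictMono_of_deriv_pos hGpos
  have hcont : Continuous G := continuous_iff_continuousAt.2 fun x => (hG x).continuousAt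
  have hG0 : G x₀ = 0 := intervalIntegral.integral_same
  -- `G x - c x` is monotone, so `G` dominates a line of slope `c` on either side of `x₀`.
  have hlin : Monotone (fun x => G x - c * x) := by
    have hd : ∀ x, HasDerivAt (fun x => G x - c * x) (g x - c * 1) x := fun x =>
      (hG x).sub ((hasDerivAt_id x).const_mul c)
    refine monotone_of_deriv_nonneg (fun x => (hd x).differentiableAt) fun x => ?_
    rw [(hd x).deriv]
    linarith [hgc x]
  have hsurj : Function.Surjective G := by
    refine hcont.surjective ?_ ?_
    · refine tendsto_atTop_mono' _ ?_
        (tendsto_atTop_add_const_right atTop (-(c * x₀)) (tendsto_id.const_mul_atTop hc))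
      filter_upwards [eventually_ge_atTop x₀] with x hx
      have := hlin hx
      simp only [hG0, id] at this ⊢
      linarith
    · refine tendsto_atBot_mono' _ ?_
        (tendsto_atBot_add_const_right atBot (-(c * x₀)) (tendsto_id.const_mul_atBot hc))
      filter_upwards [eventually_le_atBot x₀] with x hx
      have := hlin hx
      simp only [hG0, id] at this ⊢
      linarith
  let e := hmono.orderIsoOfSurjective G hsurj
  have he : ∀ s, G (e.symm s) = s := fun s => e.apply_symm_apply s
  refine ⟨e.symm, ?_, e.symm.monotone, fun s => ?_⟩
  · apply hmono.injective
    rw [he, hG0]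
  · exact HasDerivAt.of_local_left_inverse e.symm.continuous.continuousAt (hG _)
      (hc.trans_le (hgc _)).ne' (Eventually.of_forall he)

/-- The parabolic orbit `u = -√(2M/r)` is admissible on every `[t, 0]` and has zero action. In terms
of `y = √(r/2M) > 1` it solves `y' = -(y² - 1)/(4M y⁴)`; the substitution `y = 1 + exp (-x)` turns
this into an equation for `x` on the whole line. -/
lemma zero_mem_kineticActionValues {M rstar rbar t : ℝ} (hM : 0 < M) (hrstar : 2 * M < rstar)
    (hrbar : rstar < rbar) : 0 ∈ kineticActionValues M rstar rbar t := by
  set y₀ := √(rbar / (2 * M)) with hy₀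
  have hy₀1 : 1 < y₀ := by
    rw [hy₀, Real.lt_sqrt zero_le_one, one_pow, one_lt_div (by positivity)]
    linarith
  have hy₀sq : y₀ ^ 2 = rbar / (2 * M) :=
    Real.sq_sqrt (div_nonneg (by linarith) (by linarith))
  let Y : ℝ → ℝ := fun x => 1 + Real.exp (-x)
  have hY1 : ∀ x, 1 < Y x := fun x => by
    have := Real.exp_pos (-x)
    simp only [Y]; linarith
  have hYc : Continuous Y := by fun_prop
  obtain ⟨x, hx0, hxm, hx⟩ := exists_global_solution_s13
    (g := fun x => 4 * M * (Y x) ^ 4 / (Y x + 1))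
    (Continuous.div (by fun_prop) (by fun_prop) fun x => by linarith [hY1 x])
    (c := 2 * M) (by positivity)
    (fun x => by
      have h := hY1 x
      rw [le_div_iff₀ (by linarith)]
      have : Y x ≤ Y x ^ 4 := le_self_pow₀ h.le (by norm_num)
      nlinarith)
    (-Real.log (y₀ - 1))
  let y : ℝ → ℝ := fun s => Y (x s)
  have hy1 : ∀ s, 1 < y s := fun s => hY1 _
  have hy0 : y 0 = y₀ := by
    simp only [y, Y, hx0, neg_neg]
    rw [Real.exp_log (by linarith)]
    ring
  have hyanti : ∀ s ≤ 0, y₀ ≤ y s := fun s hs => by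
    rw [← hy0]
    have := hxm hs
    simp only [y, Y]
    gcongr
  have hyd : ∀ s, HasDerivAt y (-((y s) ^ 2 - 1) / (4 * M * (y s) ^ 4)) s := by
    intro s
    have h := ((hx s).neg.exp).const_add 1
    refine h.congr_deriv ?_
    have h1 := hy1 s
    have h2 : Real.exp ((-x) s) = y s - 1 := by simp [y, Y]
    rw [h2]
    change (y s - 1) * -(4 * M * (y s) ^ 4 / (y s + 1))⁻¹ = _
    have h3 : y s ≠ 0 := by linarith
    have h4 : y s + 1 ≠ 0 := by linarith
    field_simp
    ring
  have hr : ∀ s, HasDerivAt (fun s => 2 * M * (y s) ^ 2)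
      ((1 - 2 * M / (2 * M * (y s) ^ 2)) * (-(y s)⁻¹)) s := by
    intro s
    refine (((hyd s).pow 2).const_mul (2 * M)).congr_deriv ?_
    have h3 : y s ≠ 0 := by linarith [hy1 s]
    field_simp
    ring
  have hu : ∀ s, HasDerivAt (fun s => -(y s)⁻¹)
      (M / (2 * M * (y s) ^ 2) ^ 2 * ((-(y s)⁻¹) ^ 2 - 1)) s := by
    intro s
    have h3 : y s ≠ 0 := by linarith [hy1 s]
    refine ((hyd s).inv h3).neg.congr_deriv ?_
    field_simp
    ring
  refine ⟨fun s => 2 * M * (y s) ^ 2, fun s => -(y s)⁻¹, fun s _ => hr s, fun s _ => hu s,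
    fun s hs => ?_, fun s _ => ?_, ?_, ?_⟩
  · have h1 : y₀ ^ 2 ≤ (y s) ^ 2 := by
      have := hyanti s hs.2
      gcongr
    rw [hy₀sq, div_le_iff₀ (by positivity)] at h1
    simp only
    linarith
  · have h1 : (y s)⁻¹ < 1 := inv_lt_one_of_one_lt₀ (hy1 s)
    have h2 : 0 < (y s)⁻¹ := inv_pos.2 (by linarith [hy1 s])
    constructor <;> simp only <;> linarith
  · simp only [hy0, hy₀sq]
    field_simp
  · have : ∀ s, ((-(y s)⁻¹) ^ 2 - 2 * M / (2 * M * (y s) ^ 2)) /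
        (1 - 2 * M / (2 * M * (y s) ^ 2)) = 0 := fun s => by
      have h3 : y s ≠ 0 := by linarith [hy1 s]
      rw [div_eq_zero_iff]
      left
      field_simp
      ring
    simp only [this, intervalIntegral.integral_zero, mul_zero]

/-- For `M > 0`, `r_* > 2M` and `rbar > r_*`, the kinetic action of
boundary-avoiding characteristics is sublinear: `K_*(t, rbar)/|t| → 0` as `t → -∞`. -/
theorem burgersSchwarzschild_kinetic_action_sublinear
    (M rstar rbar : ℝ) (hM : 0 < M) (hrstar : 2 * M < rstar) (hrbar : rstar < rbar) :
    Tendsto (fun t => Kstar M rstar rbar t / |t|) atBot (nhds 0) := by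
  rw [Metric.tendsto_nhds]
  intro ε hε
  set c := M / (2 * M * (1 + ε) / ε) ^ 2 * (1 - 2 * M / rstar) with hc
  have hcpos : 0 < c := by
    have hfs : 0 < 1 - 2 * M / rstar := by
      rw [sub_pos, div_lt_one (by linarith)]; exact hrstar
    positivity
  filter_upwards [eventually_lt_atBot (-(2 / c)), eventually_lt_atBot 0] with t htc ht
  have hmem := zero_mem_kineticActionValues (t := t) hM hrstar hrbar
  have hlb : -(ε / 2) * |t| ∈ lowerBounds (kineticActionValues M rstar rbar t) := by
    rintro _ ⟨r, u, hr, hu, hlow, hu1, -, rfl⟩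
    obtain ⟨E, key, hact⟩ := exists_energy hM hrstar ht.le hr hu hlow
    rw [hact]
    have hE : E ≤ 1 + ε := by
      by_contra! hlt
      have h := time_bound hM hrstar ht.le hε hlt.le hu hlow hu1 key
      rw [← hc] at h
      have h2 : 2 / c < -t := by linarith
      rw [div_lt_iff₀ hcpos] at h2
      linarith
    exact mul_le_mul_of_nonneg_right (by linarith) (abs_nonneg t)
  have h1 : -(ε / 2) * |t| ≤ Kstar M rstar rbar t := le_csInf ⟨0, hmem⟩ hlb
  have h2 : Kstar M rstar rbar t ≤ 0 := csInf_le ⟨_, hlb⟩ hmem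
  have htpos : 0 < |t| := abs_pos.2 ht.ne
  rw [Real.dist_eq, sub_zero, abs_lt]
  constructor
  · rw [lt_div_iff₀ htpos]
    nlinarith
  · exact (div_nonpos_of_nonpos_of_nonneg h2 htpos.le).trans_lt hε
end

section
/- Fix M > 0 and r_* > 2M. For every c0 ∈ (0, 1) and every ε > 0 there exists R > r_* such that the following holds: for every r̄ > R, every c ∈ [c0, 1], every T < 0, and every solution (r, u) of the characteristic system on [T, 0] with conserved quantity (u(s)² − 2M/r(s))/(1 − 2M/r(s)) = c, with u(s) > 0 for all s ∈ [T, 0], r(T) = r_*, r(s) > r_* for s ∈ (T, 0], and r(0) = r̄, one has |T/r̄ + 1/√c| < ε. In other words, the departure time from the boundary r_* of the forward characteristic with conserved quantity c arriving at radius r̄ at time 0 is asymptotically −r̄/√c, uniformly over c ∈ [c0, 1]. -/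
/-!
Write `k = √c`. Along a characteristic the conserved quantity gives `u² = c + (1 - c) 2M / r`, hence
`k ≤ u ≤ k + M / (k r)`. The tortoise coordinate `r + 2M log (r - 2M)` has time derivative exactly
`u ≥ k`, while `r - (M / c) log r` has time derivative at most `k`. Integrating both bounds over
`[T, 0]` gives
`r̄ - r_* - (M / c) log (r̄ / r_*) ≤ k |T| ≤ r̄ - r_* + 2M log ((r̄ - 2M) / (r_* - 2M))`,
and since `log r̄ = o(r̄)` and `c ≥ c0`, dividing by `k r̄` yields the uniform asymptotics.
-/

open Set Filter

lemma eventually_log_affine_lt (a b : ℝ) {δ : ℝ} (hδ : 0 < δ) :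
    ∀ᶠ x in atTop, a + b * Real.log x < δ * x := by
  have h1 : (fun x : ℝ => a + b * Real.log x) =o[atTop] (fun x : ℝ => x) :=
    (Asymptotics.isLittleO_const_id_atTop a).add
      (Real.isLittleO_log_id_atTop.const_mul_left b)
  filter_upwards [h1.bound (half_pos hδ), eventually_gt_atTop 0] with x hx hx0
  rw [Real.norm_eq_abs, Real.norm_eq_abs, abs_of_pos hx0] at hx
  have := le_abs_self (a + b * Real.log x)
  nlinarith [mul_pos hδ hx0]

lemma sub_le_sub_of_hasDerivAt_le {f f' g g' : ℝ → ℝ} {a b : ℝ} (hab : a ≤ b)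
    (hf : ∀ s ∈ Icc a b, HasDerivAt f (f' s) s) (hg : ∀ s ∈ Icc a b, HasDerivAt g (g' s) s)
    (h : ∀ s ∈ Icc a b, f' s ≤ g' s) : f b - f a ≤ g b - g a := by
  have hd : ∀ s ∈ Icc a b, HasDerivAt (fun s => g s - f s) (g' s - f' s) s :=
    fun s hs => (hg s hs).sub (hf s hs)
  have hm : MonotoneOn (fun s => g s - f s) (Icc a b) := by
    refine monotoneOn_of_hasDerivWithinAt_nonneg (f' := fun s => g' s - f' s) (convex_Icc a b)
      (fun s hs => (hd s hs).continuousAt.continuousWithinAt)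
      (fun s hs => (hd s (interior_subset hs)).hasDerivWithinAt) ?_
    intro s hs
    exact sub_nonneg.2 (h s (interior_subset hs))
  have := hm (left_mem_Icc.2 hab) (right_mem_Icc.2 hab) hab
  simp only at this
  linarith

/-- The conserved quantity pins the velocity: `√c ≤ u ≤ √c + M / (√c r)`. -/
lemma velocity_bounds {M c r u : ℝ} (hM : 0 < M) (hc : 0 < c) (hc1 : c ≤ 1) (hr : 2 * M < r)
    (hu : 0 < u) (h : (u ^ 2 - 2 * M / r) / (1 - 2 * M / r) = c) :
    √c ≤ u ∧ u ≤ √c + M / (√c * r) := by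
  have hr0 : 0 < r := by linarith
  have hk : 0 < √c := Real.sqrt_pos.2 hc
  have hk2 : √c ^ 2 = c := Real.sq_sqrt hc.le
  have hq : 0 < 2 * M / r := by positivity
  have hq1 : 0 < 1 - 2 * M / r := by rw [sub_pos, div_lt_one hr0]; exact hr
  rw [div_eq_iff hq1.ne'] at h
  constructor
  · refine Real.sqrt_le_iff.2 ⟨hu.le, ?_⟩
    nlinarith
  · refine abs_le_of_sq_le_sq' ?_ (by positivity) |>.2
    have e : (√c + M / (√c * r)) ^ 2 = √c ^ 2 + 2 * M / r + (M / (√c * r)) ^ 2 := by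
      field_simp
      ring
    rw [e, hk2]
    nlinarith [sq_nonneg (M / (√c * r))]

/-- (Asymptotically linear departure time; Lemma on `t_+(c, r)`.)
Fix `M > 0`, `r_* > 2M`. For every `c0 ∈ (0, 1)` and `ε > 0` there is `R > r_*` such that
for every `r̄ > R`, every `c ∈ [c0, 1]`, every `T < 0`, and every forward characteristic
`(r, u)` on `[T, 0]` with conserved quantity `c`, positive velocity, departing from the
boundary `r(T) = r_*`, staying above `r_*` afterwards, and arriving at `r(0) = r̄`, one has
`|T/r̄ + 1/√c| < ε`. -/
theorem burgersSchwarzschild_departure_time_asymptotics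
    (M rstar : ℝ) (hM : 0 < M) (hrstar : 2 * M < rstar) :
    ∀ c0 ∈ Set.Ioo (0 : ℝ) 1, ∀ ε > (0 : ℝ), ∃ R > rstar,
      ∀ rbar > R, ∀ c ∈ Set.Icc c0 1, ∀ T < (0 : ℝ), ∀ r u : ℝ → ℝ,
        (∀ s ∈ Set.Icc T 0, HasDerivAt r ((1 - 2 * M / r s) * u s) s) →
        (∀ s ∈ Set.Icc T 0, HasDerivAt u (M / (r s) ^ 2 * ((u s) ^ 2 - 1)) s) →
        (∀ s ∈ Set.Icc T 0, ((u s) ^ 2 - 2 * M / r s) / (1 - 2 * M / r s) = c) →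
        (∀ s ∈ Set.Icc T 0, 0 < u s) →
        (∀ s ∈ Set.Icc T 0, u s < 1) →
        r T = rstar →
        (∀ s ∈ Set.Ioc T 0, rstar < r s) →
        r 0 = rbar →
        |T / rbar + 1 / Real.sqrt c| < ε := by
  intro c0 hc0 ε hε
  have hk0 : 0 < √c0 := Real.sqrt_pos.2 hc0.1
  have hδ : 0 < ε * √c0 := mul_pos hε hk0
  obtain ⟨R0, hR0⟩ := eventually_atTop.1
    ((eventually_log_affine_lt (-(2 * M) * Real.log (rstar - 2 * M)) (2 * M) hδ).and
      (eventually_log_affine_lt (rstar - M / c0 * Real.log rstar) (M / c0) hδ))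
  refine ⟨max R0 (rstar + 1), lt_max_of_lt_right (by linarith), ?_⟩
  intro rbar hrbar c hc T hT r u hr _ hcons hu _ hrT hrs hr0
  obtain ⟨hup, hlow⟩ := hR0 rbar (le_of_lt (lt_of_le_of_lt (le_max_left _ _) hrbar))
  have hrb : rstar < rbar := by linarith [lt_of_le_of_lt (le_max_right R0 (rstar + 1)) hrbar]
  have hcpos : 0 < c := lt_of_lt_of_le hc0.1 hc.1
  have hk : 0 < √c := Real.sqrt_pos.2 hcpos
  have hk2 : √c * √c = c := Real.mul_self_sqrt hcpos.le
  have hkk : √c0 ≤ √c := Real.sqrt_le_sqrt hc.1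
  have hge : ∀ s ∈ Icc T 0, 2 * M < r s := by
    intro s hs
    rcases hs.1.eq_or_lt with h | h
    · rw [← h, hrT]; exact hrstar
    · linarith [hrs s ⟨h, hs.2⟩]
  have hlin : ∀ s ∈ Icc T 0, HasDerivAt (fun s => √c * s) (√c) s := fun s _ => by
    simpa using (hasDerivAt_id s).const_mul (√c)
  -- The tortoise coordinate advances at speed `u ≥ √c`.
  have hA := sub_le_sub_of_hasDerivAt_le (g := fun s => r s + 2 * M * Real.log (r s - 2 * M))
    (g' := u) hT.le hlin (by
      intro s hs
      have h1 := hge s hs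
      have h2 : r s - 2 * M ≠ 0 := by linarith
      have h3 : r s ≠ 0 := by linarith
      refine ((hr s hs).add
        ((((hr s hs).sub_const (2 * M)).log h2).const_mul (2 * M))).congr_deriv ?_
      field_simp
      ring) (fun s hs => (velocity_bounds hM hcpos hc.2 (hge s hs) (hu s hs) (hcons s hs)).1)
  -- The logarithmic correction `(M / c) log r` absorbs the velocity excess `M / (√c r)`.
  have hB := sub_le_sub_of_hasDerivAt_le (f := fun s => r s - M / c * Real.log (r s))
    hT.le (fun s hs => (hr s hs).sub (((hr s hs).log (by linarith [hge s hs])).const_mul (M / c)))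
    hlin (by
      intro s hs
      have h1 := hge s hs
      have h3 : 0 < r s := by linarith
      have hv := (velocity_bounds hM hcpos hc.2 h1 (hu s hs) (hcons s hs)).2
      have hq : 0 < 2 * M / r s := by positivity
      have hq1 : 0 < 1 - 2 * M / r s := by rw [sub_pos, div_lt_one h3]; exact h1
      have hd0 : 0 < (1 - 2 * M / r s) * u s := mul_pos hq1 (hu s hs)
      have hd1 : (1 - 2 * M / r s) * u s ≤ u s := by nlinarith [hu s hs]
      set x := M / (c * r s) with hx
      have hx0 : 0 < x := by positivity
      have e1 : √c + M / (√c * r s) = √c * (1 + x) := by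
        have : M / (√c * r s) = √c * x := by
          rw [hx, div_eq_iff (by positivity)]
          have : √c * (M / (c * r s)) * (√c * r s) = (√c * √c) * (M / (c * r s)) * r s := by ring
          rw [this, hk2]
          field_simp
        rw [this]; ring
      rw [e1] at hv
      generalize (1 - 2 * M / r s) * u s = d at *
      have e2 : d - M / c * (d / r s) = d * (1 - x) := by
        rw [hx]; field_simp
      rw [e2]
      rcases le_total x 1 with h | h
      · calc d * (1 - x) ≤ √c * (1 + x) * (1 - x) :=
              mul_le_mul_of_nonneg_right (hd1.trans hv) (by linarith)
          _ ≤ √c := by nlinarith [mul_pos hk (mul_pos hx0 hx0)]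
      · nlinarith [mul_nonneg hd0.le (sub_nonneg.2 h)])
  simp only [hrT, hr0] at hA hB
  have hrs0 : 0 < rstar := by linarith
  have hrb0 : 0 < rbar := by linarith
  have hlog1 : Real.log (rbar - 2 * M) ≤ Real.log rbar :=
    Real.log_le_log (by linarith) (by linarith)
  have hlog2 : Real.log rstar ≤ Real.log rbar := Real.log_le_log hrs0 hrb.le
  have hMc : M / c ≤ M / c0 := div_le_div_of_nonneg_left hM.le hc0.1 hc.1
  have hmul1 := mul_le_mul_of_nonneg_left hlog1 (by linarith : 0 ≤ 2 * M)
  have hmul2 := mul_le_mul_of_nonneg_right hMc (sub_nonneg.2 hlog2)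
  have hmul3 : ε * √c0 * rbar ≤ ε * √c * rbar := by gcongr
  have e : T / rbar + 1 / √c = (√c * T + rbar) / (√c * rbar) := by
    field_simp
  rw [e, abs_div, abs_of_pos (mul_pos hk hrb0), div_lt_iff₀ (mul_pos hk hrb0), abs_lt]
  constructor <;> linarith
end

section
/- Fix M > 0 and t0 ∈ ℝ. Let u0 : (2M, ∞) → (−1, 1) be measurable and such that r ↦ (1 − 2M/r)^{−2}·u0(r) is locally integrable on (2M, ∞). Then there exists a function u : [t0, ∞) × (2M, ∞) → (−1, 1) such that: (i) for every t > t0 the function r ↦ u(t, r) has locally bounded variation on (2M, ∞); and (ii) u is a weak solution of the Burgers–Schwarzschild equation in conservation form with initial datum u0 and no boundary condition at the horizon, i.e., for every smooth compactly supported test function ϕ on ℝ × (2M, ∞): ∫_{t0}^{∞} ∫_{2M}^{∞} [ (1 − 2M/r)^{−2}·u(t,r)·∂_t ϕ(t,r) + ( (1/2)(1 − 2M/r)^{−1}(u(t,r)² − 1) + 1/2 )·∂_r ϕ(t,r) ] dr dt + ∫_{2M}^{∞} (1 − 2M/r)^{−2}·u0(r)·ϕ(t0, r) dr = 0. -/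
open Set MeasureTheory

/-!
Write `f = 1 - 2M/r` and `s = t - t₀`. The conservation law says that `f⁻² u` and
`(1 - u²)/(2f) - 1/2` are the `r`- and `t`-derivatives of one potential, so it suffices to find a
locally Lipschitz `U` on `s ≥ 0` such that, almost everywhere,
`∂_r U = f⁻² u` and `∂_s U = (1 - u²)/(2f)` for some `u` with `|u| < 1`, and such that `U(0, ·)`
is the primitive `w` of `f⁻² u₀` (`pot`). The weak formulation then follows by differentiating
`t ↦ ∫ (U - s/2) ∂_r ϕ dr` (`weak_of_potential`). As no entropy condition is asked for, there is
much freedom in the choice of `U`, and it is glued from static solutions only.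

The static solutions `u = σ √(1 - κ f)`, with `σ = ±1` and `0 < κ < 1`, take values in `(-1, 1)`
and have the elementary potentials `c + σ S_κ(r) + κ s/2` (`elem`), where `S_κ' = f⁻² √(1 - κ f)`
(`prim`). Suppose that on each compact subset of `s > 0` the continuous function `U` is a
selection from finitely many elementary potentials. Two distinct ones agree for at most one `r`
at each time (`elem_cross`), so at each time, off a locally finite set of `r`, the function `U`
is a single elementary potential nearby (`finite_not_good`). Hence `u := f² ∂_r U` solves the two
equations there, takes values in `(-1, 1)`, and is of locally bounded variation, its derivative
being bounded between the exceptional points.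

It remains to find such a `U` with `U(0, ·) = w` (`exists_potential`). It is the supremum of
levels `U_k`, `ε_k → 0`, on intervals `[a_k, b_k]` exhausting `(2M, ∞)`: each level satisfies
`U_k ≤ w + ε_k s`, and `U_k ≥ w + η_k` on `[a_k, b_k]` for `s ≥ ε_k`, with some `η_k > 0`. On a
compact set of positive times one fixed level beats all sufficiently late ones, so that the
supremum is a finite maximum there; and the supremum tends to `w` as `s → 0`.

A level (`exists_level`) is a finite infimum of cones
`w(y) - c + |S_κ(r) - S_κ(y)| + κ s/2` with `c` of order `κ ε` and `y` in a fine net. It rises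
above `w` by time `ε` because `w(r) - w(y) ≤ |S_κ(r) - S_κ(y)| + o(κ)` on compact sets
(`exists_small_defect`, by dominated convergence from `|u₀| < 1`). Far away, where this estimate
is not available, the level is kept below `w` by two barriers (`exists_barrier`), which descend
to the left and to the right with slopes close to the extreme slopes `±f⁻²`; these decrease
faster than `w`, again because `|u₀| < 1`.
-/

namespace BurgersSchwarzschild

open Filter Topology

/-! ### Static slopes and the initial potential -/

/-- The Schwarzschild factor `f(r) = 1 - 2M/r`. -/
noncomputable def lapse (M r : ℝ) : ℝ := 1 - 2 * M / r

/-- The `r`-derivative `f⁻² √(1 - κ f)` of the potential of the static solution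
`u = √(1 - κ f)`. -/
noncomputable def slope (M κ r : ℝ) : ℝ := ((lapse M r) ^ 2)⁻¹ * √(1 - κ * lapse M r)

/-- The primitive `S_κ` of `slope M κ`, normalised at `r = 3M`. -/
noncomputable def prim (M κ r : ℝ) : ℝ := ∫ x in (3 * M)..r, slope M κ x

/-- The initial potential: the primitive of `f⁻² u₀`, normalised at `r = 3M`. -/
noncomputable def pot (M : ℝ) (u0 : ℝ → ℝ) (r : ℝ) : ℝ :=
  ∫ x in (3 * M)..r, ((lapse M x) ^ 2)⁻¹ * u0 x

lemma lapse_pos {M r : ℝ} (hM : 0 < M) (hr : 2 * M < r) : 0 < lapse M r := by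
  have : 2 * M / r < 1 := (div_lt_one (by linarith)).2 hr
  unfold lapse; linarith

lemma lapse_lt_one {M r : ℝ} (hM : 0 < M) (hr : 2 * M < r) : lapse M r < 1 := by
  have : 0 < 2 * M / r := div_pos (by linarith) (by linarith)
  unfold lapse; linarith

lemma hasDerivAt_lapse {M r : ℝ} (hM : 0 < M) (hr : 2 * M < r) :
    HasDerivAt (lapse M) (2 * M / r ^ 2) r := by
  have h0 : r ≠ 0 := by linarith
  have h : HasDerivAt (lapse M) (-(2 * M * -(r ^ 2)⁻¹)) r :=
    ((hasDerivAt_inv h0).const_mul (2 * M)).const_sub 1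
  exact h.congr_deriv (by rw [div_eq_mul_inv]; ring)

lemma continuousOn_lapse {M : ℝ} (hM : 0 < M) : ContinuousOn (lapse M) (Ioi (2 * M)) :=
  fun _ hr => (hasDerivAt_lapse hM hr).continuousAt.continuousWithinAt

lemma continuousOn_slope {M : ℝ} (hM : 0 < M) (κ : ℝ) :
    ContinuousOn (slope M κ) (Ioi (2 * M)) := by
  have h := continuousOn_lapse hM
  unfold slope
  exact ((h.pow 2).inv₀ (fun r hr => pow_ne_zero _ (lapse_pos hM hr).ne')).mul
    (continuousOn_const.sub (continuousOn_const.mul h)).sqrt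

lemma uIcc_subset_outer {M a b : ℝ} (ha : 2 * M < a) (hb : 2 * M < b) :
    uIcc a b ⊆ Ioi (2 * M) := fun _ hx => lt_of_lt_of_le (lt_min ha hb) hx.1

lemma intervalIntegrable_slope {M a b : ℝ} (hM : 0 < M) (κ : ℝ) (ha : 2 * M < a)
    (hb : 2 * M < b) : IntervalIntegrable (slope M κ) volume a b :=
  ((continuousOn_slope hM κ).mono (uIcc_subset_outer ha hb)).intervalIntegrable

lemma hasDerivAt_prim {M r : ℝ} (hM : 0 < M) (κ : ℝ) (hr : 2 * M < r) :
    HasDerivAt (prim M κ) (slope M κ r) r := by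
  have hc := continuousOn_slope hM κ
  refine intervalIntegral.integral_hasDerivAt_right
    (intervalIntegrable_slope hM κ (by linarith) hr) ?_ (hc.continuousAt (Ioi_mem_nhds hr))
  exact hc.stronglyMeasurableAtFilter isOpen_Ioi r hr

lemma prim_sub {M x y : ℝ} (hM : 0 < M) (κ : ℝ) (hx : 2 * M < x) (hy : 2 * M < y) :
    prim M κ y - prim M κ x = ∫ z in x..y, slope M κ z :=
  intervalIntegral.integral_interval_sub_left
    (intervalIntegrable_slope hM κ (by linarith) hy)
    (intervalIntegrable_slope hM κ (by linarith) hx)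

lemma slope_zero (M r : ℝ) : slope M 0 r = ((lapse M r) ^ 2)⁻¹ := by simp [slope]

lemma slope_zero_pos {M r : ℝ} (hM : 0 < M) (hr : 2 * M < r) : 0 < slope M 0 r := by
  rw [slope_zero]; have := lapse_pos hM hr; positivity

lemma slope_le {M κ r : ℝ} (hM : 0 < M) (hκ : 0 ≤ κ) (hr : 2 * M < r) :
    slope M κ r ≤ slope M 0 r := by
  rw [slope_zero]
  have := lapse_pos hM hr
  unfold slope
  refine mul_le_of_le_one_right (by positivity) ?_
  rw [Real.sqrt_le_left zero_le_one]
  nlinarith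

lemma le_slope {M κ r : ℝ} (hM : 0 < M) (hκ : 0 ≤ κ) (hκ1 : κ ≤ 1) (hr : 2 * M < r) :
    (1 - κ) * slope M 0 r ≤ slope M κ r := by
  rw [slope_zero]
  have h0 := lapse_pos hM hr
  have h1 := lapse_lt_one hM hr
  unfold slope
  rw [mul_comm]
  refine mul_le_mul_of_nonneg_left ?_ (by positivity)
  apply Real.le_sqrt_of_sq_le
  nlinarith [mul_nonneg hκ h0.le, mul_nonneg hκ (sub_nonneg.2 h1.le),
    mul_nonneg hκ (sub_nonneg.2 hκ1)]

lemma prim_sub_le {M κ x y : ℝ} (hM : 0 < M) (hκ : 0 ≤ κ) (hx : 2 * M < x) (hxy : x ≤ y) :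
    prim M κ y - prim M κ x ≤ prim M 0 y - prim M 0 x := by
  have hy : 2 * M < y := by linarith
  rw [prim_sub hM κ hx hy, prim_sub hM 0 hx hy]
  exact intervalIntegral.integral_mono_on hxy (intervalIntegrable_slope hM κ hx hy)
    (intervalIntegrable_slope hM 0 hx hy) fun z hz => slope_le hM hκ (by linarith [hz.1])

lemma le_prim_sub {M κ x y : ℝ} (hM : 0 < M) (hκ : 0 ≤ κ) (hκ1 : κ ≤ 1) (hx : 2 * M < x)
    (hxy : x ≤ y) :
    (1 - κ) * (prim M 0 y - prim M 0 x) ≤ prim M κ y - prim M κ x := by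
  have hy : 2 * M < y := by linarith
  rw [prim_sub hM κ hx hy, prim_sub hM 0 hx hy, ← intervalIntegral.integral_const_mul]
  exact intervalIntegral.integral_mono_on hxy
    ((intervalIntegrable_slope hM 0 hx hy).const_mul _)
    (intervalIntegrable_slope hM κ hx hy) fun z hz => le_slope hM hκ hκ1 (by linarith [hz.1])

lemma prim_zero_mono {M x y : ℝ} (hM : 0 < M) (hx : 2 * M < x) (hxy : x ≤ y) :
    prim M 0 x ≤ prim M 0 y := by
  have := le_prim_sub hM zero_le_one le_rfl hx hxy
  have := prim_sub_le hM zero_le_one hx hxy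
  linarith

lemma abs_prim_sub_le {M κ x y : ℝ} (hM : 0 < M) (hκ : 0 ≤ κ) (hκ1 : κ ≤ 1) (hx : 2 * M < x)
    (hy : 2 * M < y) :
    |prim M κ y - prim M κ x| ≤ |prim M 0 y - prim M 0 x| := by
  wlog h : x ≤ y generalizing x y
  · rw [abs_sub_comm, abs_sub_comm (prim M 0 y)]
    exact this hy hx (not_le.1 h).le
  have h1 := le_prim_sub hM hκ hκ1 hx h
  have h2 := prim_sub_le hM hκ hx h
  have h3 := prim_zero_mono hM hx h
  rw [abs_of_nonneg, abs_of_nonneg] <;> nlinarith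

/-- Replacing `S_κ` by `S_0` costs at most the fraction `κ` of the variation of `S_0`. -/
lemma abs_prim_sub_sub_le {M κ x y : ℝ} (hM : 0 < M) (hκ : 0 ≤ κ) (hκ1 : κ ≤ 1)
    (hx : 2 * M < x) (hy : 2 * M < y) :
    |(prim M κ y - prim M κ x) - (prim M 0 y - prim M 0 x)|
      ≤ κ * |prim M 0 y - prim M 0 x| := by
  wlog h : x ≤ y generalizing x y
  · have := this hy hx (not_le.1 h).le
    rw [abs_sub_comm (prim M 0 y), ← abs_neg]
    convert this using 2
    ring
  have h1 := le_prim_sub hM hκ hκ1 hx h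
  have h2 := prim_sub_le hM hκ hx h
  have h3 := prim_zero_mono hM hx h
  rw [abs_of_nonneg (sub_nonneg.2 h3), abs_le]
  constructor <;> nlinarith

section Potential

variable {M : ℝ} {u0 : ℝ → ℝ}

lemma intervalIntegrable_pot {a b : ℝ} (hM : 0 < M) (hm : Measurable u0)
    (hu : ∀ r, u0 r ∈ Ioo (-1 : ℝ) 1) (ha : 2 * M < a) (hb : 2 * M < b) :
    IntervalIntegrable (fun x => ((lapse M x) ^ 2)⁻¹ * u0 x) volume a b := by
  have h := intervalIntegrable_slope hM 0 ha hb
  simp only [funext (slope_zero M)] at h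
  refine h.mono_fun ((h.def'.aestronglyMeasurable).mul hm.aestronglyMeasurable) ?_
  refine Filter.Eventually.of_forall fun x => ?_
  have := hu x
  beta_reduce
  rw [norm_mul]
  exact mul_le_of_le_one_right (norm_nonneg _) (abs_le.2 ⟨this.1.le, this.2.le⟩)

lemma pot_sub {x y : ℝ} (hM : 0 < M) (hm : Measurable u0)
    (hu : ∀ r, u0 r ∈ Ioo (-1 : ℝ) 1) (hx : 2 * M < x) (hy : 2 * M < y) :
    pot M u0 y - pot M u0 x = ∫ z in x..y, ((lapse M z) ^ 2)⁻¹ * u0 z :=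
  intervalIntegral.integral_interval_sub_left
    (intervalIntegrable_pot hM hm hu (by linarith) hy)
    (intervalIntegrable_pot hM hm hu (by linarith) hx)

lemma pot_add_lt {x y : ℝ} (hM : 0 < M) (hm : Measurable u0)
    (hu : ∀ r, u0 r ∈ Ioo (-1 : ℝ) 1) (hx : 2 * M < x) (hxy : x < y) :
    pot M u0 x + prim M 0 x < pot M u0 y + prim M 0 y := by
  have hy : 2 * M < y := by linarith
  have h1 := intervalIntegrable_pot hM hm hu hx hy
  have h2 := intervalIntegrable_slope hM 0 hx hy
  have : 0 < ∫ z in x..y, (((lapse M z) ^ 2)⁻¹ * u0 z + slope M 0 z) := by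
    refine intervalIntegral.intervalIntegral_pos_of_pos_on (h1.add h2) (fun z hz => ?_) hxy
    have := lapse_pos hM (show 2 * M < z by linarith [hz.1])
    have h3 := (hu z).1
    rw [slope_zero, ← mul_add_one]
    exact mul_pos (by positivity) (by linarith)
  rw [intervalIntegral.integral_add h1 h2, ← pot_sub hM hm hu hx hy, ← prim_sub hM 0 hx hy] at this
  linarith

lemma sub_pot_lt {x y : ℝ} (hM : 0 < M) (hm : Measurable u0)
    (hu : ∀ r, u0 r ∈ Ioo (-1 : ℝ) 1) (hx : 2 * M < x) (hxy : x < y) :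
    prim M 0 x - pot M u0 x < prim M 0 y - pot M u0 y := by
  have h := pot_add_lt (u0 := fun r => -u0 r) hM hm.neg
    (fun r => ⟨by linarith [(hu r).2], by linarith [(hu r).1]⟩) hx hxy
  have e : ∀ r, pot M (fun r => -u0 r) r = -pot M u0 r := fun r => by simp [pot]
  rw [e, e] at h
  linarith

lemma abs_pot_sub_le {x y : ℝ} (hM : 0 < M) (hm : Measurable u0)
    (hu : ∀ r, u0 r ∈ Ioo (-1 : ℝ) 1) (hx : 2 * M < x) (hy : 2 * M < y) :
    |pot M u0 y - pot M u0 x| ≤ |prim M 0 y - prim M 0 x| := by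
  wlog h : x ≤ y generalizing x y
  · rw [abs_sub_comm, abs_sub_comm (prim M 0 y)]
    exact this hy hx (not_le.1 h).le
  rcases h.eq_or_lt with rfl | h
  · simp
  have h1 := pot_add_lt hM hm hu hx h
  have h2 := sub_pot_lt hM hm hu hx h
  have h3 := prim_zero_mono hM hx h.le
  rw [abs_of_nonneg (sub_nonneg.2 h3), abs_le]
  constructor <;> linarith

/-- A quantitative form of `|u₀| < 1`: on a compact interval the part of
`|u₀|` exceeding `√(1 - κ f)` has integral `o(κ)`, because `(|u₀| - √(1 - κ f))₊ / κ` is bounded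
by `1` and vanishes at each point for small `κ`. Hence the initial potential is
`S_κ`-Lipschitz up to `ε κ`. -/
lemma exists_small_defect {a b ε : ℝ} (hM : 0 < M) (hm : Measurable u0)
    (hu : ∀ r, u0 r ∈ Ioo (-1 : ℝ) 1) (ha : 2 * M < a) (hab : a ≤ b) (hε : 0 < ε) :
    ∃ κ, 0 < κ ∧ κ < ε ∧ κ < 1 ∧ ∀ x ∈ Icc a b, ∀ y ∈ Icc a b,
      pot M u0 x - pot M u0 y ≤ |prim M κ x - prim M κ y| + ε * κ := by
  have hb : 2 * M < b := by linarith
  set F : ℕ → ℝ → ℝ := fun n r =>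
    ((n : ℝ) + 2) * max (((lapse M r) ^ 2)⁻¹ * |u0 r| - slope M (1 / ((n : ℝ) + 2)) r) 0 with hF
  have hlim1 : Tendsto (fun n : ℕ => 1 / ((n : ℝ) + 2)) atTop (𝓝 0) := by
    have := (tendsto_one_div_add_atTop_nhds_zero_nat (𝕜 := ℝ)).comp (tendsto_add_atTop_nat 1)
    refine this.congr fun n => ?_
    simp only [Function.comp]; push_cast; ring_nf
  have habs : IntervalIntegrable (fun r => ((lapse M r) ^ 2)⁻¹ * |u0 r|) volume a b := by
    have := (intervalIntegrable_pot hM hm hu ha hb).norm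
    refine this.congr fun r hr => ?_
    simp
  have hFi : ∀ n, IntervalIntegrable (F n) volume a b := fun n => by
    have h := habs.sub (intervalIntegrable_slope hM (1 / ((n : ℝ) + 2)) ha hb)
    exact IntervalIntegrable.const_mul ⟨h.1.pos_part, h.2.pos_part⟩ _
  have hlim : Tendsto (fun n => ∫ r in a..b, F n r) atTop (𝓝 (∫ r in a..b, (0 : ℝ))) := by
    refine intervalIntegral.tendsto_integral_filter_of_dominated_convergence (slope M 0)
      (Eventually.of_forall fun n => ?_) (Eventually.of_forall fun n => ?_)
      (intervalIntegrable_slope hM 0 ha hb) ?_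
    · exact (hFi n).def'.aestronglyMeasurable
    · refine Eventually.of_forall fun r hr => ?_
      rw [uIoc_of_le hab] at hr
      have hr' : 2 * M < r := by linarith [hr.1]
      have hn : (0 : ℝ) < (n : ℝ) + 2 := by positivity
      have h1 := le_slope hM (κ := 1 / ((n : ℝ) + 2)) (by positivity)
        ((div_le_one hn).2 (by linarith)) hr'
      have h2 := slope_zero_pos hM hr'
      have h3 : ((lapse M r) ^ 2)⁻¹ * |u0 r| ≤ slope M 0 r := by
        rw [slope_zero] at h2 ⊢
        exact mul_le_of_le_one_right h2.le (abs_le.2 ⟨(hu r).1.le, (hu r).2.le⟩)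
      rw [Real.norm_of_nonneg (by positivity)]
      have h4 : max (((lapse M r) ^ 2)⁻¹ * |u0 r| - slope M (1 / ((n : ℝ) + 2)) r) 0
          ≤ slope M 0 r / ((n : ℝ) + 2) := by
        refine max_le ?_ (by positivity)
        have : slope M 0 r / ((n : ℝ) + 2) = 1 / ((n : ℝ) + 2) * slope M 0 r := by ring
        rw [this]; linarith
      calc _ ≤ ((n : ℝ) + 2) * (slope M 0 r / ((n : ℝ) + 2)) := mul_le_mul_of_nonneg_left h4 hn.le
        _ = _ := by field_simp
    · refine Eventually.of_forall fun r hr => ?_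
      rw [uIoc_of_le hab] at hr
      have hr' : 2 * M < r := by linarith [hr.1]
      have h2 := slope_zero_pos hM hr'
      have hs : Tendsto (fun n : ℕ => slope M (1 / ((n : ℝ) + 2)) r) atTop
          (𝓝 (slope M 0 r)) := by
        have hc : Continuous fun κ => slope M κ r := by unfold slope; fun_prop
        exact (hc.tendsto 0).comp hlim1
      have h3 : ((lapse M r) ^ 2)⁻¹ * |u0 r| < slope M 0 r := by
        rw [slope_zero] at h2 ⊢
        exact mul_lt_of_lt_one_right h2 (abs_lt.2 ⟨(hu r).1, (hu r).2⟩)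
      refine tendsto_const_nhds.congr' ?_
      filter_upwards [hs.eventually (lt_mem_nhds h3)] with n hn
      simp only [hF]
      rw [max_eq_right (by linarith), mul_zero]
  rw [intervalIntegral.integral_zero] at hlim
  obtain ⟨n, h1, h2⟩ := ((hlim.eventually (gt_mem_nhds hε)).and
    (hlim1.eventually (gt_mem_nhds hε))).exists
  have hn : (0 : ℝ) < (n : ℝ) + 2 := by positivity
  set κ := 1 / ((n : ℝ) + 2) with hκ
  have hκ0 : 0 < κ := by positivity
  refine ⟨κ, hκ0, h2, (div_lt_one hn).2 (by linarith [n.cast_nonneg (α := ℝ)]), ?_⟩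
  -- the symmetric two-point estimate, for ordered points
  have key : ∀ x ∈ Icc a b, ∀ y ∈ Icc a b, x ≤ y →
      |pot M u0 y - pot M u0 x| ≤ (prim M κ y - prim M κ x) + ε * κ := by
    intro x hx y hy hxy
    have hx' : 2 * M < x := by linarith [hx.1]
    have hy' : 2 * M < y := by linarith [hy.1]
    have hsub : uIcc x y ⊆ uIcc a b := by
      rw [uIcc_of_le hxy, uIcc_of_le hab]; exact Icc_subset_Icc hx.1 hy.2
    have hFxy := (hFi n).mono_set hsub
    have hS := intervalIntegrable_slope hM κ hx' hy'
    rw [pot_sub hM hm hu hx' hy', prim_sub hM κ hx' hy']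
    have hFn : ∀ r, 0 ≤ F n r := fun r => mul_nonneg hn.le (le_max_right _ _)
    calc _ ≤ ∫ z in x..y, |((lapse M z) ^ 2)⁻¹ * u0 z| :=
          intervalIntegral.abs_integral_le_integral_abs hxy
      _ ≤ ∫ z in x..y, (slope M κ z + κ * F n z) := by
          refine intervalIntegral.integral_mono_on hxy
            (intervalIntegrable_pot hM hm hu hx' hy').abs (hS.add (hFxy.const_mul κ)) ?_
          intro z _
          have : κ * F n z = max (((lapse M z) ^ 2)⁻¹ * |u0 z| - slope M κ z) 0 := by
            simp only [hF]; rw [← mul_assoc, hκ, one_div, inv_mul_cancel₀ hn.ne', one_mul]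
          rw [this, abs_mul, abs_of_nonneg (by positivity : 0 ≤ ((lapse M z) ^ 2)⁻¹)]
          linarith [le_max_left (((lapse M z) ^ 2)⁻¹ * |u0 z| - slope M κ z) 0]
      _ = (∫ z in x..y, slope M κ z) + κ * ∫ z in x..y, F n z := by
          rw [intervalIntegral.integral_add hS (hFxy.const_mul κ),
            intervalIntegral.integral_const_mul]
      _ ≤ _ := by
          have : ∫ z in x..y, F n z ≤ ∫ z in a..b, F n z :=
            intervalIntegral.integral_mono_interval hx.1 hxy hy.2
              (Eventually.of_forall hFn) (hFi n)
          nlinarith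
  intro x hx y hy
  rcases le_total x y with h | h
  · have := (abs_le.1 (key x hx y hy h)).1
    have := neg_abs_le (prim M κ x - prim M κ y)
    linarith
  · have := (abs_le.1 (key y hy x hx h)).2
    have := le_abs_self (prim M κ x - prim M κ y)
    linarith

end Potential

/-! ### Construction of the potential -/

/-- The elementary potential `c + σ S_κ(r) + κ s / 2` with parameters `e = (σ, κ, c)`. For
`σ = ±1` it is, up to the common term `-s/2`, the potential of the static solution
`u = σ √(1 - κ f)`. -/
noncomputable def elem (M : ℝ) (e : ℝ × ℝ × ℝ) (s r : ℝ) : ℝ :=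
  e.2.2 + e.1 * prim M e.2.1 r + e.2.1 / 2 * s

/-- The parameters `(σ, κ, c)` for which the static solution takes its values in `(-1, 1)` on the
whole outer domain. -/
def Valid (e : ℝ × ℝ × ℝ) : Prop := (e.1 = 1 ∨ e.1 = -1) ∧ 0 < e.2.1 ∧ e.2.1 < 1

/-- `U` is `1`-Lipschitz for the metric `|s₁ - s₂| + |S_0(r₁) - S_0(r₂)|`. -/
def Lip (M : ℝ) (U : ℝ → ℝ → ℝ) : Prop :=
  ∀ s₁ s₂ r₁ r₂, 2 * M < r₁ → 2 * M < r₂ →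
    U s₁ r₁ ≤ U s₂ r₂ + (|s₁ - s₂| + |prim M 0 r₁ - prim M 0 r₂|)

/-- On the box `[s₁, s₂] × [a, b]`, `U` is a selection from finitely many elementary
potentials. -/
def FinSel (M : ℝ) (U : ℝ → ℝ → ℝ) (s₁ s₂ a b : ℝ) : Prop :=
  ∃ F : Finset (ℝ × ℝ × ℝ), (∀ e ∈ F, Valid e) ∧
    ∀ s ∈ Icc s₁ s₂, ∀ r ∈ Icc a b, ∃ e ∈ F, U s r = elem M e s r

/-- Lipschitz functions that are selections from finitely many elementary potentials on every
compact subset of `[0, ∞) × (2M, ∞)`. -/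
structure Adm (M : ℝ) (U : ℝ → ℝ → ℝ) : Prop where
  lip : Lip M U
  fin : ∀ T a b, 2 * M < a → FinSel M U 0 T a b

section Lattice

variable {M : ℝ}

lemma Adm.elem (hM : 0 < M) {e : ℝ × ℝ × ℝ} (he : Valid e) : Adm M (elem M e) := by
  refine ⟨fun s s' r r' hr hr' => ?_, fun T a b _ => ⟨{e}, by simpa, by simp⟩⟩
  obtain ⟨h1, h2, h3⟩ := he
  have h := abs_prim_sub_le hM h2.le h3.le hr' hr
  have h4 := abs_le.1 h
  have h5 : e.2.1 / 2 * (s - s') ≤ |s - s'| := by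
    have := le_abs_self (s - s')
    have := abs_nonneg (s - s')
    nlinarith
  unfold BurgersSchwarzschild.elem
  rcases h1 with h1 | h1 <;> rw [h1] <;> linarith

lemma FinSel.of_pointwise {U V W : ℝ → ℝ → ℝ} {s₁ s₂ a b : ℝ} (hU : FinSel M U s₁ s₂ a b)
    (hV : FinSel M V s₁ s₂ a b) (h : ∀ s r, W s r = U s r ∨ W s r = V s r) :
    FinSel M W s₁ s₂ a b := by
  classical
  obtain ⟨F, hF, hF'⟩ := hU
  obtain ⟨G, hG, hG'⟩ := hV
  refine ⟨F ∪ G, fun e he => (Finset.mem_union.1 he).elim (hF e) (hG e), fun s hs r hr => ?_⟩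
  rcases h s r with h | h
  · obtain ⟨e, he, h'⟩ := hF' s hs r hr
    exact ⟨e, Finset.mem_union_left _ he, h.trans h'⟩
  · obtain ⟨e, he, h'⟩ := hG' s hs r hr
    exact ⟨e, Finset.mem_union_right _ he, h.trans h'⟩

lemma Adm.min {U V : ℝ → ℝ → ℝ} (hU : Adm M U) (hV : Adm M V) :
    Adm M (fun s r => min (U s r) (V s r)) := by
  refine ⟨fun s s' r r' hr hr' => ?_, fun T a b ha =>
    (hU.fin T a b ha).of_pointwise (hV.fin T a b ha) fun s r => min_choice _ _⟩
  rw [← min_add_add_right]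
  exact min_le_min (hU.lip s s' r r' hr hr') (hV.lip s s' r r' hr hr')

lemma Adm.max {U V : ℝ → ℝ → ℝ} (hU : Adm M U) (hV : Adm M V) :
    Adm M (fun s r => max (U s r) (V s r)) := by
  refine ⟨fun s s' r r' hr hr' => ?_, fun T a b ha =>
    (hU.fin T a b ha).of_pointwise (hV.fin T a b ha) fun s r => max_choice _ _⟩
  rw [← max_add_add_right]
  exact max_le_max (hU.lip s s' r r' hr hr') (hV.lip s s' r r' hr hr')

lemma Adm.finite_inf {ι : Type*} (Y : Finset ι) (hY : Y.Nonempty) (g : ι → ℝ → ℝ → ℝ)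
    (hg : ∀ y ∈ Y, Adm M (g y)) :
    ∃ U, Adm M U ∧ (∀ y ∈ Y, ∀ s r, U s r ≤ g y s r) ∧
      ∀ s r, ∃ y ∈ Y, U s r = g y s r := by
  classical
  induction hY using Finset.Nonempty.cons_induction with
  | singleton y => exact ⟨g y, hg y (by simp), by simp, by simp⟩
  | cons y Y hy hY ih =>
    obtain ⟨U, h1, h2, h3⟩ := ih fun z hz => hg z (Finset.mem_cons_of_mem hz)
    refine ⟨_, (hg y (Finset.mem_cons_self _ _)).min h1, fun z hz s r => ?_, fun s r => ?_⟩
    · rcases Finset.mem_cons.1 hz with rfl | hz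
      · exact min_le_left _ _
      · exact (min_le_right _ _).trans (h2 z hz s r)
    · rcases min_choice (g y s r) (U s r) with h | h
      · exact ⟨y, Finset.mem_cons_self _ _, h⟩
      · obtain ⟨z, hz, h'⟩ := h3 s r
        exact ⟨z, Finset.mem_cons_of_mem hz, h.trans h'⟩

lemma iInf_eq_of_tail {f : ℕ → ℝ} {N m : ℕ} (hm : m ≤ N) (h : ∀ n, N < n → f m ≤ f n) :
    ∃ n ≤ N, ⨅ n, f n = f n := by
  obtain ⟨n, hn, h'⟩ := Finset.exists_min_image (Finset.range (N + 1)) f ⟨m, by simp; omega⟩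
  refine ⟨n, by simp at hn; omega, ?_⟩
  refine IsLeast.csInf_eq ⟨⟨n, rfl⟩, ?_⟩
  rintro _ ⟨k, rfl⟩
  by_cases hk : k ≤ N
  · exact h' k (by simp; omega)
  · exact (h' m (by simp; omega)).trans (h k (by omega))

lemma iSup_eq_of_tail {f : ℕ → ℝ} {N m : ℕ} (hm : m ≤ N) (h : ∀ n, N < n → f n ≤ f m) :
    ∃ n ≤ N, ⨆ n, f n = f n := by
  obtain ⟨n, hn, h'⟩ := Finset.exists_max_image (Finset.range (N + 1)) f ⟨m, by simp; omega⟩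
  refine ⟨n, by simp at hn; omega, ?_⟩
  refine IsGreatest.csSup_eq ⟨⟨n, rfl⟩, ?_⟩
  rintro _ ⟨k, rfl⟩
  by_cases hk : k ≤ N
  · exact h' k (by simp; omega)
  · exact (h k (by omega)).trans (h' m (by simp; omega))

end Lattice

/-- A barrier with height close to `v` at `z`, descending in the direction `σ`: on the whole outer
domain it is at most `δ + ε s` above the extreme ramp `v - σ (S_0(r) - S_0(z))`, and for `r` in a
prescribed range it exceeds this ramp by a positive margin. It is the infimum of ramps of static slope with parameters
`κ_n → 0` and increasing heights `v + D_n`; as `κ_n` is far smaller than the increments of `D_n`,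
only finitely many ramps matter on a compact set. -/
lemma exists_barrier {M z δ ε R σ : ℝ} (hM : 0 < M) (hσ : σ = 1 ∨ σ = -1) (hz : 2 * M < z)
    (v : ℝ) (hδ : 0 < δ) (hε : 0 < ε) (hR : 0 ≤ R) :
    ∃ G, Adm M G ∧
      (∀ s r, 0 ≤ s → 2 * M < r → G s r ≤ v - σ * (prim M 0 r - prim M 0 z) + δ + ε * s) ∧
      ∃ η, 0 < η ∧ ∀ s r, 0 ≤ s → 2 * M < r → |prim M 0 r - prim M 0 z| ≤ R →
        v - σ * (prim M 0 r - prim M 0 z) + η ≤ G s r := by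
  obtain ⟨μ, hμ0, hμδ, hμε, hμ1, hμR⟩ : ∃ μ : ℝ, 0 < μ ∧ μ ≤ δ / 32 ∧ μ ≤ ε ∧ μ ≤ 1 / 2 ∧
      μ * R ≤ δ / 32 := by
    have hm : 0 < min (δ / 32) (min ε (1 / 2)) := by positivity
    have h1 : 0 < 1 + R := by linarith
    refine ⟨min (δ / 32) (min ε (1 / 2)) / (1 + R), by positivity, ?_, ?_, ?_, ?_⟩
    · exact (div_le_self hm.le (by linarith)).trans (min_le_left _ _)
    · exact (div_le_self hm.le (by linarith)).trans
        ((min_le_right _ _).trans (min_le_left _ _))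
    · exact (div_le_self hm.le (by linarith)).trans
        ((min_le_right _ _).trans (min_le_right _ _))
    · rw [div_mul_eq_mul_div, div_le_iff₀ h1]
      have := min_le_left (δ / 32) (min ε (1 / 2))
      nlinarith
  set h : ℕ → ℝ := fun n => (1 / 2) ^ n with hh
  have h0 : ∀ n, 0 < h n := fun n => by positivity
  have h1 : ∀ n, h n ≤ 1 := fun n => pow_le_one₀ (by norm_num) (by norm_num)
  have hlt : ∀ N n, N < n → h n ≤ h N / 2 := fun N n hn => by
    have : h n ≤ h (N + 1) := pow_le_pow_of_le_one (by norm_num) (by norm_num) hn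
    have e : h (N + 1) = h N / 2 := by simp only [hh, pow_succ]; ring
    rwa [e] at this
  set κ : ℕ → ℝ := fun n => μ * h n / (n + 1) with hκ
  have hκ0 : ∀ n, 0 < κ n := fun n => by have := h0 n; positivity
  have hκn : ∀ n, κ n * (n + 1) = μ * h n := fun n => by simp only [hκ]; field_simp
  have hκμ : ∀ n, κ n ≤ μ := fun n => by
    have := hκn n
    have := hκ0 n
    have := h1 n
    have := n.cast_nonneg (α := ℝ)
    nlinarith
  set D : ℕ → ℝ := fun n => δ * (1 / 2 - h n / 4) with hD
  have hDlo : ∀ n, δ / 4 ≤ D n := fun n => by simp only [hD]; nlinarith [h1 n]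
  have hDup : ∀ n, D n ≤ δ / 2 := fun n => by simp only [hD]; nlinarith [h0 n]
  set e : ℕ → ℝ × ℝ × ℝ := fun n => (-σ, κ n, v + D n + σ * prim M (κ n) z) with he
  have hval : ∀ n, Valid (e n) := fun n =>
    ⟨by rcases hσ with h | h <;> simp [he, h], hκ0 n, by
      have := hκμ n; simp only [he]; linarith⟩
  have hbd : ∀ n s r, 2 * M < r →
      |elem M (e n) s r - (v - σ * (prim M 0 r - prim M 0 z) + D n + κ n / 2 * s)|
        ≤ κ n * |prim M 0 r - prim M 0 z| := by
    intro n s r hr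
    have := abs_prim_sub_sub_le hM (hκ0 n).le ((hκμ n).trans (by linarith)) hz hr
    refine le_trans (le_of_eq ?_) this
    have hσ' : |(-σ)| = 1 := by rcases hσ with h | h <;> simp [h]
    rw [← one_mul |prim M (κ n) r - _ - _|, ← hσ', ← abs_mul]
    congr 1
    simp only [elem, he]; ring
  have hbelow : ∀ s r, 2 * M < r → BddBelow (range fun n => elem M (e n) s r) := by
    intro s r hr
    refine ⟨v - σ * (prim M 0 r - prim M 0 z) - |prim M 0 r - prim M 0 z| - |s|, ?_⟩
    rintro _ ⟨n, rfl⟩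
    have h2 := (abs_le.1 (hbd n s r hr)).1
    have h3 : κ n * |prim M 0 r - prim M 0 z| ≤ |prim M 0 r - prim M 0 z| :=
      mul_le_of_le_one_left (abs_nonneg _) (by linarith [hκμ n])
    have h4 : -|s| ≤ κ n / 2 * s := by
      have := neg_abs_le s
      have := abs_nonneg s
      have := hκ0 n
      have := hκμ n
      nlinarith
    have := hDlo n
    simp only
    linarith
  refine ⟨fun s r => ⨅ n, elem M (e n) s r, ⟨?_, ?_⟩, ?_, δ / 8, by positivity, ?_⟩
  · intro s s' r r' hr hr'
    rw [← sub_le_iff_le_add]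
    refine le_ciInf fun n => ?_
    have := (Adm.elem hM (hval n)).lip s s' r r' hr hr'
    have := ciInf_le (hbelow s r hr) n
    linarith
  · intro T a b ha
    obtain ⟨N, hN⟩ := exists_nat_ge
      (max T (|prim M 0 a - prim M 0 z| + |prim M 0 b - prim M 0 z|))
    classical
    refine ⟨(Finset.range (N + 1)).image e, ?_, ?_⟩
    · intro x hx
      obtain ⟨n, _, rfl⟩ := Finset.mem_image.1 hx
      exact hval n
    · intro s hs r hr
      have hr' : 2 * M < r := by linarith [hr.1]
      have hΔ : |prim M 0 r - prim M 0 z| ≤ N := by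
        refine le_trans ?_ ((le_max_right _ _).trans hN)
        have h2 := prim_zero_mono hM ha hr.1
        have h3 := prim_zero_mono hM hr' hr.2
        have h4 := neg_abs_le (prim M 0 a - prim M 0 z)
        have h5 := le_abs_self (prim M 0 b - prim M 0 z)
        have h6 := abs_nonneg (prim M 0 a - prim M 0 z)
        have h7 := abs_nonneg (prim M 0 b - prim M 0 z)
        exact abs_le.2 ⟨by linarith, by linarith⟩
      have hsN : s ≤ N := hs.2.trans ((le_max_left _ _).trans hN)
      obtain ⟨n, hn, hn'⟩ := iInf_eq_of_tail (f := fun n => elem M (e n) s r) (le_refl N) (by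
        intro n hn
        have hnN : (N : ℝ) ≤ n := by exact_mod_cast hn.le
        have b1 := (abs_le.1 (hbd n s r hr')).1
        have b2 := (abs_le.1 (hbd N s r hr')).2
        have b3 : κ n * |prim M 0 r - prim M 0 z| ≤ δ / 32 * h n := by
          have := mul_le_mul_of_nonneg_left (hΔ.trans (hnN.trans (by linarith : (n : ℝ) ≤ n + 1)))
            (hκ0 n).le
          nlinarith [hκn n, h0 n]
        have b4 : κ N * |prim M 0 r - prim M 0 z| ≤ δ / 32 * h N := by
          have := mul_le_mul_of_nonneg_left (hΔ.trans (by linarith : (N : ℝ) ≤ N + 1)) (hκ0 N).le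
          nlinarith [hκn N, h0 N]
        have b5 : κ N / 2 * s ≤ δ / 32 * h N := by
          have := mul_le_mul_of_nonneg_left (hsN.trans (by linarith : (N : ℝ) ≤ N + 1)) (hκ0 N).le
          nlinarith [hκn N, h0 N, mul_nonneg (hκ0 N).le hs.1]
        have b6 : 0 ≤ κ n / 2 * s := mul_nonneg (by linarith [hκ0 n]) hs.1
        have b7 : D n - D N ≥ δ * (h N / 8) := by
          simp only [hD]
          nlinarith [hlt N n hn]
        have b8 : δ / 32 * h n ≤ δ / 32 * (h N / 2) :=
          mul_le_mul_of_nonneg_left (hlt N n hn) (by positivity)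
        have b9 : 0 < δ * h N := mul_pos hδ (h0 N)
        linarith)
      exact ⟨e n, Finset.mem_image_of_mem e (by simp; omega), hn'⟩
  · intro s r hs hr
    obtain ⟨n, hn⟩ := exists_nat_ge |prim M 0 r - prim M 0 z|
    refine (ciInf_le (hbelow s r hr) n).trans ?_
    have b2 := (abs_le.1 (hbd n s r hr)).2
    have b4 : κ n * |prim M 0 r - prim M 0 z| ≤ δ / 32 := by
      have := mul_le_mul_of_nonneg_left (hn.trans (by linarith : (n : ℝ) ≤ n + 1)) (hκ0 n).le
      nlinarith [hκn n, h0 n, h1 n]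
    have b5 : κ n / 2 * s ≤ ε * s :=
      mul_le_mul_of_nonneg_right (by linarith [hκμ n, hκ0 n]) hs
    linarith [hDup n]
  · intro s r hs hr hΔ
    refine le_ciInf fun n => ?_
    have b1 := (abs_le.1 (hbd n s r hr)).1
    have b3 : κ n * |prim M 0 r - prim M 0 z| ≤ δ / 32 :=
      (mul_le_mul (hκμ n) hΔ (abs_nonneg _) hμ0.le).trans hμR
    have b6 : 0 ≤ κ n / 2 * s := mul_nonneg (by linarith [hκ0 n]) hs
    linarith [hDlo n]

/-- One level of the construction: an admissible `U` which starts at or below the initial potential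
`w`, grows at most at rate `ε` above it, and lies strictly above it on `[a, b]` from time `ε` on.
On a neighbourhood of `[a, b]` it is a finite infimum of static cones over a fine net, cut off on
both sides by barriers. -/
lemma exists_level {M a b ε : ℝ} {u0 : ℝ → ℝ} (hM : 0 < M) (hm : Measurable u0)
    (hu : ∀ r, u0 r ∈ Ioo (-1 : ℝ) 1) (ha : 2 * M < a) (hab : a ≤ b) (hε : 0 < ε) :
    ∃ U, Adm M U ∧
      (∀ s r, 0 ≤ s → 2 * M < r → U s r ≤ pot M u0 r + ε * s) ∧
      ∃ η, 0 < η ∧ ∀ s r, ε ≤ s → r ∈ Icc a b → pot M u0 r + η ≤ U s r := by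
  have hb : 2 * M < b := by linarith
  set a' := (2 * M + a) / 2 with ha'
  set b' := b + 1 with hb'
  have ha'1 : 2 * M < a' := by linarith
  have ha'2 : a' < a := by linarith
  have hb'2 : b < b' := by linarith
  obtain ⟨κ, hκ0, hκε, hκ1, hκ⟩ := exists_small_defect hM hm hu ha'1
    (by linarith : a' ≤ b') (by positivity : 0 < ε / 8)
  -- the height by which the cones are lowered, comparable to but smaller than `κ ε`
  set c := κ * ε / 8 with hc
  have hc0 : 0 < c := by positivity
  obtain ⟨Y, hYsub, hYcov⟩ := (isCompact_Icc (a := a') (b := b')).elim_nhds_subcover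
    (fun y => {r | |prim M 0 r - prim M 0 y| < c / 2}) (by
      intro y hy
      have hcont := (hasDerivAt_prim hM 0 (show 2 * M < y by linarith [hy.1])).continuousAt
      have := hcont.eventually (Metric.ball_mem_nhds _ (half_pos hc0))
      simp only [Real.dist_eq] at this
      exact this)
  have hYne : Y.Nonempty := by
    by_contra hne
    rw [Finset.not_nonempty_iff_eq_empty.1 hne] at hYcov
    simpa using hYcov (left_mem_Icc.2 (by linarith : a' ≤ b'))
  set g : ℝ → ℝ → ℝ → ℝ := fun y s r =>
    max (elem M (1, κ, pot M u0 y - c - prim M κ y) s r)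
      (elem M (-1, κ, pot M u0 y - c + prim M κ y) s r) with hg
  have hgval : ∀ y s r, g y s r = pot M u0 y - c + |prim M κ r - prim M κ y| + κ / 2 * s := by
    intro y s r
    simp only [hg, elem, abs_eq_max_neg]
    rw [← max_add_add_left, ← max_add_add_right]
    congr 1 <;> ring
  obtain ⟨C, hC, hCle, hCeq⟩ := Adm.finite_inf (M := M) Y hYne g fun y _ =>
    (Adm.elem hM ⟨Or.inl rfl, hκ0, hκ1⟩).max (Adm.elem hM ⟨Or.inr rfl, hκ0, hκ1⟩)
  -- the gap available to the barriers between `[a, b]` and `[a', b']`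
  obtain ⟨δ, hδ0, hδa, hδb⟩ : ∃ δ, 0 < δ ∧
      δ ≤ (prim M 0 a - pot M u0 a) - (prim M 0 a' - pot M u0 a') ∧
      δ ≤ (pot M u0 b' + prim M 0 b') - (pot M u0 b + prim M 0 b) :=
    ⟨_, lt_min (sub_pos.2 (sub_pot_lt hM hm hu ha'1 ha'2))
      (sub_pos.2 (pot_add_lt hM hm hu hb hb'2)), min_le_left _ _, min_le_right _ _⟩
  have hR : 0 ≤ prim M 0 b - prim M 0 a := sub_nonneg.2 (prim_zero_mono hM ha hab)
  obtain ⟨P, hP, hPup, ηP, hηP, hPlo⟩ := exists_barrier hM (Or.inl rfl) hb (pot M u0 b) hδ0 hε hR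
  obtain ⟨Q, hQ, hQup, ηQ, hηQ, hQlo⟩ := exists_barrier hM (Or.inr rfl) ha (pot M u0 a) hδ0 hε hR
  have hadd : ∀ x y, 2 * M < x → x ≤ y →
      pot M u0 x + prim M 0 x ≤ pot M u0 y + prim M 0 y := fun x y hx hxy => by
    rcases hxy.eq_or_lt with rfl | h
    · rfl
    · exact (pot_add_lt hM hm hu hx h).le
  have hsub : ∀ x y, 2 * M < x → x ≤ y →
      prim M 0 x - pot M u0 x ≤ prim M 0 y - pot M u0 y := fun x y hx hxy => by
    rcases hxy.eq_or_lt with rfl | h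
    · rfl
    · exact (sub_pot_lt hM hm hu hx h).le
  refine ⟨_, hC.min (hP.min hQ), ?_, min c (min ηP ηQ), by positivity, ?_⟩
  · intro s r hs hr
    by_cases h1 : r < a'
    · refine (min_le_right _ _).trans ((min_le_right _ _).trans ((hQup s r hs hr).trans ?_))
      linarith [hsub r a' hr h1.le]
    by_cases h2 : b' < r
    · refine (min_le_right _ _).trans ((min_le_left _ _).trans ((hPup s r hs hr).trans ?_))
      linarith [hadd b' r (by linarith) h2.le]
    obtain ⟨y, hy, hry⟩ := mem_iUnion₂.1 (hYcov ⟨not_lt.1 h1, not_lt.1 h2⟩)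
    refine (min_le_left _ _).trans ((hCle y hy s r).trans ?_)
    have hy' : 2 * M < y := by linarith [(hYsub y hy).1]
    have h3 := abs_prim_sub_le hM hκ0.le hκ1.le hy' hr
    have h4 := (abs_le.1 (abs_pot_sub_le hM hm hu hy' hr)).1
    have h5 : κ / 2 * s ≤ ε * s := mul_le_mul_of_nonneg_right (by linarith) hs
    rw [hgval]
    have hry : |prim M 0 r - prim M 0 y| < c / 2 := hry
    linarith
  · intro s r hs hr
    have hr' : 2 * M < r := by linarith [hr.1]
    have hs0 : 0 ≤ s := by linarith
    have ra := prim_zero_mono hM ha hr.1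
    have rb := prim_zero_mono hM hr' hr.2
    refine le_min ?_ (le_min ?_ ?_)
    · obtain ⟨y, hy, hy'⟩ := hCeq s r
      rw [hy', hgval]
      have h1 := hκ r ⟨by linarith [hr.1], by linarith [hr.2]⟩ y (hYsub y hy)
      have h2 := min_le_left c (min ηP ηQ)
      have h3 : κ / 2 * ε ≤ κ / 2 * s := mul_le_mul_of_nonneg_left hs (by positivity)
      have h4 : 0 < κ * ε := by positivity
      linarith
    · have h1 := hPlo s r hs0 hr' (abs_le.2 ⟨by linarith, by linarith⟩)
      have h2 := (min_le_right c (min ηP ηQ)).trans (min_le_left _ _)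
      linarith [hadd r b hr' hr.2]
    · have h1 := hQlo s r hs0 hr' (abs_le.2 ⟨by linarith, by linarith⟩)
      have h2 := (min_le_right c (min ηP ηQ)).trans (min_le_right _ _)
      linarith [hsub a r ha hr.1]

/-- The potential of the solution, up to the term `-s/2`, starting from the initial potential:
the supremum of levels with
`ε → 0` on exhausting intervals. At positive times only finitely many levels matter locally. -/
lemma exists_potential {M : ℝ} {u0 : ℝ → ℝ} (hM : 0 < M) (hm : Measurable u0)
    (hu : ∀ r, u0 r ∈ Ioo (-1 : ℝ) 1) :
    ∃ U : ℝ → ℝ → ℝ,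
      (∀ s s' r r', 0 ≤ s → 0 ≤ s' → 2 * M < r → 2 * M < r' →
        |U s r - U s' r'| ≤ |s - s'| + |prim M 0 r - prim M 0 r'|) ∧
      (∀ r, 2 * M < r → U 0 r = pot M u0 r) ∧
      ∀ s₁ s₂ a b, 0 < s₁ → 2 * M < a → FinSel M U s₁ s₂ a b := by
  have hlev : ∀ k : ℕ, _ := fun k => exists_level (a := 2 * M + 1 / ((k : ℝ) + 1))
    (b := 2 * M + ((k : ℝ) + 1)) (ε := 1 / ((k : ℝ) + 1)) hM hm hu
    (by have : 0 < 1 / ((k : ℝ) + 1) := by positivity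
        linarith)
    (by have : 1 / ((k : ℝ) + 1) ≤ 1 := (div_le_one (by positivity)).2
          (by linarith [k.cast_nonneg (α := ℝ)])
        linarith [k.cast_nonneg (α := ℝ)]) (by positivity)
  choose V hV hVup η hη hVlo using hlev
  have hε1 : ∀ k : ℕ, 1 / ((k : ℝ) + 1) ≤ 1 := fun k =>
    (div_le_one (by positivity)).2 (by linarith [k.cast_nonneg (α := ℝ)])
  have hle : ∀ k s r, 0 ≤ s → 2 * M < r → V k s r ≤ pot M u0 r + s := fun k s r hs hr => by
    have := hVup k s r hs hr
    have := mul_le_mul_of_nonneg_right (hε1 k) hs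
    linarith
  have hbdd : ∀ s r, 0 ≤ s → 2 * M < r → BddAbove (range fun k => V k s r) := fun s r hs hr =>
    ⟨pot M u0 r + s, by rintro _ ⟨k, rfl⟩; exact hle k s r hs hr⟩
  set U : ℝ → ℝ → ℝ := fun s r => ⨆ k, V k s r with hU
  have hUle : ∀ s s' r r', 0 ≤ s → 0 ≤ s' → 2 * M < r → 2 * M < r' →
      U s r ≤ U s' r' + (|s - s'| + |prim M 0 r - prim M 0 r'|) := by
    intro s s' r r' hs hs' hr hr'
    refine ciSup_le fun k => ((hV k).lip s s' r r' hr hr').trans ?_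
    have := le_ciSup (hbdd s' r' hs' hr') k
    linarith
  -- every box with positive times is eventually inside the range controlled by the levels
  have hbig : ∀ s₁ a b : ℝ, 0 < s₁ → 2 * M < a → ∃ k : ℕ, 1 / ((k : ℝ) + 1) ≤ s₁ ∧
      Icc a b ⊆ Icc (2 * M + 1 / ((k : ℝ) + 1)) (2 * M + ((k : ℝ) + 1)) := by
    intro s₁ a b hs₁ ha
    have ev := (tendsto_one_div_add_atTop_nhds_zero_nat (𝕜 := ℝ)).eventually
      (gt_mem_nhds (lt_min hs₁ (sub_pos.2 ha)))
    obtain ⟨k, h1, h2⟩ := (ev.and (tendsto_natCast_atTop_atTop.eventually_ge_atTop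
      (b - 2 * M))).exists
    have h3 := h1.trans_le (min_le_left _ _)
    have h4 := h1.trans_le (min_le_right _ _)
    exact ⟨k, h3.le, Icc_subset_Icc (by linarith) (by linarith)⟩
  refine ⟨U, ?_, ?_, ?_⟩
  · intro s s' r r' hs hs' hr hr'
    have h1 := hUle s s' r r' hs hs' hr hr'
    have h2 := hUle s' s r' r hs' hs hr' hr
    rw [abs_sub_comm s', abs_sub_comm (prim M 0 r')] at h2
    exact abs_le.2 ⟨by linarith, by linarith⟩
  · intro r hr
    apply le_antisymm
    · exact ciSup_le fun k => by simpa using hle k 0 r le_rfl hr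
    · refine le_of_forall_pos_le_add fun s hs => ?_
      obtain ⟨k, hk1, hk2⟩ := hbig s r r hs hr
      have h1 := hVlo k s r hk1 (hk2 ⟨le_rfl, le_rfl⟩)
      have h2 := le_ciSup (hbdd s r hs.le hr) k
      have h3 := hUle s 0 r r hs.le le_rfl hr hr
      simp only [sub_zero, sub_self, abs_zero, add_zero, abs_of_pos hs] at h3
      have h4 := hη k
      simp only [hU] at h3 ⊢
      linarith
  · intro s₁ s₂ a b hs₁ ha
    obtain ⟨m, hm1, hm2⟩ := hbig s₁ a b hs₁ ha
    have ev := ((tendsto_one_div_add_atTop_nhds_zero_nat (𝕜 := ℝ)).mul_const s₂).eventually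
      (gt_mem_nhds (show 0 * s₂ < η m by simpa using hη m))
    obtain ⟨N', hN'⟩ := eventually_atTop.1 ev
    set N := max N' m with hN
    have hfin : ∀ k, FinSel M (V k) s₁ s₂ a b := fun k => by
      obtain ⟨F, h1, h2⟩ := (hV k).fin s₂ a b ha
      exact ⟨F, h1, fun s hs => h2 s ⟨hs₁.le.trans hs.1, hs.2⟩⟩
    choose F hF hF' using hfin
    classical
    refine ⟨(Finset.range (N + 1)).biUnion F, ?_, ?_⟩
    · intro e he
      obtain ⟨k, _, hk⟩ := Finset.mem_biUnion.1 he
      exact hF k e hk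
    · intro s hs r hr
      have hs0 : 0 ≤ s := hs₁.le.trans hs.1
      have hr' : 2 * M < r := by linarith [hr.1]
      obtain ⟨k, hk, hUk⟩ := iSup_eq_of_tail (f := fun k => V k s r) (le_max_right N' m) (by
        intro n hn
        have h1 := hVup n s r hs0 hr'
        have h2 := hVlo m s r (hm1.trans hs.1) (hm2 hr)
        have h3 := hN' n ((le_max_left _ _).trans hn.le)
        have h4 : 1 / ((n : ℝ) + 1) * s ≤ 1 / ((n : ℝ) + 1) * s₂ :=
          mul_le_mul_of_nonneg_left hs.2 (by positivity)
        linarith)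
      obtain ⟨e, he, hVe⟩ := hF' k s hs r hr
      exact ⟨e, Finset.mem_biUnion.2 ⟨k, by simp; omega, he⟩, hUk.trans hVe⟩

/-! ### The velocity: range, finiteness of the exceptional set, bounded variation -/

/-- The point `(s, r)` of the outer domain has a neighbourhood on which `U` is a single elementary
potential. -/
def Good (M : ℝ) (U : ℝ → ℝ → ℝ) (s r : ℝ) : Prop :=
  2 * M < r ∧ ∃ e, Valid e ∧ ∀ᶠ p in 𝓝 (s, r), U p.1 p.2 = elem M e p.1 p.2

open Classical in
/-- The velocity `u = f² ∂_r U`, set to `0` where `U` is not locally elementary. -/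
noncomputable def vel (M : ℝ) (U : ℝ → ℝ → ℝ) (s r : ℝ) : ℝ :=
  if Good M U s r then (lapse M r) ^ 2 * deriv (U s) r else 0

section Velocity

variable {M : ℝ} {U : ℝ → ℝ → ℝ}

lemma hasDerivAt_elem (hM : 0 < M) (e : ℝ × ℝ × ℝ) (s : ℝ) {r : ℝ} (hr : 2 * M < r) :
    HasDerivAt (elem M e s) (e.1 * slope M e.2.1 r) r :=
  (((hasDerivAt_prim hM e.2.1 hr).const_mul e.1).const_add e.2.2).add_const _

lemma lapse_sq_mul_slope (hM : 0 < M) (κ : ℝ) {r : ℝ} (hr : 2 * M < r) :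
    (lapse M r) ^ 2 * slope M κ r = √(1 - κ * lapse M r) := by
  have := lapse_pos hM hr
  unfold slope
  field_simp

lemma hasDerivAt_of_eventually (hM : 0 < M) {e : ℝ × ℝ × ℝ} {s r : ℝ} (hr : 2 * M < r)
    (h : ∀ᶠ p in 𝓝 (s, r), U p.1 p.2 = elem M e p.1 p.2) :
    HasDerivAt (U s) (e.1 * slope M e.2.1 r) r := by
  have hc : Tendsto (fun r' : ℝ => (s, r')) (𝓝 r) (𝓝 (s, r)) :=
    (Continuous.prodMk_right s).tendsto r
  exact (hasDerivAt_elem hM e s hr).congr_of_eventuallyEq (hc.eventually h)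

lemma vel_eq_of_eventually (hM : 0 < M) {e : ℝ × ℝ × ℝ} {s r : ℝ} (hr : 2 * M < r)
    (he : Valid e) (h : ∀ᶠ p in 𝓝 (s, r), U p.1 p.2 = elem M e p.1 p.2) :
    vel M U s r = e.1 * √(1 - e.2.1 * lapse M r) := by
  rw [vel, if_pos ⟨hr, e, he, h⟩, (hasDerivAt_of_eventually hM hr h).deriv,
    ← lapse_sq_mul_slope hM _ hr]
  ring

lemma one_sub_mul_lapse_pos (hM : 0 < M) {κ r : ℝ} (h0 : 0 < κ) (h1 : κ < 1)
    (hr : 2 * M < r) : 0 < 1 - κ * lapse M r := by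
  have := lapse_pos hM hr
  have := lapse_lt_one hM hr
  nlinarith

lemma vel_mem (hM : 0 < M) (s r : ℝ) : vel M U s r ∈ Ioo (-1 : ℝ) 1 := by
  by_cases hg : Good M U s r
  · obtain ⟨hr, e, he, h⟩ := hg
    rw [vel_eq_of_eventually hM hr he h]
    have h1 : √(1 - e.2.1 * lapse M r) < 1 := by
      rw [Real.sqrt_lt' one_pos]
      nlinarith [mul_pos he.2.1 (lapse_pos hM hr)]
    have h2 := Real.sqrt_nonneg (1 - e.2.1 * lapse M r)
    rcases he.1 with h | h <;> rw [h] <;> constructor <;> linarith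
  · rw [vel, if_neg hg]; norm_num

/-- The equations `∂_r U = f⁻² u` and `∂_s U = (1 - u²) / (2 f)`. -/
lemma Good.hasDerivAt (hM : 0 < M) {s r : ℝ} (hg : Good M U s r) :
    HasDerivAt (U s) (((lapse M r) ^ 2)⁻¹ * vel M U s r) r ∧
      HasDerivAt (fun s => U s r) ((1 - (vel M U s r) ^ 2) / (2 * lapse M r)) s := by
  obtain ⟨hr, e, he, h⟩ := hg
  have hf := lapse_pos hM hr
  rw [vel_eq_of_eventually hM hr he h]
  constructor
  · refine (hasDerivAt_of_eventually hM hr h).congr_deriv ?_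
    unfold slope; ring
  · have hc : Tendsto (fun s' : ℝ => (s', r)) (𝓝 s) (𝓝 (s, r)) :=
      (Continuous.prodMk_left r).tendsto s
    have h1 : HasDerivAt (fun s => elem M e s r) (e.2.1 / 2 * 1) s :=
      ((hasDerivAt_id s).const_mul (e.2.1 / 2)).const_add _
    refine (h1.congr_of_eventuallyEq (hc.eventually h)).congr_deriv ?_
    rw [mul_pow, Real.sq_sqrt (one_sub_mul_lapse_pos hM he.2.1 he.2.2 hr).le]
    have : e.1 ^ 2 = 1 := by rcases he.1 with h | h <;> rw [h] <;> norm_num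
    rw [this]
    field_simp
    ring

lemma Good.hasDerivAt_vel (hM : 0 < M) {s r : ℝ} (hg : Good M U s r) :
    ∃ v, HasDerivAt (vel M U s) v r ∧ ‖v‖ ≤ 1 / (4 * M) := by
  obtain ⟨hr, e, he, h⟩ := hg
  have hr0 : 0 < r := by linarith
  have hpos := one_sub_mul_lapse_pos hM he.2.1 he.2.2 hr
  have hc : Tendsto (fun r' : ℝ => (s, r')) (𝓝 r) (𝓝 (s, r)) :=
    (Continuous.prodMk_right s).tendsto r
  have hev : vel M U s =ᶠ[𝓝 r] fun r' => e.1 * √(1 - e.2.1 * lapse M r') := by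
    filter_upwards [hc.eventually h.eventually_nhds, Ioi_mem_nhds hr] with r' h1 h2
    exact vel_eq_of_eventually hM h2 he h1
  have hd := ((((hasDerivAt_lapse hM hr).const_mul e.2.1).const_sub 1).sqrt hpos.ne').const_mul e.1
  refine ⟨_, hd.congr_of_eventuallyEq hev, ?_⟩
  have hx1 : 2 * M / r < 1 := (div_lt_one hr0).2 hr
  have hx0 : 0 < 2 * M / r := by positivity
  have hsq : 2 * M / r ≤ √(1 - e.2.1 * lapse M r) := by
    apply Real.le_sqrt_of_sq_le
    have := lapse_pos hM hr
    have : lapse M r = 1 - 2 * M / r := rfl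
    nlinarith [he.2.2]
  have hσ : ‖e.1‖ = 1 := by rcases he.1 with h | h <;> simp [h]
  have hsp : 0 < √(1 - e.2.1 * lapse M r) := Real.sqrt_pos.2 hpos
  rw [norm_mul, hσ, one_mul, norm_div, norm_neg, Real.norm_of_nonneg
    (mul_nonneg he.2.1.le (by positivity)), Real.norm_of_nonneg (by positivity)]
  calc _ ≤ 1 * (2 * M / r ^ 2) / (2 * (2 * M / r)) := by
        gcongr
        exact he.2.2.le
    _ = 1 / (2 * r) := by field_simp
    _ ≤ _ := by gcongr 1 / ?_; linarith

/-- Two distinct elementary potentials agree for at most one `r` at each time. -/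
lemma elem_cross (hM : 0 < M) {e e' : ℝ × ℝ × ℝ} (he : Valid e) (he' : Valid e') (hne : e ≠ e')
    (s : ℝ) : {r | 2 * M < r ∧ elem M e s r = elem M e' s r}.Subsingleton := by
  have key : ∀ x y, 2 * M < x → x < y → elem M e s x = elem M e' s x →
      elem M e s y = elem M e' s y → False := by
    intro x y hx hxy h1 h2
    have hd : ∀ z, 2 * M < z → HasDerivAt (fun z => elem M e s z - elem M e' s z)
        (e.1 * slope M e.2.1 z - e'.1 * slope M e'.2.1 z) z := fun z hz =>
      (hasDerivAt_elem hM e s hz).sub (hasDerivAt_elem hM e' s hz)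
    obtain ⟨z, hz, h3⟩ := exists_hasDerivAt_eq_zero hxy
      (fun z hz => (hd z (by linarith [hz.1])).continuousAt.continuousWithinAt)
      (by rw [h1, h2]; ring) (fun z hz => hd z (by linarith [hz.1]))
    have hz' : 2 * M < z := by linarith [hz.1]
    have hf := lapse_pos hM hz'
    have p1 := one_sub_mul_lapse_pos hM he.2.1 he.2.2 hz'
    have p2 := one_sub_mul_lapse_pos hM he'.2.1 he'.2.2 hz'
    have h4 : e.1 * √(1 - e.2.1 * lapse M z) = e'.1 * √(1 - e'.2.1 * lapse M z) := by
      rw [← lapse_sq_mul_slope hM _ hz', ← lapse_sq_mul_slope hM _ hz']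
      linear_combination (lapse M z) ^ 2 * h3
    have hσ : e.1 ^ 2 = 1 := by rcases he.1 with h | h <;> rw [h] <;> norm_num
    have hσ' : e'.1 ^ 2 = 1 := by rcases he'.1 with h | h <;> rw [h] <;> norm_num
    have h5 : e.2.1 = e'.2.1 := by
      have := congrArg (· ^ 2) h4
      simp only [mul_pow, Real.sq_sqrt p1.le, Real.sq_sqrt p2.le, hσ, hσ'] at this
      have : (e.2.1 - e'.2.1) * lapse M z = 0 := by linarith
      rcases mul_eq_zero.1 this with h | h
      · linarith
      · exact absurd h hf.ne'
    have h6 : e.1 = e'.1 := by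
      rw [h5] at h4
      exact mul_right_cancel₀ (Real.sqrt_pos.2 p2).ne' h4
    have h7 : e.2.2 = e'.2.2 := by
      unfold elem at h1
      rw [h5, h6] at h1
      linarith
    exact hne (Prod.ext h6 (Prod.ext h5 h7))
  rintro x ⟨hx, h1⟩ y ⟨hy, h2⟩
  rcases lt_trichotomy x y with h | h | h
  · exact (key x y hx h h1 h2).elim
  · exact h
  · exact (key y x hy h h2 h1).elim

lemma continuousAt_elem (hM : 0 < M) (e : ℝ × ℝ × ℝ) (s : ℝ) {r : ℝ} (hr : 2 * M < r) :
    ContinuousAt (fun p : ℝ × ℝ => elem M e p.1 p.2) (s, r) := by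
  have h1 : ContinuousAt (fun p : ℝ × ℝ => prim M e.2.1 p.2) (s, r) :=
    ContinuousAt.comp_of_eq (hasDerivAt_prim hM e.2.1 hr).continuousAt continuousAt_snd rfl
  unfold elem
  fun_prop

lemma continuousWithinAt_potential (hM : 0 < M)
    (hL : ∀ s s' r r', 0 ≤ s → 0 ≤ s' → 2 * M < r → 2 * M < r' →
        |U s r - U s' r'| ≤ |s - s'| + |prim M 0 r - prim M 0 r'|) {s r : ℝ} (hs : 0 ≤ s)
    (hr : 2 * M < r) :
    ContinuousWithinAt (fun p : ℝ × ℝ => U p.1 p.2) (Ici 0 ×ˢ Ioi (2 * M)) (s, r) := by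
  have h1 : ContinuousAt (fun p : ℝ × ℝ => prim M 0 p.2) (s, r) :=
    ContinuousAt.comp_of_eq (hasDerivAt_prim hM 0 hr).continuousAt continuousAt_snd rfl
  have h2 : ContinuousAt (fun p : ℝ × ℝ => |p.1 - s| + |prim M 0 p.2 - prim M 0 r|) (s, r) := by
    fun_prop
  have h3 : Tendsto (fun p : ℝ × ℝ => |p.1 - s| + |prim M 0 p.2 - prim M 0 r|)
      (𝓝[Ici 0 ×ˢ Ioi (2 * M)] (s, r)) (𝓝 0) := by
    simpa using (h2.tendsto.mono_left nhdsWithin_le_nhds)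
  rw [ContinuousWithinAt, tendsto_iff_norm_sub_tendsto_zero]
  refine squeeze_zero' (Eventually.of_forall fun _ => norm_nonneg _) ?_ h3
  filter_upwards [self_mem_nhdsWithin] with p hp
  exact hL p.1 s p.2 r hp.1 hs hp.2 hr

/-- At a positive time, `U` fails to be locally elementary at finitely many `r` of a compact
interval only: at a bad point two distinct elementary potentials of the selection agree. -/
lemma finite_not_good (hM : 0 < M)
    (hL : ∀ s s' r r', 0 ≤ s → 0 ≤ s' → 2 * M < r → 2 * M < r' →
        |U s r - U s' r'| ≤ |s - s'| + |prim M 0 r - prim M 0 r'|)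
    (hF : ∀ s₁ s₂ a b, 0 < s₁ → 2 * M < a → FinSel M U s₁ s₂ a b)
    {s a : ℝ} (b : ℝ) (hs : 0 < s) (ha : 2 * M < a) :
    {r | r ∈ Icc a b ∧ ¬ Good M U s r}.Finite := by
  obtain ⟨F, hFv, hFs⟩ := hF (s / 2) (s + 1) ((2 * M + a) / 2) (b + 1) (by linarith) (by linarith)
  have hfin : (⋃ e ∈ F, ⋃ e' ∈ {e' ∈ (F : Set (ℝ × ℝ × ℝ)) | e ≠ e'},
      {r | 2 * M < r ∧ elem M e s r = elem M e' s r}).Finite := by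
    refine F.finite_toSet.biUnion fun e he => ?_
    refine (F.finite_toSet.subset (sep_subset _ _)).biUnion fun e' he' => ?_
    exact (elem_cross hM (hFv e he) (hFv e' he'.1) he'.2 s).finite
  refine hfin.subset ?_
  rintro r ⟨hr, hbad⟩
  by_contra hout
  simp only [mem_iUnion, not_exists] at hout
  apply hbad
  have hr' : 2 * M < r := by linarith [hr.1]
  obtain ⟨e, he, heq⟩ := hFs s ⟨by linarith, by linarith⟩ r ⟨by linarith [hr.1], by linarith [hr.2]⟩
  refine ⟨hr', e, hFv e he, ?_⟩
  have hUc : ContinuousAt (fun p : ℝ × ℝ => U p.1 p.2) (s, r) :=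
    (continuousWithinAt_potential hM hL hs.le hr').continuousAt
      (prod_mem_nhds (Ici_mem_nhds hs) (Ioi_mem_nhds hr'))
  have hne : ∀ᶠ p in 𝓝 (s, r), ∀ e' ∈ F, e ≠ e' → U p.1 p.2 ≠ elem M e' p.1 p.2 := by
    refine (Filter.eventually_all_finset F).2 fun e' he' => ?_
    by_cases hee : e = e'
    · exact Eventually.of_forall fun _ h => absurd hee h
    · have hd := (hUc.sub (continuousAt_elem hM e' s hr')).eventually_ne (y := (0 : ℝ)) (by
        intro h0
        exact hout e he e' ⟨he', hee⟩ ⟨hr', by rw [← heq]; exact sub_eq_zero.1 h0⟩)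
      exact hd.mono fun p hp _ h => hp (sub_eq_zero.2 h)
  have hbox : Icc (s / 2) (s + 1) ×ˢ Icc ((2 * M + a) / 2) (b + 1) ∈ 𝓝 (s, r) :=
    prod_mem_nhds (Icc_mem_nhds (by linarith) (by linarith))
      (Icc_mem_nhds (by linarith [hr.1]) (by linarith [hr.2]))
  filter_upwards [hne, hbox] with p hp hpb
  obtain ⟨e', he', hUe⟩ := hFs p.1 hpb.1 p.2 hpb.2
  by_cases hee : e = e'
  · rw [hee]; exact hUe
  · exact (hp e' he' hee hUe).elim

/-- A bounded function with bounded derivative off a finite set has bounded variation: its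
increments are dominated by those of a monotone `h`, linear plus jumps of height `2` at the
exceptional points, once from the left and once from the right. -/
lemma locallyBoundedVariationOn_of_finite {v : ℝ → ℝ} {a b L : ℝ} {B : Set ℝ} (hB : B.Finite)
    (hv : ∀ r, v r ∈ Ioo (-1 : ℝ) 1)
    (hd : ∀ r ∈ Icc a b, r ∉ B → ∃ v', HasDerivAt v v' r ∧ ‖v'‖ ≤ L) (hL : 0 ≤ L) :
    LocallyBoundedVariationOn v (Icc a b) := by
  set h : ℝ → ℝ := fun r => L * r + 2 * ((B ∩ Iic r).ncard : ℝ) + 2 * ((B ∩ Iio r).ncard : ℝ)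
    with hh
  have key : ∀ x ∈ Icc a b, ∀ y ∈ Icc a b, x ≤ y → |v y - v x| ≤ h y - h x := by
    intro x hx y hy hxy
    rcases hxy.eq_or_lt with rfl | hlt
    · simp
    have m1 : (B ∩ Iic x).ncard ≤ (B ∩ Iic y).ncard :=
      ncard_le_ncard (inter_subset_inter_right _ (Iic_subset_Iic.2 hxy)) (hB.inter_of_left _)
    have m2 : (B ∩ Iio x).ncard ≤ (B ∩ Iio y).ncard :=
      ncard_le_ncard (inter_subset_inter_right _ (Iio_subset_Iio hxy)) (hB.inter_of_left _)
    have hLxy : 0 ≤ L * (y - x) := mul_nonneg hL (by linarith)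
    by_cases hex : ∃ z ∈ B, z ∈ Icc x y
    · obtain ⟨z, hz, hz1, hz2⟩ := hex
      have h2 : |v y - v x| ≤ 2 := by
        have h3 := hv x
        have h4 := hv y
        exact abs_le.2 ⟨by linarith [h3.2, h4.1], by linarith [h3.1, h4.2]⟩
      rcases hz1.eq_or_lt with rfl | hz1
      · have : (B ∩ Iio x).ncard < (B ∩ Iio y).ncard :=
          ncard_lt_ncard ⟨inter_subset_inter_right _ (Iio_subset_Iio hxy),
            fun hc => lt_irrefl x (hc ⟨hz, hlt⟩).2⟩ (hB.inter_of_left _)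
        have c1 : ((B ∩ Iio x).ncard : ℝ) + 1 ≤ (B ∩ Iio y).ncard := by exact_mod_cast this
        have c2 : ((B ∩ Iic x).ncard : ℝ) ≤ (B ∩ Iic y).ncard := by exact_mod_cast m1
        simp only [hh]; linarith
      · have : (B ∩ Iic x).ncard < (B ∩ Iic y).ncard :=
          ncard_lt_ncard ⟨inter_subset_inter_right _ (Iic_subset_Iic.2 hxy),
            fun hc => not_le.2 hz1 (hc ⟨hz, hz2⟩).2⟩ (hB.inter_of_left _)
        have c1 : ((B ∩ Iic x).ncard : ℝ) + 1 ≤ (B ∩ Iic y).ncard := by exact_mod_cast this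
        have c2 : ((B ∩ Iio x).ncard : ℝ) ≤ (B ∩ Iio y).ncard := by exact_mod_cast m2
        simp only [hh]; linarith
    · have hd' : ∀ z ∈ Icc x y, ∃ v', HasDerivAt v v' z ∧ ‖v'‖ ≤ L := fun z hz =>
        hd z ⟨hx.1.trans hz.1, hz.2.trans hy.2⟩ fun hzB => hex ⟨z, hzB, hz⟩
      have h2 : ‖v y - v x‖ ≤ L * ‖y - x‖ := by
        refine (convex_Icc x y).norm_image_sub_le_of_norm_deriv_le (𝕜 := ℝ) (fun z hz => ?_)
          (fun z hz => ?_) (left_mem_Icc.2 hxy) (right_mem_Icc.2 hxy)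
        · obtain ⟨v', h3, _⟩ := hd' z hz
          exact h3.differentiableAt
        · obtain ⟨v', h3, h4⟩ := hd' z hz
          rwa [h3.deriv]
      rw [Real.norm_eq_abs, Real.norm_of_nonneg (by linarith)] at h2
      have c1 : ((B ∩ Iic x).ncard : ℝ) ≤ (B ∩ Iic y).ncard := by exact_mod_cast m1
      have c2 : ((B ∩ Iio x).ncard : ℝ) ≤ (B ∩ Iio y).ncard := by exact_mod_cast m2
      simp only [hh]; linarith
  have hmono : MonotoneOn h (Icc a b) := fun x hx y hy hxy => by
    have := (abs_nonneg _).trans (key x hx y hy hxy)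
    linarith
  intro x y hx hy
  refine ne_top_of_le_ne_top (hmono.locallyBoundedVariationOn x y hx hy) ?_
  refine iSup_mono fun p => Finset.sum_le_sum fun i _ => ?_
  have hi := key _ (p.2.2.2 i).1 _ (p.2.2.2 (i + 1)).1 (p.2.2.1 i.le_succ)
  rw [edist_dist, edist_dist, Real.dist_eq, Real.dist_eq]
  exact ENNReal.ofReal_le_ofReal (hi.trans (le_abs_self _))

/-- The potential and the velocity of the solution, in the time variable `s = t - t₀`. -/
lemma exists_potential_velocity {u0 : ℝ → ℝ} (hM : 0 < M) (hm : Measurable u0)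
    (hu : ∀ r, u0 r ∈ Ioo (-1 : ℝ) 1) :
    ∃ U v : ℝ → ℝ → ℝ,
      (∀ s s' r r', 0 ≤ s → 0 ≤ s' → 2 * M < r → 2 * M < r' →
        |U s r - U s' r'| ≤ |s - s'| + |prim M 0 r - prim M 0 r'|) ∧
      (∀ r, 2 * M < r → U 0 r = pot M u0 r) ∧
      (∀ s r, v s r ∈ Ioo (-1 : ℝ) 1) ∧
      (∀ s, 0 < s → LocallyBoundedVariationOn (v s) (Ioi (2 * M))) ∧
      ∀ s a b, 0 < s → 2 * M < a → ∃ B : Set ℝ, B.Finite ∧ ∀ r ∈ Icc a b, r ∉ B →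
        HasDerivAt (U s) (((lapse M r) ^ 2)⁻¹ * v s r) r ∧
        HasDerivAt (fun s => U s r) ((1 - (v s r) ^ 2) / (2 * lapse M r)) s ∧
        ContinuousAt (v s) r := by
  obtain ⟨U, hL, h0, hF⟩ := exists_potential hM hm hu
  refine ⟨U, vel M U, hL, h0, vel_mem hM, fun s hs a b ha hb => ?_, fun s a b hs ha =>
    ⟨_, finite_not_good hM hL hF b hs ha, fun r hr hrB => ?_⟩⟩
  · have hsub : Ioi (2 * M) ∩ Icc a b = Icc a b :=
      inter_eq_right.2 fun x hx => lt_of_lt_of_le ha hx.1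
    rcases lt_or_ge b a with hba | hab
    · rw [Icc_eq_empty (not_le.2 hba), inter_empty]
      exact BoundedVariationOn.mono (s := ∅) (by simp [BoundedVariationOn]) subset_rfl
    · have h1 := locallyBoundedVariationOn_of_finite (a := a) (b := b) (L := 1 / (4 * M))
        (finite_not_good hM hL hF b hs ha) (vel_mem (U := U) hM s)
        (fun r hr hrB => Good.hasDerivAt_vel hM (by_contra fun hg => hrB ⟨hr, hg⟩)) (by positivity)
      have := h1 a b (left_mem_Icc.2 hab) (right_mem_Icc.2 hab)
      rw [inter_self] at this
      rwa [hsub]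
  · have hg : Good M U s r := by_contra fun hg => hrB ⟨hr, hg⟩
    obtain ⟨v', hv', _⟩ := hg.hasDerivAt_vel hM
    exact ⟨(hg.hasDerivAt hM).1, (hg.hasDerivAt hM).2, hv'.continuousAt⟩

end Velocity

/-! ### From a potential to the weak formulation -/

section Weak

/-- Integration by parts of a Lipschitz function against a smooth function vanishing at the
endpoints. -/
lemma integral_mul_deriv_of_lipschitz {F F' g : ℝ → ℝ} {a b : ℝ} {L : NNReal} (hab : a ≤ b)
    (hF : LipschitzOnWith L F (Icc a b)) (hF' : ∀ᵐ r, r ∈ Icc a b → HasDerivAt F (F' r) r)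
    (hg : ContDiff ℝ 1 g) (ha : g a = 0) (hb : g b = 0) :
    ∫ r in a..b, F r * deriv g r = -∫ r in a..b, F' r * g r := by
  have h1 : AbsolutelyContinuousOnInterval F a b :=
    LipschitzOnWith.absolutelyContinuousOnInterval (K := L) (by rwa [uIcc_of_le hab])
  obtain ⟨K, hK⟩ := hg.contDiffOn.exists_lipschitzOnWith (s := uIcc a b) one_ne_zero
    (by rw [uIcc_of_le hab]; exact convex_Icc a b) isCompact_uIcc
  rw [h1.integral_mul_deriv_eq_deriv_mul hK.absolutelyContinuousOnInterval, ha, hb]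
  have : ∫ r in a..b, deriv F r * g r = ∫ r in a..b, F' r * g r := by
    apply intervalIntegral.integral_congr_ae
    filter_upwards [hF'] with r hr hrI
    rw [uIoc_of_le hab] at hrI
    rw [(hr (Ioc_subset_Icc_self hrI)).deriv]
  rw [this]; ring

lemma deriv_fst {ϕ : ℝ × ℝ → ℝ} (hϕ : Differentiable ℝ ϕ) (t r : ℝ) :
    HasDerivAt (fun s => ϕ (s, r)) (fderiv ℝ ϕ (t, r) (1, 0)) t :=
  (hϕ (t, r)).hasFDerivAt.comp_hasDerivAt t ((hasDerivAt_id t).prodMk (hasDerivAt_const t r))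

lemma deriv_snd {ϕ : ℝ × ℝ → ℝ} (hϕ : Differentiable ℝ ϕ) (t r : ℝ) :
    HasDerivAt (fun x => ϕ (t, x)) (fderiv ℝ ϕ (t, r) (0, 1)) r :=
  (hϕ (t, r)).hasFDerivAt.comp_hasDerivAt r ((hasDerivAt_const r t).prodMk (hasDerivAt_id r))

/-- If `W` is Lipschitz with `∂_r W = p` and `∂_t W = q` almost everywhere in `r` at each time,
then `∂_t p = ∂_r q` holds weakly, with initial datum `p0 = ∂_r W(t₀, ·)`. The function
`t ↦ ∫ W ∂_r ϕ dr` has derivative `∫ (q ∂_r ϕ - p ∂_t ϕ) dr`. -/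
lemma weak_of_potential {W p q : ℝ → ℝ → ℝ} {p0 : ℝ → ℝ} {t0 a b : ℝ} {L C : ℝ} (hab : a ≤ b)
    (hL : 0 ≤ L)
    (hW : ∀ t t' r r', t0 ≤ t → t0 ≤ t' → r ∈ Icc a b → r' ∈ Icc a b →
      |W t r - W t' r'| ≤ L * (|t - t'| + |r - r'|))
    (hd : ∀ t, t0 < t → ∀ᵐ r, r ∈ Icc a b →
      HasDerivAt (W t) (p t r) r ∧ HasDerivAt (fun s => W s r) (q t r) t)
    (hd0 : ∀ᵐ r, r ∈ Icc a b → HasDerivAt (W t0) (p0 r) r)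
    (hq : ∀ t, t0 < t → AEStronglyMeasurable (q t) (volume.restrict (Ioc a b)))
    (hC : ∀ t r, t0 < t → r ∈ Icc a b → |p t r| ≤ C ∧ |q t r| ≤ C)
    {ϕ : ℝ × ℝ → ℝ} (hϕ : ContDiff ℝ (⊤ : ℕ∞) ϕ) (hϕc : HasCompactSupport ϕ)
    (hϕa : ∀ t, ϕ (t, a) = 0) (hϕb : ∀ t, ϕ (t, b) = 0) :
    (∫ t in Ioi t0, ∫ r in a..b, (p t r * deriv (fun s => ϕ (s, r)) t
        - q t r * deriv (fun x => ϕ (t, x)) r))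
      + (∫ r in a..b, p0 r * ϕ (t0, r)) = 0 := by
  have hdiff : Differentiable ℝ ϕ := hϕ.differentiable (by simp)
  set ϕt : ℝ × ℝ → ℝ := fun z => fderiv ℝ ϕ z (1, 0) with hϕt
  set ϕr : ℝ × ℝ → ℝ := fun z => fderiv ℝ ϕ z (0, 1) with hϕr
  have hst : ContDiff ℝ (⊤ : ℕ∞) ϕt := (hϕ.fderiv_right (by simp)).clm_apply contDiff_const
  have hsr : ContDiff ℝ (⊤ : ℕ∞) ϕr := (hϕ.fderiv_right (by simp)).clm_apply contDiff_const
  have hct : HasCompactSupport ϕt := hϕc.fderiv_apply ℝ _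
  have hcr : HasCompactSupport ϕr := hϕc.fderiv_apply ℝ _
  have hdt : ∀ t r, deriv (fun s => ϕ (s, r)) t = ϕt (t, r) := fun t r =>
    (deriv_fst hdiff t r).deriv
  have hdr : ∀ t r, deriv (fun x => ϕ (t, x)) r = ϕr (t, r) := fun t r =>
    (deriv_snd hdiff t r).deriv
  have hmixed : ∀ z, fderiv ℝ ϕr z (1, 0) = fderiv ℝ ϕt z (0, 1) := by
    intro z
    have hfd : DifferentiableAt ℝ (fderiv ℝ ϕ) z :=
      ((hϕ.fderiv_right (m := (⊤ : ℕ∞)) (by simp)).differentiable (by simp)) z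
    have hs : IsSymmSndFDerivAt ℝ ϕ z := hϕ.contDiffAt.isSymmSndFDerivAt (by
      rw [minSmoothness_of_isRCLikeNormedField]; exact WithTop.coe_le_coe.2 (le_top : (2 : ℕ∞) ≤ ⊤))
    have e1 : ∀ x : ℝ × ℝ, fderiv ℝ (fun z => fderiv ℝ ϕ z x) z
        = (fderiv ℝ (fderiv ℝ ϕ) z).flip x := fun x => by
      rw [fderiv_clm_apply hfd (differentiableAt_const _)]; simp
    rw [hϕr, hϕt, e1, e1]
    exact hs (1, 0) (0, 1)
  obtain ⟨Kt, hKt⟩ := hct.exists_bound_of_continuous hst.continuous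
  obtain ⟨Kr, hKr⟩ := hcr.exists_bound_of_continuous hsr.continuous
  obtain ⟨Lr, hLr⟩ := ContDiff.lipschitzWith_of_hasCompactSupport hcr hsr (by simp)
  have hKt0 : 0 ≤ Kt := (norm_nonneg _).trans (hKt (0, 0))
  have hKr0 : 0 ≤ Kr := (norm_nonneg _).trans (hKr (0, 0))
  have haI : a ∈ Icc a b := left_mem_Icc.2 hab
  -- a time beyond which `ϕ` vanishes
  obtain ⟨T, hT0, hT⟩ : ∃ T, t0 ≤ T ∧ ∀ t r, T < t → ϕt (t, r) = 0 ∧ ϕr (t, r) = 0 := by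
    obtain ⟨R, hR⟩ := hϕc.isBounded.subset_closedBall (0 : ℝ × ℝ)
    refine ⟨max t0 R, le_max_left _ _, fun t r ht => ?_⟩
    have hout : (t, r) ∉ tsupport ϕ := fun hin => by
      have h1 := hR hin
      rw [mem_closedBall_zero_iff] at h1
      have h2 : |t| ≤ R := (norm_fst_le (t, r)).trans h1
      have h3 := le_abs_self t
      have h4 := le_max_right t0 R
      linarith
    have h1 : fderiv ℝ ϕ (t, r) = 0 := by
      by_contra hne
      exact hout (support_fderiv_subset ℝ hne)
    simp [hϕt, hϕr, h1]
  have hWcont : ∀ t, t0 ≤ t → LipschitzOnWith L.toNNReal (W t) (Icc a b) := fun t ht => by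
    refine LipschitzOnWith.of_dist_le_mul fun r hr r' hr' => ?_
    have := hW t t r r' ht ht hr hr'
    rw [Real.dist_eq, Real.dist_eq, Real.coe_toNNReal _ hL]
    simpa using this
  have hFint : ∀ t, t0 ≤ t → ContinuousOn (fun r => W t r * ϕr (t, r)) (Icc a b) := fun t ht =>
    (hWcont t ht).continuousOn.mul (hsr.continuous.comp (Continuous.prodMk_right t)).continuousOn
  have hFmeas : ∀ t, t0 ≤ t →
      AEStronglyMeasurable (fun r => W t r * ϕr (t, r)) (volume.restrict (uIoc a b)) :=
    fun t ht => by
      rw [uIoc_of_le hab]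
      exact ((hFint t ht).mono Ioc_subset_Icc_self).aestronglyMeasurable measurableSet_Ioc
  -- a bound for `W` up to time `T'`
  have hWb : ∀ T' t r, t0 ≤ t → t ≤ T' → r ∈ Icc a b →
      |W t r| ≤ |W t0 a| + L * ((T' - t0) + (b - a)) := by
    intro T' t r ht htT hr
    have h1 := hW t t0 r a ht le_rfl hr haI
    have h2 : |W t r| ≤ |W t0 a| + |W t r - W t0 a| := by
      have := abs_add_le (W t0 a) (W t r - W t0 a)
      simpa using this
    rw [abs_of_nonneg (sub_nonneg.2 ht), abs_of_nonneg (sub_nonneg.2 hr.1)] at h1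
    have h3 : L * (t - t0 + (r - a)) ≤ L * ((T' - t0) + (b - a)) := by
      have := hr.2
      gcongr
    linarith
  set Φ : ℝ → ℝ := fun t => ∫ r in a..b, W t r * ϕr (t, r) with hΦ
  have hderiv : ∀ t, t0 < t → HasDerivAt Φ
      (-∫ r in a..b, (p t r * ϕt (t, r) - q t r * ϕr (t, r))) t := by
    intro t ht
    set D : ℝ → ℝ := fun r => q t r * ϕr (t, r) + W t r * fderiv ℝ ϕr (t, r) (1, 0) with hD
    set K := |W t0 a| + L * ((t + 1 - t0) + (b - a)) with hK
    have hK0 : 0 ≤ K := by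
      have : 0 ≤ L * ((t + 1 - t0) + (b - a)) := mul_nonneg hL (by linarith)
      have := abs_nonneg (W t0 a)
      linarith
    have hcrt : Continuous fun r => fderiv ℝ ϕr (t, r) (1, 0) := by
      have h1 : Continuous (fderiv ℝ ϕr) := hsr.continuous_fderiv (by simp)
      exact (h1.comp (Continuous.prodMk_right t)).clm_apply continuous_const
    have hcW := (hWcont t ht.le).continuousOn
    have hpar := intervalIntegral.hasDerivAt_integral_of_dominated_loc_of_lip (𝕜 := ℝ) (μ := volume)
      (a := a) (b := b)
      (F := fun t r => W t r * ϕr (t, r)) (F' := D) (x₀ := t) (s := Ioo t0 (t + 1))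
      (bound := fun _ => L * Kr + K * Lr)
      (Ioo_mem_nhds ht (by linarith))
      (by filter_upwards [Ioi_mem_nhds ht] with t' ht' using hFmeas t' (le_of_lt ht'))
      (by rw [← uIcc_of_le hab] at hFint; exact (hFint t ht.le).intervalIntegrable)
      (by
        rw [uIoc_of_le hab]
        have h1 := hcW.mono (Ioc_subset_Icc_self (a := a) (b := b))
        refine ((hq t ht).mul ?_).add (h1.aestronglyMeasurable measurableSet_Ioc |>.mul ?_)
        · exact (hsr.continuous.comp (Continuous.prodMk_right t)).aestronglyMeasurable
        · exact hcrt.aestronglyMeasurable)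
      (by
        refine Eventually.of_forall fun r hr => ?_
        rw [uIoc_of_le hab] at hr
        have hr' := Ioc_subset_Icc_self hr
        refine LipschitzOnWith.of_dist_le_mul fun x hx y hy => ?_
        have e1 := hW x y r r hx.1.le hy.1.le hr' hr'
        have e2 := hWb (t + 1) y r hy.1.le hy.2.le hr'
        have e3 := hKr (x, r)
        have e4 := hLr.dist_le_mul (x, r) (y, r)
        rw [Prod.dist_eq, dist_self, max_eq_left dist_nonneg, Real.dist_eq, Real.dist_eq] at e4
        rw [Real.norm_eq_abs] at e3
        simp only [sub_self, abs_zero, add_zero] at e1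
        have hnn : 0 ≤ L * Kr + K * Lr := by positivity
        rw [Real.dist_eq, Real.dist_eq, Real.coe_nnabs, abs_of_nonneg hnn]
        calc |W x r * ϕr (x, r) - W y r * ϕr (y, r)|
            = |(W x r - W y r) * ϕr (x, r) + W y r * (ϕr (x, r) - ϕr (y, r))| := by ring_nf
          _ ≤ |W x r - W y r| * |ϕr (x, r)| + |W y r| * |ϕr (x, r) - ϕr (y, r)| := by
            rw [← abs_mul, ← abs_mul]; exact abs_add_le _ _
          _ ≤ (L * |x - y|) * Kr + K * (Lr * |x - y|) := by gcongr
          _ = (L * Kr + K * Lr) * |x - y| := by ring)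
      (by simp)
      (by
        filter_upwards [hd t ht] with r hr hrI
        rw [uIoc_of_le hab] at hrI
        exact (hr (Ioc_subset_Icc_self hrI)).2.mul
          (deriv_fst (hsr.differentiable (by simp)) t r))
    have hibp := integral_mul_deriv_of_lipschitz hab (hWcont t ht.le)
      ((hd t ht).mono fun r hr h => (hr h).1) (g := fun r => ϕt (t, r))
      ((hst.comp (contDiff_prodMk_right t)).of_le (by simp))
      (by rw [← hdt]; simp [hϕa]) (by rw [← hdt]; simp [hϕb])
    have hmix : ∀ r, deriv (fun r => ϕt (t, r)) r = fderiv ℝ ϕr (t, r) (1, 0) := fun r => by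
      rw [hmixed]; exact (deriv_snd (hst.differentiable (by simp)) t r).deriv
    simp only [hmix] at hibp
    refine hpar.2.congr_deriv ?_
    have hi2 : IntervalIntegrable (fun r => W t r * fderiv ℝ ϕr (t, r) (1, 0)) volume a b := by
      refine ContinuousOn.intervalIntegrable ?_
      rw [uIcc_of_le hab]
      exact hcW.mul hcrt.continuousOn
    have hi1 : IntervalIntegrable (fun r => q t r * ϕr (t, r)) volume a b := by
      have := hpar.1.sub hi2
      refine this.congr ?_
      intro r _
      simp [hD]
    have hi3 : IntervalIntegrable (fun r => p t r * ϕt (t, r)) volume a b := by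
      have hbd : AEStronglyMeasurable (fun r => deriv (W t) r * ϕt (t, r))
          (volume.restrict (uIoc a b)) :=
        (measurable_deriv (W t)).aestronglyMeasurable.mul
          (hst.continuous.comp (Continuous.prodMk_right t)).aestronglyMeasurable
      have hae : (fun r => deriv (W t) r * ϕt (t, r)) =ᵐ[volume.restrict (uIoc a b)]
          fun r => p t r * ϕt (t, r) := by
        rw [uIoc_of_le hab, EventuallyEq, ae_restrict_iff' measurableSet_Ioc]
        filter_upwards [hd t ht] with r hr hrI
        rw [(hr (Ioc_subset_Icc_self hrI)).1.deriv]
      refine IntervalIntegrable.mono_fun' (g := fun _ => C * Kt) (by simp) (hbd.congr hae) ?_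
      rw [uIoc_of_le hab]
      refine (ae_restrict_mem measurableSet_Ioc).mono fun r hr => ?_
      simp only [norm_mul]
      have h1 := (hC t r ht (Ioc_subset_Icc_self hr)).1
      have h2 := hKt (t, r)
      exact mul_le_mul h1 h2 (norm_nonneg _) ((abs_nonneg _).trans h1)
    rw [hD, intervalIntegral.integral_add hi1 hi2, hibp, intervalIntegral.integral_sub hi3 hi1]
    ring
  have hcont : ContinuousWithinAt Φ (Ici t0) t0 := by
    refine intervalIntegral.continuousWithinAt_of_dominated_interval
      (bound := fun _ => (|W t0 a| + L * ((t0 + 1 - t0) + (b - a))) * Kr) ?_ ?_ (by simp) ?_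
    · filter_upwards [self_mem_nhdsWithin] with t ht using hFmeas t ht
    · filter_upwards [self_mem_nhdsWithin, nhdsWithin_le_nhds (Iic_mem_nhds (lt_add_one t0))]
        with t ht ht'
      refine Eventually.of_forall fun r hr => ?_
      rw [uIoc_of_le hab] at hr
      rw [norm_mul]
      have h1 := hWb (t0 + 1) t r ht ht' (Ioc_subset_Icc_self hr)
      exact mul_le_mul h1 (hKr _) (norm_nonneg _) ((abs_nonneg _).trans h1)
    · refine Eventually.of_forall fun r hr => ?_
      rw [uIoc_of_le hab] at hr
      have hr' := Ioc_subset_Icc_self hr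
      refine ContinuousWithinAt.mul ?_
        (hsr.continuous.comp (Continuous.prodMk_left r)).continuousWithinAt
      have hlip : LipschitzOnWith L.toNNReal (fun t => W t r) (Ici t0) :=
        LipschitzOnWith.of_dist_le_mul fun t ht t' ht' => by
          have := hW t t' r r ht ht' hr' hr'
          rw [Real.dist_eq, Real.dist_eq, Real.coe_toNNReal _ hL]
          simpa using this
      exact hlip.continuousOn t0 self_mem_Ici
  have hlim : Tendsto Φ atTop (𝓝 0) := by
    refine tendsto_const_nhds.congr' ?_
    filter_upwards [eventually_gt_atTop T] with t ht
    simp [hΦ, (hT t _ ht).2]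
  have hint : IntegrableOn
      (fun t => -∫ r in a..b, (p t r * ϕt (t, r) - q t r * ϕr (t, r))) (Ioi t0) := by
    have hae : AEStronglyMeasurable
        (fun t => -∫ r in a..b, (p t r * ϕt (t, r) - q t r * ϕr (t, r)))
        (volume.restrict (Ioi t0)) := by
      refine (measurable_deriv Φ).aestronglyMeasurable.congr ?_
      refine (ae_restrict_mem measurableSet_Ioi).mono fun t ht => ?_
      exact (hderiv t ht).deriv
    have h1 : IntegrableOn
        (fun t => -∫ r in a..b, (p t r * ϕt (t, r) - q t r * ϕr (t, r))) (Ioc t0 T) := by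
      refine IntegrableOn.of_bound (C := (C * Kt + C * Kr) * |b - a|) (by simp)
        (hae.mono_measure (Measure.restrict_mono Ioc_subset_Ioi_self le_rfl)) ?_
      refine (ae_restrict_mem measurableSet_Ioc).mono fun t ht => ?_
      rw [norm_neg]
      refine intervalIntegral.norm_integral_le_of_norm_le_const fun r hr => ?_
      rw [uIoc_of_le hab] at hr
      have h2 := hC t r ht.1 (Ioc_subset_Icc_self hr)
      refine (norm_sub_le _ _).trans (add_le_add ?_ ?_)
      · rw [norm_mul]
        exact mul_le_mul h2.1 (hKt _) (norm_nonneg _) ((abs_nonneg _).trans h2.1)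
      · rw [norm_mul]
        exact mul_le_mul h2.2 (hKr _) (norm_nonneg _) ((abs_nonneg _).trans h2.1)
    have h2 : IntegrableOn
        (fun t => -∫ r in a..b, (p t r * ϕt (t, r) - q t r * ϕr (t, r))) (Ioi T) := by
      refine (integrableOn_zero (s := Ioi T)).congr_fun (fun t ht => ?_) measurableSet_Ioi
      simp [(hT t _ ht).2, (hT t _ ht).1]
    rw [← Ioc_union_Ioi_eq_Ioi hT0]
    exact h1.union h2
  have hfin := integral_Ioi_of_hasDerivAt_of_tendsto hcont hderiv hint hlim
  rw [integral_neg] at hfin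
  have hinit := integral_mul_deriv_of_lipschitz hab (hWcont t0 le_rfl) hd0
      (g := fun r => ϕ (t0, r)) ((hϕ.comp (contDiff_prodMk_right t0)).of_le (by simp))
      (hϕa t0) (hϕb t0)
  simp only [hdt, hdr] at hinit ⊢
  have : Φ t0 = -∫ r in a..b, p0 r * ϕ (t0, r) := hinit
  linarith

end Weak

/-! ### Localisation of the test function, and the solution -/

section Assembly

/-- The support of `ϕ` lies in a strip `a < r < b` at positive distance from the horizon. -/
lemma exists_strip {M : ℝ} (hM : 0 < M) {ϕ : ℝ × ℝ → ℝ} (hϕc : HasCompactSupport ϕ)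
    (hϕs : tsupport ϕ ⊆ univ ×ˢ Ioi (2 * M)) :
    ∃ a b, 2 * M < a ∧ a ≤ b ∧ ∀ t r, r ∉ Ioo a b → (t, r) ∉ tsupport ϕ := by
  have hcK : IsCompact (insert (3 * M) (Prod.snd '' tsupport ϕ)) :=
    (hϕc.isCompact.image continuous_snd).insert _
  have hsub : insert (3 * M) (Prod.snd '' tsupport ϕ) ⊆ Ioi (2 * M) := by
    rintro x (rfl | ⟨z, hz, rfl⟩)
    · simp only [mem_Ioi]; linarith
    · exact (hϕs hz).2
  obtain ⟨a, haK, ha⟩ := hcK.exists_isLeast ⟨_, mem_insert _ _⟩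
  obtain ⟨b, hbK, hb⟩ := hcK.exists_isGreatest ⟨_, mem_insert _ _⟩
  have h1 : 2 * M < a := hsub haK
  have h2 : a ≤ b := ha hbK
  refine ⟨(2 * M + a) / 2, b + 1, by linarith, by linarith, fun t r hr hin => hr ?_⟩
  have hm : r ∈ insert (3 * M) (Prod.snd '' tsupport ϕ) := Or.inr ⟨(t, r), hin, rfl⟩
  exact ⟨by linarith [ha hm], by linarith [hb hm]⟩

lemma ae_hasDerivAt_pot {M : ℝ} {u0 : ℝ → ℝ} (hM : 0 < M) (hm : Measurable u0)
    (hu : ∀ r, u0 r ∈ Ioo (-1 : ℝ) 1) {a b : ℝ} (ha : 2 * M < a) :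
    ∀ᵐ r, r ∈ Icc a b → HasDerivAt (pot M u0) (((lapse M r) ^ 2)⁻¹ * u0 r) r := by
  have hmin : 2 * M < min a (3 * M) := lt_min ha (by linarith)
  have hle : min a (3 * M) ≤ max b (3 * M) := (min_le_right _ _).trans (le_max_right _ _)
  have h := (intervalIntegrable_pot hM hm hu hmin (hmin.trans_le hle)).ae_hasDerivAt_integral
  rw [uIcc_of_le hle] at h
  filter_upwards [h] with r hr hrI
  exact hr ⟨(min_le_left _ _).trans hrI.1, hrI.2.trans (le_max_left _ _)⟩ (3 * M)
    ⟨min_le_right _ _, le_max_right _ _⟩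

lemma abs_prim_zero_sub_le {M a b C : ℝ} (hM : 0 < M) (ha : 2 * M < a)
    (hC : ∀ r ∈ Icc a b, ‖slope M 0 r‖ ≤ C) {r r' : ℝ} (hr : r ∈ Icc a b) (hr' : r' ∈ Icc a b) :
    |prim M 0 r - prim M 0 r'| ≤ C * |r - r'| :=
  (convex_Icc a b).norm_image_sub_le_of_norm_hasDerivWithin_le
    (fun _ hx => (hasDerivAt_prim hM 0 (lt_of_lt_of_le ha hx.1)).hasDerivWithinAt)
    hC hr' hr

/-- The two fluxes `f⁻² u` and `(1 - u²) / (2f) - 1/2` are bounded on `[a, b]`. -/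
lemma flux_bounds {M r u C : ℝ} (hM : 0 < M) (hr : 2 * M < r) (hu : u ∈ Ioo (-1 : ℝ) 1)
    (hC : ‖slope M 0 r‖ ≤ C) :
    |((lapse M r) ^ 2)⁻¹ * u| ≤ C + 1 ∧ |(1 - u ^ 2) / (2 * lapse M r) - 1 / 2| ≤ C + 1 := by
  have hf := lapse_pos hM hr
  have hf1 := lapse_lt_one hM hr
  rw [slope_zero, Real.norm_of_nonneg (by positivity)] at hC
  have hpos : 0 < ((lapse M r) ^ 2)⁻¹ := by positivity
  have hu1 : |u| ≤ 1 := abs_le.2 ⟨hu.1.le, hu.2.le⟩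
  constructor
  · rw [abs_mul, abs_of_pos hpos]
    nlinarith [abs_nonneg u]
  · have hinv : (lapse M r)⁻¹ ≤ ((lapse M r) ^ 2)⁻¹ := by
      apply inv_anti₀ (by positivity)
      nlinarith
    have hipos : 0 < (lapse M r)⁻¹ := by positivity
    have husq : u ^ 2 ≤ 1 := by nlinarith [hu.1, hu.2]
    have he : (1 - u ^ 2) / (2 * lapse M r) = (1 - u ^ 2) * (lapse M r)⁻¹ / 2 := by
      field_simp
    rw [he, abs_le]
    constructor <;> nlinarith [sq_nonneg u, mul_nonneg (sub_nonneg.2 husq) hipos.le,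
      mul_nonneg (sq_nonneg u) hipos.le]

end Assembly

/-- Existence of a weak solution; `f⁻² u₀` is locally integrable because `|u₀| < 1`. -/
theorem exists_weak_solution
    (M : ℝ) (hM : 0 < M) (t0 : ℝ)
    (u0 : ℝ → ℝ) (hu0meas : Measurable u0) (hu0range : ∀ r, u0 r ∈ Set.Ioo (-1 : ℝ) 1) :
    ∃ u : ℝ → ℝ → ℝ,
      (∀ t r, u t r ∈ Set.Ioo (-1 : ℝ) 1) ∧
      (∀ t > t0, LocallyBoundedVariationOn (u t) (Set.Ioi (2 * M))) ∧
      (∀ ϕ : ℝ × ℝ → ℝ, ContDiff ℝ (⊤ : ℕ∞) ϕ → HasCompactSupport ϕ →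
        tsupport ϕ ⊆ Set.univ ×ˢ Set.Ioi (2 * M) →
        (∫ t in Set.Ioi t0, ∫ r in Set.Ioi (2 * M),
            (((1 - 2 * M / r) ^ 2)⁻¹ * u t r * deriv (fun s => ϕ (s, r)) t
              + ((1 / 2) * (1 - 2 * M / r)⁻¹ * ((u t r) ^ 2 - 1) + 1 / 2)
                * deriv (fun x => ϕ (t, x)) r))
          + (∫ r in Set.Ioi (2 * M), ((1 - 2 * M / r) ^ 2)⁻¹ * u0 r * ϕ (t0, r)) = 0) := by
  obtain ⟨U, v, hL, h0, hv, hbv, hd⟩ := exists_potential_velocity hM hu0meas hu0range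
  refine ⟨fun t r => v (t - t0) r, fun t r => hv _ _, fun t ht => hbv _ (sub_pos.2 ht),
    fun ϕ hϕ hϕc hϕs => ?_⟩
  obtain ⟨a, b, ha, hab, hout⟩ := exists_strip hM hϕc hϕs
  have hM' : ∀ r ∈ Icc a b, 2 * M < r := fun r hr => lt_of_lt_of_le ha hr.1
  obtain ⟨C, hC⟩ := isCompact_Icc.exists_bound_of_continuousOn
    ((continuousOn_slope hM 0).mono fun r (hr : r ∈ Icc a b) => hM' r hr)
  have hC0 : 0 ≤ C := (norm_nonneg _).trans (hC a (left_mem_Icc.2 hab))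
  set W : ℝ → ℝ → ℝ := fun t r => U (t - t0) r - (t - t0) / 2 with hW
  have hdW : ∀ t, t0 < t → ∀ᵐ r, r ∈ Icc a b →
      HasDerivAt (W t) (((lapse M r) ^ 2)⁻¹ * v (t - t0) r) r ∧
      HasDerivAt (fun s => W s r)
        ((1 - (v (t - t0) r) ^ 2) / (2 * lapse M r) - 1 / 2) t := by
    intro t ht
    obtain ⟨B, hB, hBd⟩ := hd (t - t0) a b (sub_pos.2 ht) ha
    filter_upwards [hB.countable.ae_notMem volume] with r hrB hrI
    obtain ⟨h1, h2, -⟩ := hBd r hrI hrB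
    refine ⟨h1.sub_const _, ?_⟩
    exact (h2.comp_sub_const t t0).sub (((hasDerivAt_id t).sub_const t0).div_const 2)
  have hmain := weak_of_potential (W := W)
    (p := fun t r => ((lapse M r) ^ 2)⁻¹ * v (t - t0) r)
    (q := fun t r => (1 - (v (t - t0) r) ^ 2) / (2 * lapse M r) - 1 / 2)
    (p0 := fun r => ((lapse M r) ^ 2)⁻¹ * u0 r) (t0 := t0) (L := C + 2) (C := C + 1) hab
    (by linarith) ?_ hdW ?_ ?_
    (fun t r _ hr => flux_bounds hM (hM' r hr) (hv _ _) (hC r hr)) hϕ hϕc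
    (fun t => image_eq_zero_of_notMem_tsupport (hout t a (by simp)))
    (fun t => image_eq_zero_of_notMem_tsupport (hout t b (by simp)))
  · -- off `(a, b)` both `ϕ` and its derivatives vanish
    have hIoc : Ioc a b ⊆ Ioi (2 * M) := fun r hr => hM' r (Ioc_subset_Icc_self hr)
    have hoff : ∀ r, r ∈ Ioi (2 * M) \ Ioc a b → r ∉ Ioo a b := fun r hr h =>
      hr.2 (Ioo_subset_Ioc_self h)
    have hz : ∀ t r, r ∉ Ioo a b → ϕ (t, r) = 0 := fun t r hr =>
      image_eq_zero_of_notMem_tsupport (hout t r hr)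
    have hinner : ∀ t, (∫ r in Set.Ioi (2 * M),
            (((1 - 2 * M / r) ^ 2)⁻¹ * v (t - t0) r * deriv (fun s => ϕ (s, r)) t
              + ((1 / 2) * (1 - 2 * M / r)⁻¹ * ((v (t - t0) r) ^ 2 - 1) + 1 / 2)
                * deriv (fun x => ϕ (t, x)) r)) =
        ∫ r in a..b, (((lapse M r) ^ 2)⁻¹ * v (t - t0) r * deriv (fun s => ϕ (s, r)) t
          - ((1 - (v (t - t0) r) ^ 2) / (2 * lapse M r) - 1 / 2)
            * deriv (fun x => ϕ (t, x)) r) := by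
      intro t
      rw [intervalIntegral.integral_of_le hab,
        setIntegral_eq_of_subset_of_forall_sdiff_eq_zero measurableSet_Ioi hIoc]
      · refine setIntegral_congr_fun measurableSet_Ioc fun r _ => ?_
        have hl : 1 - 2 * M / r = lapse M r := rfl
        simp only [hl]
        generalize lapse M r = f
        ring
      · intro r hr
        have h1 : deriv (fun s => ϕ (s, r)) t = 0 := by
          simp [hz _ r (hoff r hr)]
        have h2 : deriv (fun x => ϕ (t, x)) r = 0 := by
          have hev := notMem_tsupport_iff_eventuallyEq.1 (hout t r (hoff r hr))
          have hc : Tendsto (fun x : ℝ => (t, x)) (𝓝 r) (𝓝 (t, r)) :=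
            (Continuous.prodMk_right t).tendsto r
          have h3 : (fun x => ϕ (t, x)) =ᶠ[𝓝 r] fun _ => 0 := hc.eventually hev
          rw [h3.deriv_eq]; simp
        rw [h1, h2]; ring
    have hinit : (∫ r in Set.Ioi (2 * M), ((1 - 2 * M / r) ^ 2)⁻¹ * u0 r * ϕ (t0, r)) =
        ∫ r in a..b, ((lapse M r) ^ 2)⁻¹ * u0 r * ϕ (t0, r) := by
      rw [intervalIntegral.integral_of_le hab,
        setIntegral_eq_of_subset_of_forall_sdiff_eq_zero measurableSet_Ioi hIoc]
      · rfl
      · intro r hr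
        rw [hz _ r (hoff r hr), mul_zero]
    simp only [hinner, hinit]
    exact hmain
  · intro t t' r r' ht ht' hr hr'
    have h1 := hL (t - t0) (t' - t0) r r' (sub_nonneg.2 ht) (sub_nonneg.2 ht') (hM' r hr)
      (hM' r' hr')
    have h2 := abs_prim_zero_sub_le hM ha hC hr hr'
    have e1 : t - t0 - (t' - t0) = t - t' := by ring
    rw [e1] at h1
    have e2 : W t r - W t' r' = (U (t - t0) r - U (t' - t0) r') - (t - t') / 2 := by
      simp only [hW]; ring
    have h3 := abs_sub (U (t - t0) r - U (t' - t0) r') ((t - t') / 2)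
    rw [abs_div, abs_two] at h3
    rw [e2]
    nlinarith [abs_nonneg (t - t'), abs_nonneg (r - r'), mul_nonneg hC0 (abs_nonneg (t - t'))]
  · filter_upwards [ae_hasDerivAt_pot hM hu0meas hu0range ha] with r hr hrI
    refine (hr hrI).congr_of_eventuallyEq ?_
    filter_upwards [Ioi_mem_nhds (hM' r hrI)] with r' hr'
    simp [hW, h0 r' hr']
  · intro t ht
    have hcl : AEStronglyMeasurable (lapse M) (volume.restrict (Ioc a b)) :=
      ((continuousOn_lapse hM).mono fun r hr =>
        hM' r (Ioc_subset_Icc_self hr)).aestronglyMeasurable measurableSet_Ioc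
    have hvm : AEMeasurable (v (t - t0)) (volume.restrict (Ioc a b)) := by
      refine (((hcl.aemeasurable.pow_const 2).mul
        (measurable_deriv (W t)).aemeasurable)).congr ?_
      rw [EventuallyEq, ae_restrict_iff' measurableSet_Ioc]
      filter_upwards [hdW t ht] with r hr hrI
      have hrI' := Ioc_subset_Icc_self hrI
      have hf := (lapse_pos hM (hM' r hrI')).ne'
      simp only [Pi.mul_apply]
      rw [(hr hrI').1.deriv, mul_inv_cancel_left₀ (pow_ne_zero 2 hf)]
    exact (((aemeasurable_const.sub (hvm.pow_const 2)).div
      (aemeasurable_const.mul hcl.aemeasurable)).sub aemeasurable_const).aestronglyMeasurable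

end BurgersSchwarzschild

/-- (Existence theory for the Burgers–Schwarzschild equation in the outer
domain of communication.) Fix `M > 0` and `t0 ∈ ℝ`. For any measurable initial datum
`u0 : (2M, ∞) → (-1, 1)` such that `r ↦ (1 - 2M/r)⁻² u0(r)` is locally integrable on
`(2M, ∞)`, there exists a function `u` with values in `(-1, 1)` that has locally bounded
variation in `r` for every `t > t0` and is a weak solution of the Burgers–Schwarzschild
equation in conservation form with initial datum `u0`, with no boundary condition at the
horizon `r = 2M`. -/
theorem burgersSchwarzschild_existence_outer_domain
    (M : ℝ) (hM : 0 < M) (t0 : ℝ)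
    (u0 : ℝ → ℝ) (hu0meas : Measurable u0) (hu0range : ∀ r, u0 r ∈ Set.Ioo (-1 : ℝ) 1)
    (hu0loc : LocallyIntegrableOn (fun r => ((1 - 2 * M / r) ^ 2)⁻¹ * u0 r)
      (Set.Ioi (2 * M))) :
    ∃ u : ℝ → ℝ → ℝ,
      (∀ t r, u t r ∈ Set.Ioo (-1 : ℝ) 1) ∧
      (∀ t > t0, LocallyBoundedVariationOn (u t) (Set.Ioi (2 * M))) ∧
      (∀ ϕ : ℝ × ℝ → ℝ, ContDiff ℝ (⊤ : ℕ∞) ϕ → HasCompactSupport ϕ →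
        tsupport ϕ ⊆ Set.univ ×ˢ Set.Ioi (2 * M) →
        (∫ t in Set.Ioi t0, ∫ r in Set.Ioi (2 * M),
            (((1 - 2 * M / r) ^ 2)⁻¹ * u t r * deriv (fun s => ϕ (s, r)) t
              + ((1 / 2) * (1 - 2 * M / r)⁻¹ * ((u t r) ^ 2 - 1) + 1 / 2)
                * deriv (fun x => ϕ (t, x)) r))
          + (∫ r in Set.Ioi (2 * M), ((1 - 2 * M / r) ^ 2)⁻¹ * u0 r * ϕ (t0, r)) = 0) := by
  exact BurgersSchwarzschild.exists_weak_solution M hM t0 u0 hu0meas hu0range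
end

section
/- Let g : ℝ → [0, ∞) be locally integrable, q > 0, ε ∈ (0, q), and x > 0. Set t_q = −x/q, and for s < 0 define F(s) = x²/(2(−s)) + (1/2)∫_s^0 g(r) dr. Let t_* < 0 satisfy F(t_*) ≤ F(t_q). (a) If x/(−t_*) ≥ q + ε, then t_* − t_q ≥ x·ε/((q+ε)·q) and (1/(t_* − t_q))·∫_{t_q}^{t_*} g(r) dr − q² ≥ q·ε. (b) If x/(−t_*) ≤ q − ε, then t_q − t_* ≥ x·ε/((q−ε)·q) and (1/(t_q − t_*))·∫_{t_*}^{t_q} g(r) dr − q² ≤ −q·ε. -/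
/-!
Put `v = x / (-t_*)`, so that `t_* = -x/v`, while `t_q = -x/q`. Then `F(t_*) ≤ F(t_q)` says exactly
`x (v - q) ≤ ∫_{t_q}^{t_*} g`, and `t_* - t_q = x (v - q) / (v q)`. Dividing by this length, whose
sign is that of `v - q`, the average of `g` between `t_q` and `t_*` is at least `q v` if `v > q`,
and at most `q v` if `v < q`. The bounds `v ≥ q + ε` and `v ≤ q - ε` then give both parts.
-/

open Set MeasureTheory

/-- (Deterministic deviation estimates for the boundary variational
problem of the Burgers equation.) Let `g ≥ 0` be locally integrable, `q > 0`,
`ε ∈ (0, q)`, `x > 0`, `t_q = -x/q`, `F(s) = x²/(2(-s)) + (1/2)∫_s^0 g`, and let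
`t_* < 0` satisfy `F(t_*) ≤ F(t_q)`. Then:
(a) if `x/(-t_*) ≥ q + ε` then `t_* - t_q ≥ xε/((q+ε)q)` and
`(1/(t_* - t_q))∫_{t_q}^{t_*} g - q² ≥ qε`;
(b) if `x/(-t_*) ≤ q - ε` then `t_q - t_* ≥ xε/((q-ε)q)` and
`(1/(t_q - t_*))∫_{t_*}^{t_q} g - q² ≤ -qε`. -/
theorem burgers_boundary_deviation_estimates
    (g : ℝ → ℝ) (hg : ∀ r, 0 ≤ g r) (hloc : LocallyIntegrable g)
    (q ε x : ℝ) (hq : 0 < q) (hε : ε ∈ Set.Ioo 0 q) (hx : 0 < x)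
    (tq tstar : ℝ) (htq : tq = -x / q) (htstar : tstar < 0)
    (hF : x ^ 2 / (2 * (-tstar)) + (1 / 2) * ∫ r in tstar..0, g r
        ≤ x ^ 2 / (2 * (-tq)) + (1 / 2) * ∫ r in tq..0, g r) :
    (x / (-tstar) ≥ q + ε →
      tstar - tq ≥ x * ε / ((q + ε) * q) ∧
      (1 / (tstar - tq)) * (∫ r in tq..tstar, g r) - q ^ 2 ≥ q * ε) ∧
    (x / (-tstar) ≤ q - ε →
      tq - tstar ≥ x * ε / ((q - ε) * q) ∧
      (1 / (tq - tstar)) * (∫ r in tstar..tq, g r) - q ^ 2 ≤ -(q * ε)) := by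
  obtain ⟨hε0, hεq⟩ := hε
  have hii : ∀ a b : ℝ, IntervalIntegrable g volume a b := fun a b =>
    (hloc.integrableOn_isCompact isCompact_uIcc).intervalIntegrable
  have hadd := intervalIntegral.integral_add_adjacent_intervals (hii tq tstar) (hii tstar 0)
  have hsymm : ∫ r in tstar..tq, g r = -∫ r in tq..tstar, g r :=
    intervalIntegral.integral_symm _ _
  obtain ⟨v, hv⟩ : ∃ v, v = x / (-tstar) := ⟨_, rfl⟩
  have hv0 : 0 < v := by rw [hv]; exact div_pos hx (by linarith)
  have hts : tstar = -(x / v) := by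
    have : tstar ≠ 0 := htstar.ne
    rw [hv]; field_simp
  have e1 : x ^ 2 / (2 * (-tstar)) = x * v / 2 := by rw [hts]; field_simp
  have e2 : x ^ 2 / (2 * (-tq)) = x * q / 2 := by rw [htq]; field_simp
  have hlen : tstar - tq = x * (v - q) / (v * q) := by rw [hts, htq]; field_simp; ring
  rw [e1, e2, ← hadd] at hF
  have hA : x * (v - q) ≤ ∫ r in tq..tstar, g r := by linarith
  rw [← hv, hsymm]
  generalize (∫ r in tq..tstar, g r) = A at hA
  constructor
  · intro h
    have hvq : 0 < v - q := by linarith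
    have hpos : 0 < tstar - tq := by rw [hlen]; positivity
    constructor
    · rw [hlen, ge_iff_le, div_le_div_iff₀ (by positivity) (by positivity)]
      have : 0 ≤ x * q ^ 2 * (v - (q + ε)) := mul_nonneg (by positivity) (by linarith)
      nlinarith
    · have hmean : q * v ≤ 1 / (tstar - tq) * A := by
        rw [one_div, inv_mul_eq_div, le_div_iff₀ hpos, hlen]
        refine le_trans (le_of_eq ?_) hA
        field_simp
      nlinarith
  · intro h
    have hvq : 0 < q - v := by linarith
    have hqε : 0 < q - ε := by linarith
    have hlen' : tq - tstar = x * (q - v) / (v * q) := by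
      rw [← neg_sub tstar tq, hlen]; ring
    have hpos : 0 < tq - tstar := by rw [hlen']; positivity
    constructor
    · rw [hlen', ge_iff_le, div_le_div_iff₀ (by positivity) (by positivity)]
      have : 0 ≤ x * q ^ 2 * (q - ε - v) := mul_nonneg (by positivity) (by linarith)
      nlinarith
    · have hmean : 1 / (tq - tstar) * -A ≤ q * v := by
        rw [one_div, inv_mul_eq_div, div_le_iff₀ hpos, hlen']
        refine le_trans (b := x * (q - v)) (by linarith) (le_of_eq ?_)
        field_simp
      nlinarith
end
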